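/- arXiv:1307.5408 — 2 statements merged into one kernel-verified Lean document; each statement's English description precedes it below -/
import Mathlib

section
/- Let ν be a divisible subgroup of the group of roots of unity in the algebraic closure of ℚ, and let L be the first-order language of rings augmented by one unary relation symbol U. Let 𝒦 be the class of L-structures (K, +, −, ·, 0, 1, U) such that: (i) (K, +, −, ·, 0, 1) is an algebraically closed field of characteristic 0; (ii) U is a divisible subgroup of the multiplicative group Kˣ; (iii) the torsion subgroup of U is isomorphic (as an abstract group) to ν; (iv) for every n ≥ 1 and every tuple y ∈ Uⁿ one has 2·trdeg(ℚ(y)/ℚ) − ldim(y) ≥ 0. Then 𝒦 is an elementary class: there exists a set T of L-sentences such that an L-structure belongs to 𝒦 if and only if it is a model of T. -/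
namespace BadFields

variable (K : Type) [Field K]

/-- The divisible hull `⟨A⟩` of a subset `A ⊆ Kˣ`: all `x` with `x ^ k` in the subgroup
generated by `A` for some `k ≥ 1`.  Note that `⟨∅⟩` is exactly the group of roots of unity. -/
def divHull (A : Set Kˣ) : Subgroup Kˣ where
  carrier := {x | ∃ k : ℕ, k ≠ 0 ∧ x ^ k ∈ Subgroup.closure A}
  one_mem' := ⟨1, one_ne_zero, by simpa using Subgroup.one_mem _⟩
  mul_mem' := by
    rintro x y ⟨k, hk, hx⟩ ⟨l, hl, hy⟩
    refine ⟨k * l, mul_ne_zero hk hl, ?_⟩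
    rw [mul_pow]
    exact Subgroup.mul_mem _ (by rw [pow_mul]; exact Subgroup.pow_mem _ hx l)
      (by rw [mul_comm k l, pow_mul]; exact Subgroup.pow_mem _ hy k)
  inv_mem' := by
    rintro x ⟨k, hk, hx⟩
    exact ⟨k, hk, by rw [inv_pow]; exact Subgroup.inv_mem _ hx⟩

/-- A subgroup `U` of `Kˣ` is divisible if every element has `k`-th roots in `U` for all
`k ≥ 1`. -/
def DivisibleSub (U : Subgroup Kˣ) : Prop :=
  ∀ u ∈ U, ∀ k : ℕ, k ≠ 0 → ∃ v ∈ U, v ^ k = u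

/-- The lattice of multiplicative relations of the tuple `y` modulo the divisible hull of `A`.
Since `Kˣ/⟨A⟩` is torsion-free, this lattice is saturated, and the dimension of the
`ℚ`-subspace of `Kˣ/Tor` spanned by (the images of) `y` over (the image of) `A` equals
`n` minus the rank of this lattice. -/
def relLattice (A : Set Kˣ) {n : ℕ} (y : Fin n → Kˣ) : Submodule ℤ (Fin n → ℤ) where
  carrier := {c | (∏ i, y i ^ c i) ∈ divHull K A}
  zero_mem' := by simpa using Subgroup.one_mem _
  add_mem' := by
    intro c d hc hd
    have h : (∏ i, y i ^ (c + d) i) = (∏ i, y i ^ c i) * ∏ i, y i ^ d i := by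
      rw [← Finset.prod_mul_distrib]
      exact Finset.prod_congr rfl fun i _ => by rw [Pi.add_apply, zpow_add]
    show (∏ i, y i ^ (c + d) i) ∈ divHull K A
    rw [h]
    exact Subgroup.mul_mem _ hc hd
  smul_mem' := by
    intro m c hc
    have h : (∏ i, y i ^ (m • c) i) = (∏ i, y i ^ c i) ^ m := by
      rw [← Finset.prod_zpow]
      exact Finset.prod_congr rfl fun i _ => by
        rw [Pi.smul_apply, smul_eq_mul, mul_comm, zpow_mul]
    show (∏ i, y i ^ (m • c) i) ∈ divHull K A
    rw [h]
    exact Subgroup.zpow_mem _ hc m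

/-- `ldimRel K A y` is the linear dimension `ldim(y/A)`: the dimension of the `ℚ`-subspace
spanned by the images of the coordinates of `y` in `Kˣ/Tor` over the subspace spanned by the
image of `A`. -/
noncomputable def ldimRel (A : Set Kˣ) {n : ℕ} (y : Fin n → Kˣ) : ℕ :=
  n - Module.finrank ℤ (relLattice K A y)

/-- The (absolute) linear dimension `ldim(y)`. -/
noncomputable def ldim {n : ℕ} (y : Fin n → Kˣ) : ℕ := ldimRel K ∅ y

/-- `trdegOver K F s` : the transcendence degree over the subfield `F` of the field generated
by `F` and the set `s`, i.e. the maximal cardinality of a finite subset of `s` which is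
algebraically independent over `F`. -/
noncomputable def trdegOver (F : Subfield K) (s : Set K) : ℕ :=
  sSup {d | ∃ t : Finset K, ↑t ⊆ s ∧ t.card = d ∧
    AlgebraicIndependent F (fun x : {y : K // y ∈ t} => (x : K))}

/-- Transcendence degree over the prime field; in characteristic zero this is
`trdeg(ℚ(s)/ℚ)`. -/
noncomputable def trdegQ (s : Set K) : ℕ := trdegOver K ⊥ s

section Var

variable {ι : Type} [Fintype ι]

/-- The subset of the torus `(Kˣ)^ι` cut out by a set of polynomials. -/
def zeroSet (S : Set (MvPolynomial ι K)) : Set (ι → Kˣ) :=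
  {x | ∀ p ∈ S, MvPolynomial.eval (fun i => (x i : K)) p = 0}

/-- Zariski closed subsets of the torus `(Kˣ)^ι` (closed subvarieties). -/
def IsZClosed (V : Set (ι → Kˣ)) : Prop := ∃ S, V = zeroSet K S

/-- Zariski closed subsets of `(Kˣ)^ι` defined by polynomials all of whose coefficients lie
in `E`; for `E = ↑(⊥ : Subfield K)` (the prime field, i.e. `ℚ` in characteristic `0`) this
means defined over `ℚ`. -/
def IsClosedOver (E : Set K) (V : Set (ι → Kˣ)) : Prop :=
  ∃ S : Set (MvPolynomial ι K),
    (∀ p ∈ S, ∀ m, MvPolynomial.coeff m p ∈ E) ∧ V = zeroSet K S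

/-- Irreducible (nonempty) Zariski closed subsets of the torus `(Kˣ)^ι`. -/
def IsIrredVar (V : Set (ι → Kˣ)) : Prop :=
  IsZClosed K V ∧ V.Nonempty ∧
    ∀ C₁ C₂ : Set (ι → Kˣ), IsZClosed K C₁ → IsZClosed K C₂ →
      V ⊆ C₁ ∪ C₂ → V ⊆ C₁ ∨ V ⊆ C₂

/-- The Zariski closure in `(Kˣ)^ι`. -/
def zcl (S : Set (ι → Kˣ)) : Set (ι → Kˣ) := ⋂₀ {C | IsZClosed K C ∧ S ⊆ C}

/-- The locus of a point `b` over the set of constants `E`: the smallest Zariski closed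
set containing `b` defined by polynomials with coefficients in `E`. -/
def locusOver (E : Set K) (b : ι → Kˣ) : Set (ι → Kˣ) :=
  ⋂₀ {C | IsClosedOver K E C ∧ b ∈ C}

/-- The dimension of a (not necessarily irreducible) Zariski closed subset of `(Kˣ)^ι`:
the supremum of the lengths of strict chains of irreducible closed subsets. -/
noncomputable def vdim (V : Set (ι → Kˣ)) : ℕ :=
  sSup {d | ∃ W : Fin (d + 1) → Set (ι → Kˣ),
    (∀ i, IsIrredVar K (W i) ∧ W i ⊆ V) ∧ StrictMono W}

/-- The monomial map `y ↦ y^M` attached to an integer matrix `M`. -/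
def mpow {k : ℕ} (M : Matrix (Fin k) ι ℤ) (y : ι → Kˣ) : Fin k → Kˣ :=
  fun j => ∏ i, y i ^ M j i

/-- Algebraic subgroups of the torus `(Kˣ)^ι`: subgroups defined by finitely many monomial
equations `y^M = 1`. -/
def IsAlgSubgroup (H : Set (ι → Kˣ)) : Prop :=
  ∃ (k : ℕ) (M : Matrix (Fin k) ι ℤ), H = {y | mpow K M y = 1}

/-- Subtori of `(Kˣ)^ι`: irreducible algebraic subgroups. -/
def IsSubtorus (T : Set (ι → Kˣ)) : Prop := IsAlgSubgroup K T ∧ IsIrredVar K T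

/-- The coset `c · T` (multiplication coordinatewise). -/
def coset (c : ι → Kˣ) (T : Set (ι → Kˣ)) : Set (ι → Kˣ) := (fun t => c * t) '' T

/-- A variety is free if it is not contained in a coset of a proper subtorus. -/
def IsFree (V : Set (ι → Kˣ)) : Prop :=
  ¬ ∃ T c, IsSubtorus K T ∧ T ≠ Set.univ ∧ V ⊆ coset K c T

/-- `T` is the minimal torus of `V`: the smallest subtorus such that `V` is contained in some
coset of it. -/
def IsMinTorus (V T : Set (ι → Kˣ)) : Prop :=
  IsSubtorus K T ∧ (∃ c, V ⊆ coset K c T) ∧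
    ∀ T', IsSubtorus K T' → (∃ c, V ⊆ coset K c T') → T ⊆ T'

/-- The codimension `cd(V) = dim(minimal torus of V) - dim V`. -/
noncomputable def cd (V : Set (ι → Kˣ)) : ℕ :=
  sInf {d | ∃ T c, IsSubtorus K T ∧ V ⊆ coset K c T ∧ d = vdim K T} - vdim K V

/-- `S` is cd-maximal in `W`. -/
def CdMaximal (S W : Set (ι → Kˣ)) : Prop :=
  IsIrredVar K S ∧ S ⊆ W ∧
    ∀ S', IsIrredVar K S' → S ⊂ S' → S' ⊆ W → cd K S < cd K S'

/-- `√[m]{V}`, the preimage of `V` under coordinatewise `m`-th powers. -/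
def mroot (m : ℕ) (V : Set (ι → Kˣ)) : Set (ι → Kˣ) := {a | (fun i => a i ^ m) ∈ V}

/-- An irreducible variety `V` is Kummer generic if `√[m]{V}` is irreducible for all `m ≥ 1`. -/
def KummerGeneric (V : Set (ι → Kˣ)) : Prop :=
  IsIrredVar K V ∧ ∀ m : ℕ, 1 ≤ m → IsIrredVar K (mroot K m V)

/-- Irreducible components of a set `S`: maximal irreducible closed subsets of `S`. -/
def IsIrredComponent (V' S : Set (ι → Kˣ)) : Prop :=
  IsIrredVar K V' ∧ V' ⊆ S ∧ ∀ W, IsIrredVar K W → V' ⊆ W → W ⊆ S → W = V'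

end Var

/-- A correspondence torus: an `n`-dimensional subtorus of `(Kˣ)ⁿ × (Kˣ)ⁿ` which projects
onto `(Kˣ)ⁿ` in both coordinates.  We identify `(Kˣ)ⁿ × (Kˣ)ⁿ` with `(Kˣ)^(Fin n ⊕ Fin n)`,
a pair `(x, y)` corresponding to `Sum.elim x y`. -/
def IsCorrTorus {n : ℕ} (T : Set ((Fin n ⊕ Fin n) → Kˣ)) : Prop :=
  IsSubtorus K T ∧ vdim K T = n ∧
    (∀ x : Fin n → Kˣ, ∃ y, Sum.elim x y ∈ T) ∧
    (∀ y : Fin n → Kˣ, ∃ x, Sum.elim x y ∈ T)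

/-- `T` induces a toric correspondence between `V` and `V'`: the Zariski closures of the two
projections of `(V × V') ∩ T` are `V` and `V'` respectively. -/
def ToricCorr {n : ℕ} (T : Set ((Fin n ⊕ Fin n) → Kˣ)) (V V' : Set (Fin n → Kˣ)) : Prop :=
  zcl K ((fun p => p ∘ Sum.inl) '' {p | p ∈ T ∧ (p ∘ Sum.inl) ∈ V ∧ (p ∘ Sum.inr) ∈ V'}) = V ∧
  zcl K ((fun p => p ∘ Sum.inr) '' {p | p ∈ T ∧ (p ∘ Sum.inl) ∈ V ∧ (p ∘ Sum.inr) ∈ V'}) = V'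

/-- The set of elements of `K` underlying a set of units. -/
def unitSet (A : Set Kˣ) : Set K := (fun u : Kˣ => (u : K)) '' A

/-- `trdeg(y/A)`, the transcendence degree of `ℚ(A ∪ y)` over `ℚ(A)`. -/
noncomputable def trdegRel (A : Set Kˣ) {n : ℕ} (y : Fin n → Kˣ) : ℕ :=
  trdegOver K (Subfield.closure (unitSet K A)) (Set.range fun i => (y i : K))

/-- The predimension `δ(y/A) = 2 trdeg(y/A) - ldim(y/A)`. -/
noncomputable def pdelta (A : Set Kˣ) {n : ℕ} (y : Fin n → Kˣ) : ℤ :=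
  2 * (trdegRel K A y : ℤ) - (ldimRel K A y : ℤ)

/-- The extension `⟨A ∪ b⟩/A` is minimal prealgebraic of length `n`. -/
def MinPrealg {n : ℕ} (A : Set Kˣ) (b : Fin n → Kˣ) : Prop :=
  2 ≤ n ∧ ldimRel K A b = n ∧ pdelta K A b = 0 ∧
    ∀ B' : Set Kˣ, B' = ↑(divHull K B') → A ⊂ B' → B' ⊂ ↑(divHull K (A ∪ Set.range b)) →
      pdelta K B' b < 0


open FirstOrder Language in
/-- The language with a single unary relation symbol `U` (and no function symbols). -/
def unaryLang : Language :=
  ⟨fun _ => Empty, fun n => match n with | 1 => Unit | _ => Empty⟩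

open FirstOrder Language in
/-- The language of rings augmented by one unary relation symbol `U`. -/
def LU : Language := Language.ring.sum unaryLang

open FirstOrder Language in
/-- Membership in the class `𝒦` relative to a given field structure on `M`: `M` is an
algebraically closed field of characteristic `0` whose field operations are the
interpretations of the ring symbols, and the interpretation of `U` is a divisible subgroup
of `Mˣ` whose torsion subgroup is isomorphic to `ν` and all of whose finite tuples `y`
satisfy `δ(y) = 2 trdeg(ℚ(y)/ℚ) - ldim(y) ≥ 0`. -/
def GreenAux (ν : Subgroup (AlgebraicClosure ℚ)ˣ) (M : Type) [LU.Structure M]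
    [Field M] : Prop :=
  IsAlgClosed M ∧ CharZero M ∧
  (∀ x y : M, Structure.funMap (L := LU) (Sum.inl ringFunc.add) ![x, y] = x + y) ∧
  (∀ x y : M, Structure.funMap (L := LU) (Sum.inl ringFunc.mul) ![x, y] = x * y) ∧
  (∀ x : M, Structure.funMap (L := LU) (Sum.inl ringFunc.neg) ![x] = -x) ∧
  (Structure.funMap (L := LU) (Sum.inl ringFunc.zero) ![] = (0 : M)) ∧
  (Structure.funMap (L := LU) (Sum.inl ringFunc.one) ![] = (1 : M)) ∧
  ∃ U : Subgroup Mˣ,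
    (∀ x : M, Structure.RelMap (L := LU) (M := M) (Sum.inr Unit.unit : LU.Relations 1) ![x] ↔
      ∃ u ∈ U, ((u : Mˣ) : M) = x) ∧
    DivisibleSub M U ∧
    Nonempty (↥(CommGroup.torsion ↥U) ≃* ↥ν) ∧
    ∀ (n : ℕ), 1 ≤ n → ∀ y : Fin n → Mˣ, (∀ i, y i ∈ U) →
      (ldim M y : ℤ) ≤ 2 * (trdegQ M (Set.range fun i => ((y i : Mˣ) : M)) : ℤ)

open FirstOrder Language in
/-- The `LU`-structure `M` belongs to the class `𝒦`. -/
def InK (ν : Subgroup (AlgebraicClosure ℚ)ˣ) (M : Type) [inst : LU.Structure M] : Prop :=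
  ∃ fld : Field M, @GreenAux ν M inst fld


set_option linter.all false

open Finset in
theorem mann_dvd {K : Type*} [Field K] [CharZero K] {ι : Type*} [DecidableEq ι] (s : Finset ι)
    (a : ι → ℚ) (N : ℕ) (hN : 0 < N) (ω : K) (hω : IsPrimitiveRoot ω N) (e : ι → ℕ)
    (hsum : ∑ i ∈ s, (a i : K) * ω ^ (e i) = 0)
    (hmin : ∀ t ⊆ s, t.Nonempty → ∑ i ∈ t, (a i : K) * ω ^ (e i) = 0 → t = s)
    (i0 : ι) (hi0 : i0 ∈ s) (he0 : e i0 = 0) (p : ℕ) (hp : p.Prime) (hpN : p ∣ N)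
    (hbig : p ^ 2 ∣ N ∨ s.card < p) : ∀ i ∈ s, p ∣ e i := by
  have hconj : ∀ u : ℕ, u.Coprime N → ∑ i ∈ s, (a i : K) * ω ^ (u * e i) = 0 := by
    intro u hu
    have hωu := hω.pow_of_coprime u hu
    have hm : minpoly ℚ ω = minpoly ℚ (ω ^ u) := by
      rw [← Polynomial.cyclotomic_eq_minpoly_rat hω hN, Polynomial.cyclotomic_eq_minpoly_rat hωu hN]
    let f : Polynomial ℚ := ∑ i ∈ s, Polynomial.C (a i) * Polynomial.X ^ (e i)
    have h1 : Polynomial.aeval ω f = 0 := by simpa [f, map_sum] using hsum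
    have h2 : Polynomial.aeval (ω ^ u) f = 0 := by
      have := minpoly.dvd ℚ ω h1
      rw [hm] at this
      obtain ⟨g, hg⟩ := this
      rw [hg, map_mul, minpoly.aeval, zero_mul]
    simpa [f, map_sum, ← pow_mul] using h2
  obtain ⟨M, rfl⟩ := hpN
  have hM : 0 < M := Nat.pos_of_mul_pos_left hN
  have hθ : IsPrimitiveRoot (ω ^ M) p := hω.pow hN (mul_comm _ _)
  obtain ⟨θ, hθd⟩ : ∃ θ, θ = ω ^ M := ⟨_, rfl⟩
  rw [← hθd] at hθ
  let T : ℕ → K := fun j => ∑ i ∈ s, (a i : K) * ω ^ (e i) * θ ^ (j * e i)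
  have hTu : ∀ j, (1 + j * M).Coprime (p * M) → T j = 0 := by
    intro j hj
    rw [← hconj _ hj]
    refine Finset.sum_congr rfl fun i _ => ?_
    rw [hθd, mul_assoc, ← pow_mul, ← pow_add]
    congr 2; ring
  have hgeom : ∀ c : ℕ, ∑ j ∈ range p, θ ^ (j * c) = if p ∣ c then (p : K) else 0 := by
    intro c
    have h0 : ∑ j ∈ range p, θ ^ (j * c) = ∑ j ∈ range p, (θ ^ c) ^ j :=
      Finset.sum_congr rfl fun j _ => by rw [← pow_mul, mul_comm]
    rw [h0]
    split_ifs with h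
    · rw [(hθ.pow_eq_one_iff_dvd c).2 h]; simp
    · have hne : θ ^ c ≠ 1 := fun h' => h ((hθ.pow_eq_one_iff_dvd c).1 h')
      have := geom_sum_mul (θ ^ c) p
      rw [← pow_mul, mul_comm c p, pow_mul, hθ.pow_eq_one, one_pow, sub_self] at this
      exact (mul_eq_zero.1 this).resolve_right (sub_ne_zero.2 hne)
  have hfour : ∀ c : ℕ, ∑ j ∈ range p, θ ^ (j * c) * T j =
      p * ∑ i ∈ s with p ∣ e i + c, (a i : K) * ω ^ (e i) := by
    intro c
    simp only [T, Finset.mul_sum]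
    rw [Finset.sum_comm, Finset.sum_filter]
    refine Finset.sum_congr rfl fun i _ => ?_
    have : ∀ j, θ ^ (j * c) * ((a i : K) * ω ^ e i * θ ^ (j * e i)) =
      ((a i : K) * ω ^ e i) * θ ^ (j * (e i + c)) := by
      intro j; rw [mul_add, pow_add]; ring
    simp only [this, ← Finset.mul_sum, hgeom]
    split_ifs <;> ring
  have hp0 : (p : K) ≠ 0 := by exact_mod_cast hp.ne_zero
  have hcop : ∀ j, ¬ p ∣ 1 + j * M → (1 + j * M).Coprime (p * M) := by
    intro j hj
    refine Nat.Coprime.mul_right ((hp.coprime_iff_not_dvd.2 hj).symm) ?_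
    simp
  have hall : ∀ j ∈ range p, T j = 0 := by
    by_cases hpM : p ∣ M
    · intro j _
      refine hTu j (hcop j fun h => ?_)
      have := (Nat.dvd_add_left (hpM.mul_left j)).1 h
      exact hp.one_lt.ne' (Nat.dvd_one.1 this)
    · have hcard : s.card < p := by
        refine hbig.resolve_left fun h => hpM ?_
        rw [pow_two] at h
        exact Nat.dvd_of_mul_dvd_mul_left hp.pos h
      obtain ⟨r, hr, hrs⟩ : ∃ r ∈ range p, r ∉ s.image (fun i => e i % p) := by
        by_contra! h
        have := Finset.card_le_card (show range p ⊆ s.image (fun i => e i % p) from h)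
        rw [card_range] at this
        exact absurd (this.trans Finset.card_image_le) (by omega)
      rw [mem_range] at hr
      have hemp : (s.filter fun i => p ∣ e i + (p - r)) = ∅ := by
        refine Finset.filter_eq_empty_iff.2 fun i hi h => hrs ?_
        refine Finset.mem_image.2 ⟨i, hi, ?_⟩
        have h2 : (e i + (p - r) + r) % p = r % p := by
          rw [Nat.add_mod, Nat.mod_eq_zero_of_dvd h]; simp
        have h3 : e i + (p - r) + r = e i + p := by omega
        rw [h3, Nat.add_mod_right, Nat.mod_eq_of_lt hr] at h2
        exact h2
      have hz := hfour (p - r)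
      rw [hemp] at hz
      simp only [Finset.sum_empty, mul_zero] at hz
      intro j hj
      by_cases hjd : p ∣ 1 + j * M
      · rw [Finset.sum_eq_single j] at hz
        · exact (mul_eq_zero.1 hz).resolve_left (pow_ne_zero _ (hθ.ne_zero hp.ne_zero))
        · intro j' hj' hne
          rw [hTu j' (hcop j' fun h => hne ?_), mul_zero]
          have h1 : (1 + j' * M) ≡ (1 + j * M) [MOD p] :=
            ((Nat.modEq_zero_iff_dvd.2 h).trans (Nat.modEq_zero_iff_dvd.2 hjd).symm)
          have h2 := Nat.ModEq.add_left_cancel' 1 h1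
          have h3 := Nat.ModEq.cancel_right_of_coprime ((Nat.Prime.coprime_iff_not_dvd hp).2 hpM) h2
          exact Nat.ModEq.eq_of_lt_of_lt h3 (mem_range.1 hj') (mem_range.1 hj)
        · exact fun h => absurd hj h
      · exact hTu j (hcop j hjd)
  have h0 := hfour 0
  rw [Finset.sum_eq_zero (fun j hj => by rw [hall j hj, mul_zero])] at h0
  have h1 := (mul_eq_zero.1 h0.symm).resolve_left hp0
  have h2 := hmin _ (Finset.filter_subset _ _) ⟨i0, by simp [hi0, he0]⟩ h1
  intro i hi
  rw [← h2] at hi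
  simpa using (Finset.mem_filter.1 hi).2

/-- Mann's theorem (with a crude exponent). -/
theorem mann {K : Type*} [Field K] [CharZero K] {ι : Type*} [DecidableEq ι] (s : Finset ι)
    (a : ι → ℚ) (z : ι → Kˣ) (hz : ∀ i ∈ s, IsOfFinOrder (z i))
    (hsum : ∑ i ∈ s, (a i : K) * z i = 0)
    (hmin : ∀ t ⊆ s, t.Nonempty → ∑ i ∈ t, (a i : K) * z i = 0 → t = s)
    (i j : ι) (hi : i ∈ s) (hj : j ∈ s) : (z i / z j) ^ (s.card.factorial) = 1 := by
  classical
  -- the group generated by the ratios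
  let w : ι → Kˣ := fun i => z i / z j
  have hw : ∀ i ∈ s, IsOfFinOrder (w i) := fun i hi => by
    have := (hz i hi).mul (hz j hj).inv
    simpa [w, div_eq_mul_inv] using this
  let N : ℕ := s.lcm fun i => orderOf (w i)
  have hN : 0 < N := by
    refine Nat.pos_of_ne_zero fun h => ?_
    obtain ⟨i, hi, h⟩ := Finset.lcm_eq_zero_iff.1 h
    exact (orderOf_pos_iff.2 (hw i hi)).ne' h
  have hNw : ∀ i ∈ s, w i ^ N = 1 := fun i hi =>
    orderOf_dvd_iff_pow_eq_one.1 (Finset.dvd_lcm hi)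
  let Ω := AlgebraicClosure K
  have : NeZero (N : Ω) := ⟨by exact_mod_cast hN.ne'⟩
  have : NeZero N := ⟨hN.ne'⟩
  obtain ⟨ω, hω⟩ := HasEnoughRootsOfUnity.exists_primitiveRoot Ω N
  have hex : ∀ i : ι, ∃ e : ℕ, i ∈ s → ω ^ e = algebraMap K Ω (w i) := by
    intro i
    by_cases hi : i ∈ s
    · obtain ⟨e, -, he⟩ := hω.eq_pow_of_pow_eq_one (ξ := algebraMap K Ω (w i)) (by
        rw [← map_pow, ← Units.val_pow_eq_pow_val, hNw i hi]; simp)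
      exact ⟨e, fun _ => he⟩
    · exact ⟨0, fun h => absurd h hi⟩
  choose e0 he0 using hex
  let e : ι → ℕ := fun i => if i = j then 0 else e0 i
  have he : ∀ i ∈ s, ω ^ e i = algebraMap K Ω (w i) := by
    intro i hi
    by_cases hij : i = j
    · subst hij; simp [e, w]
    · simp [e, hij, he0 i hi]
  have hcalc : ∀ t ⊆ s, ∑ i ∈ t, (a i : Ω) * ω ^ e i =
      algebraMap K Ω ((∑ i ∈ t, (a i : K) * z i) * ((z j)⁻¹ : Kˣ)) := by
    intro t ht
    rw [Finset.sum_mul, map_sum]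
    refine Finset.sum_congr rfl fun i hi => ?_
    rw [he i (ht hi)]
    simp [w, div_eq_mul_inv, mul_assoc]
  have key : ∀ p : ℕ, p.Prime → p ∣ N → ¬ (p ^ 2 ∣ N ∨ s.card < p) := by
    intro p hp hpN hb
    have hd := mann_dvd s a N hN ω hω e (by rw [hcalc s subset_rfl, hsum]; simp)
      (by
        intro t ht htn h0
        rw [hcalc t ht] at h0
        refine hmin t ht htn ?_
        exact (mul_eq_zero.1 ((map_eq_zero (algebraMap K Ω)).1 h0)).resolve_right
          (Units.ne_zero _)) j hj (by simp [e]) p hp hpN hb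
    have : N ∣ N / p := by
      refine Finset.lcm_dvd fun i hi => ?_
      rw [orderOf_dvd_iff_pow_eq_one]
      obtain ⟨c, hc⟩ := hd i hi
      have h1 : algebraMap K Ω (w i) ^ (N / p) = 1 := by
        rw [← he i hi, hc, ← pow_mul, mul_assoc, mul_comm c, ← mul_assoc, Nat.mul_div_cancel' hpN,
          pow_mul, hω.pow_eq_one, one_pow]
      rw [← map_pow, ← map_one (algebraMap K Ω)] at h1
      have h2 := (algebraMap K Ω).injective h1
      exact Units.ext (by simpa using h2)
    have := Nat.le_of_dvd (Nat.div_pos (Nat.le_of_dvd hN hpN) hp.pos) this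
    exact absurd this (not_le.2 (Nat.div_lt_self hN hp.one_lt))
  have hdvd : N ∣ s.card.factorial := by
    have hsq : Squarefree N := by
      rw [Nat.squarefree_iff_prime_squarefree]
      intro p hp h
      exact key p hp ((dvd_mul_right _ _).trans h) (Or.inl (by rwa [pow_two]))
    rw [← Nat.prod_primeFactors_of_squarefree hsq]
    refine Finset.prod_primes_dvd _ (fun p hp => (Nat.prime_of_mem_primeFactors hp).prime) ?_
    intro p hp
    have hpp := Nat.prime_of_mem_primeFactors hp
    refine (Nat.Prime.dvd_factorial hpp).2 ?_
    by_contra h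
    exact key p hpp (Nat.dvd_of_mem_primeFactors hp) (Or.inr (not_le.1 h))
  obtain ⟨c, hc⟩ := hdvd
  rw [hc, pow_mul, hNw i hi, one_pow]

theorem torsion_rel {σ : Type*} [Fintype σ] (P : MvPolynomial σ ℚ) (hP : P ≠ 0) :
    ∃ F : Finset (σ → ℤ), (0 ∉ F) ∧ ∀ (K : Type) [Field K] [CharZero K] (z : σ → Kˣ),
      (∀ i, IsOfFinOrder (z i)) → MvPolynomial.aeval (fun i => (z i : K)) P = 0 →
      ∃ q ∈ F, ∏ i, z i ^ (q i) = 1 := by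
  classical
  let S := P.support
  let F : Finset (σ → ℤ) := (S ×ˢ S).image fun ab =>
    fun i => (S.card.factorial : ℤ) * ((ab.1 i : ℤ) - (ab.2 i : ℤ))
  refine ⟨F.erase 0, by simp, ?_⟩
  intro K _ _ z hz h0
  let m : (σ →₀ ℕ) → Kˣ := fun α => ∏ i, z i ^ α i
  have hm : ∀ α, IsOfFinOrder (m α) := by
    intro α
    refine Finset.prod_induction _ (fun u => IsOfFinOrder u) (fun a b => IsOfFinOrder.mul)
      (IsOfFinOrder.one) (fun i _ => (hz i).pow)
  have hsum : ∑ α ∈ S, ((P.coeff α : ℚ) : K) * m α = 0 := by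
    rw [← h0, MvPolynomial.aeval_def, MvPolynomial.eval₂_eq']
    refine Finset.sum_congr rfl fun α _ => ?_
    simp [m]
  obtain ⟨t, ht, htmin⟩ := Finset.exists_minimal (s := S.powerset.filter fun t => t.Nonempty ∧
    ∑ α ∈ t, ((P.coeff α : ℚ) : K) * m α = 0) ⟨S, by
      simp only [Finset.mem_filter, Finset.mem_powerset, subset_rfl, true_and]
      exact ⟨MvPolynomial.support_nonempty.2 hP, hsum⟩⟩
  simp only [Finset.mem_filter, Finset.mem_powerset] at ht
  obtain ⟨htS, htn, ht0⟩ := ht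
  have hcard : 1 < t.card := by
    by_contra hlt
    have : t.card = 1 := le_antisymm (not_lt.1 hlt) htn.card_pos
    obtain ⟨α, rfl⟩ := Finset.card_eq_one.1 this
    rw [Finset.sum_singleton] at ht0
    have hα : P.coeff α ≠ 0 := MvPolynomial.mem_support_iff.1 (htS (by simp))
    rcases mul_eq_zero.1 ht0 with h | h
    · exact hα (by exact_mod_cast h)
    · exact (m α).ne_zero h
  obtain ⟨α, hα, β, hβ, hne⟩ := Finset.one_lt_card.1 hcard
  have hM := mann t P.coeff m (fun i _ => hm i) ht0 (by
    intro t' ht' hn' h'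
    refine subset_antisymm ht' (htmin ?_ ht')
    simp only [Finset.mem_filter, Finset.mem_powerset]
    exact ⟨ht'.trans htS, hn', h'⟩) α β hα hβ
  refine ⟨fun i => (S.card.factorial : ℤ) * ((α i : ℤ) - (β i : ℤ)), ?_, ?_⟩
  · refine Finset.mem_erase.2 ⟨fun h => hne ?_, Finset.mem_image.2 ⟨(α, β), ?_, rfl⟩⟩
    · ext i
      have := congrFun h i
      simp only [Pi.zero_apply, mul_eq_zero, Nat.cast_eq_zero, Nat.factorial_ne_zero, false_or] at this
      omega
    · exact Finset.mem_product.2 ⟨htS hα, htS hβ⟩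
  · obtain ⟨c, hc⟩ := Nat.factorial_dvd_factorial (Finset.card_le_card htS)
    have h1 : ∏ i, z i ^ ((S.card.factorial : ℤ) * ((α i : ℤ) - (β i : ℤ))) =
        (m α / m β) ^ (S.card.factorial) := by
      simp only [m, ← Finset.prod_div_distrib, ← Finset.prod_pow]
      refine Finset.prod_congr rfl fun i _ => ?_
      rw [mul_comm, zpow_mul, zpow_natCast, zpow_sub, zpow_natCast, zpow_natCast, div_eq_mul_inv]
    rw [h1, hc, pow_mul, hM, one_pow]

theorem exists_derivation {k K ι : Type*} [Field k] [Field K] [Algebra k K] [CharZero k]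
    {x : ι → K} (hx : IsTranscendenceBasis k x) (g : ι → K) :
    ∃ D : Derivation k K K, ∀ i, D (x i) = g i := by
  letI : Algebra (MvPolynomial ι k) K := (MvPolynomial.aeval x).toAlgebra
  have hmap : ∀ p : MvPolynomial ι k, algebraMap (MvPolynomial ι k) K p = MvPolynomial.aeval x p :=
    fun _ => rfl
  haveI : IsScalarTower k (MvPolynomial ι k) K := IsScalarTower.of_algebraMap_eq fun r => by
    rw [hmap, MvPolynomial.algebraMap_eq, MvPolynomial.aeval_C]
  have hinj : Function.Injective (algebraMap (MvPolynomial ι k) K) := hx.1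
  haveI : FaithfulSMul (MvPolynomial ι k) K := (faithfulSMul_iff_algebraMap_injective _ _).2 hinj
  have halg : Algebra.IsAlgebraic (MvPolynomial ι k) K := by
    have := hx.isAlgebraic
    constructor
    intro z
    let e : MvPolynomial ι k ≃ₐ[k] Algebra.adjoin k (Set.range x) := hx.1.aevalEquiv
    refine IsAlgebraic.of_ringHom_of_comp_eq (f := (e : MvPolynomial ι k →+* _)) (g := RingHom.id K) (a := z)
      (this.isAlgebraic z) e.surjective (Function.injective_id) ?_
    ext p <;> simp [e, hmap]
  letI : Algebra (FractionRing (MvPolynomial ι k)) K := FractionRing.liftAlgebra _ _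
  haveI : Algebra.IsAlgebraic (FractionRing (MvPolynomial ι k)) K :=
    (IsFractionRing.comap_isAlgebraic_iff (A := MvPolynomial ι k)).1 halg
  haveI : CharZero (FractionRing (MvPolynomial ι k)) :=
    charZero_of_injective_algebraMap (R := MvPolynomial ι k) (IsFractionRing.injective _ _)
  haveI : Algebra.FormallyEtale (MvPolynomial ι k) (FractionRing (MvPolynomial ι k)) :=
    Algebra.FormallyEtale.of_isLocalization (nonZeroDivisors _)
  haveI : Algebra.FormallyEtale (FractionRing (MvPolynomial ι k)) K :=
    Algebra.FormallyEtale.of_isSeparable _ _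
  haveI : Algebra.FormallyEtale (MvPolynomial ι k) K :=
    Algebra.FormallyEtale.comp _ (FractionRing (MvPolynomial ι k)) K
  let d : Derivation k (MvPolynomial ι k) K := MvPolynomial.mkDerivation k g
  let l : TensorProduct (MvPolynomial ι k) K (Ω[MvPolynomial ι k⁄k]) →ₗ[K] K :=
    d.liftKaehlerDifferential.liftBaseChange K
  let D : Derivation k K K :=
    (l.comp (KaehlerDifferential.tensorKaehlerEquivOfFormallyEtale k (MvPolynomial ι k) K).symm.toLinearMap).compDer
      (KaehlerDifferential.D k K)
  refine ⟨D, fun i => ?_⟩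
  have hxi : x i = algebraMap (MvPolynomial ι k) K (MvPolynomial.X i) := by
    rw [hmap, MvPolynomial.aeval_X]
  rw [hxi]
  change l ((KaehlerDifferential.tensorKaehlerEquivOfFormallyEtale k (MvPolynomial ι k) K).symm
    (KaehlerDifferential.D k K _)) = _
  rw [KaehlerDifferential.tensorKaehlerEquivOfFormallyEtale_symm_D_algebraMap]
  simp [l, d, MvPolynomial.mkDerivation_X]

theorem exists_derivation_of_algInd {k K ι : Type*} [Field k] [Field K] [Algebra k K] [CharZero k]
    {x : ι → K} (hx : AlgebraicIndependent k x) (g : ι → K) :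
    ∃ D : Derivation k K K, ∀ i, D (x i) = g i := by
  classical
  obtain ⟨s, hs, hs'⟩ := exists_isTranscendenceBasis_superset (R := k) (s := Set.range x)
    hx.to_subtype_range
  have hinj := hx.injective
  obtain ⟨D, hD⟩ := exists_derivation hs' (fun z : s => Function.extend x g 0 z)
  refine ⟨D, fun i => ?_⟩
  rw [hD ⟨x i, hs ⟨i, rfl⟩⟩, hinj.extend_apply]

theorem twisted_unique {K L : Type*} [Field K] [Field L] [CharZero K] (f : K →+* L) (δ : K →+ L)
    (hδ : ∀ a b, δ (a * b) = f a * δ b + f b * δ a) {F : Type*} [Field F] [Algebra F K]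
    (hF : ∀ c : F, δ (algebraMap F K c) = 0) (x : K) (hx : IsAlgebraic F x) : δ x = 0 := by
  have hpow : ∀ n : ℕ, δ (x ^ n) = n * f (x ^ (n - 1)) * δ x := by
    intro n
    induction n with
    | zero =>
      have := hF 1
      simpa using this
    | succ n ih =>
      rw [pow_succ, hδ, ih]
      rcases n with _ | n
      · simp
      · simp [pow_succ]; ring
  have hpoly : ∀ P : Polynomial F, δ (Polynomial.aeval x P) =
      f (Polynomial.aeval x (Polynomial.derivative P)) * δ x := by
    intro P
    induction P using Polynomial.induction_on' with
    | add p q hp hq => simp [hp, hq, add_mul]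
    | monomial n a =>
      simp only [Polynomial.aeval_monomial, Polynomial.derivative_monomial, hδ, hF, hpow]
      simp; ring
  have hCF : CharZero F := (algebraMap F K).charZero
  have h1 := hpoly (minpoly F x)
  rw [minpoly.aeval, map_zero] at h1
  have hirr := minpoly.irreducible hx.isIntegral
  have hsep : (minpoly F x).Separable := hirr.separable
  have h2 := hsep.aeval_derivative_ne_zero (x := x) (minpoly.aeval F x)
  rcases mul_eq_zero.1 h1.symm with h | h
  · exact absurd ((map_eq_zero f).1 h) h2
  · exact h

theorem exists_const_field {k K : Type*} [Field k] [Field K] [Algebra k K] [CharZero K]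
    (t : K) (ht : Transcendental k t) :
    ∃ E : IntermediateField k K, IsTranscendenceBasis E (fun _ : Unit => t) := by
  classical
  have hCk : CharZero k := (algebraMap k K).charZero
  have h0 : AlgebraicIndepOn k id ({t} : Set K) := by
    refine (algebraicIndependent_unique_type_iff (ι := ({t} : Set K))).2 ?_
    simpa using ht
  obtain ⟨s, hs, hs'⟩ := exists_isTranscendenceBasis_superset h0
  rw [Set.singleton_subset_iff] at hs
  obtain ⟨D, hD⟩ := exists_derivation hs' (fun z : s => if (z : K) = t then 1 else 0)
  have hDt : D t = 1 := by simpa using hD ⟨t, hs⟩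
  obtain ⟨E, hE⟩ : ∃ E : IntermediateField k K, ∀ z, z ∈ E ↔ D z = 0 := ⟨
    { carrier := {z | D z = 0}
      mul_mem' := by intro a b ha hb; simp only [Set.mem_setOf_eq] at *; simp [ha, hb]
      add_mem' := by intro a b ha hb; simp only [Set.mem_setOf_eq] at *; simp [ha, hb]
      algebraMap_mem' := by intro r; simp
      inv_mem' := by intro a ha; simp only [Set.mem_setOf_eq] at *; simp [Derivation.leibniz_inv, ha] }, fun z => Iff.rfl⟩
  refine ⟨E, isTranscendenceBasis_iff_algebraicIndependent_isAlgebraic.2 ⟨?_, ?_⟩⟩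
  · refine algebraicIndependent_unique_type_iff.2 fun h => ?_
    have := twisted_unique (RingHom.id K) (D : K →+ K) (fun a b => by simp) (F := E)
      (fun c => (hE _).1 c.2) t h
    exact one_ne_zero (hDt.symm.trans this)
  · have := hs'.isAlgebraic
    have hle : Algebra.adjoin k (Set.range (Subtype.val : s → K)) ≤
        (Algebra.adjoin E (Set.range fun _ : Unit => t)).restrictScalars k := by
      refine Algebra.adjoin_le ?_
      rintro _ ⟨z, rfl⟩
      rw [SetLike.mem_coe, Subalgebra.mem_restrictScalars]
      by_cases hz : (z : K) = t
      · rw [hz]; exact Algebra.subset_adjoin ⟨(), rfl⟩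
      · have : (z : K) ∈ E := by
          rw [hE, hD z, if_neg hz]
        exact (Algebra.adjoin E (Set.range fun _ : Unit => t)).algebraMap_mem ⟨z, this⟩
    have hle' : ∀ z : Algebra.adjoin k (Set.range (Subtype.val : s → K)),
        (z : K) ∈ Algebra.adjoin E (Set.range fun _ : Unit => t) := fun z => hle z.2
    let i : Algebra.adjoin k (Set.range (Subtype.val : s → K)) →+*
        Algebra.adjoin E (Set.range fun _ : Unit => t) :=
      ((Algebra.adjoin k (Set.range (Subtype.val : s → K))).val : _ →+* K).codRestrict
        (Algebra.adjoin E (Set.range fun _ : Unit => t)) hle'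
    constructor
    intro z
    refine (this.isAlgebraic z).ringHom_of_comp_eq i (RingHom.id K) ?_ ?_
    · intro a b hab
      have h2 := congrArg (fun w : Algebra.adjoin E (Set.range fun _ : Unit => t) => (w : K)) hab
      exact Subtype.ext h2
    · ext a; rfl

theorem coeff_prod_sum {R ι : Type*} [CommRing R] (s : Finset ι) (f : ι → Polynomial R) (n : ι → ℕ)
    (h : ∀ i ∈ s, (f i).natDegree ≤ n i) :
    (∏ i ∈ s, f i).natDegree ≤ ∑ i ∈ s, n i ∧
    (∏ i ∈ s, f i).coeff (∑ i ∈ s, n i) = ∏ i ∈ s, (f i).coeff (n i) := by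
  classical
  induction s using Finset.induction_on with
  | empty => simp
  | insert a s ha ih =>
    obtain ⟨h1, h2⟩ := ih fun i hi => h i (Finset.mem_insert_of_mem hi)
    have h3 := h a (Finset.mem_insert_self _ _)
    rw [Finset.prod_insert ha, Finset.sum_insert ha, Finset.prod_insert ha]
    exact ⟨Polynomial.natDegree_mul_le_of_le h3 h1,
      by rw [Polynomial.coeff_mul_add_eq_of_natDegree_le h3 h1, h2]⟩

open Polynomial in
/-- The residue at infinity of a sum of logarithmic derivatives. -/
theorem residue_sum {E Ω ι : Type*} [Field E] [Field Ω] [Algebra E Ω] [Fintype ι] (t : Ω)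
    (ht : Transcendental E t) (f : ι → E[X]) (hf : ∀ i, f i ≠ 0) (b : ι → E)
    (h : ∑ i, algebraMap E Ω (b i) * (aeval t (derivative (f i)) / aeval t (f i)) = 0) :
    ∑ i, b i * ((f i).natDegree : E) = 0 := by
  classical
  have hne : ∀ i, aeval t (f i) ≠ 0 := fun i h0 => hf i (transcendental_iff.1 ht _ h0)
  let P : E[X] := ∑ i, C (b i) * ∏ j, if j = i then X * derivative (f j) else f j
  have hP : P = 0 := by
    apply transcendental_iff.1 ht
    have : aeval t P = (∏ j, aeval t (f j)) * t *
        ∑ i, algebraMap E Ω (b i) * (aeval t (derivative (f i)) / aeval t (f i)) := by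
      rw [Finset.mul_sum, map_sum]
      refine Finset.sum_congr rfl fun i _ => ?_
      rw [map_mul, aeval_C, map_prod, ← Finset.mul_prod_erase _ _ (Finset.mem_univ i),
        ← Finset.mul_prod_erase _ _ (Finset.mem_univ i), if_pos rfl, map_mul, aeval_X]
      have h1 : ∏ x ∈ Finset.univ.erase i, aeval t (if x = i then X * derivative (f x) else f x) =
        ∏ x ∈ Finset.univ.erase i, aeval t (f x) :=
        Finset.prod_congr rfl fun x hx => by rw [if_neg (Finset.ne_of_mem_erase hx)]
      rw [h1]
      have := hne i
      field_simp
    rw [this, h, mul_zero]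
  have hc : P.coeff (∑ j, (f j).natDegree) =
      (∑ i, b i * ((f i).natDegree : E)) * ∏ j, (f j).leadingCoeff := by
    rw [Finset.sum_mul, finset_sum_coeff]
    refine Finset.sum_congr rfl fun i _ => ?_
    rw [coeff_C_mul, mul_assoc]
    congr 1
    rw [(coeff_prod_sum Finset.univ _ (fun j => (f j).natDegree) ?_).2]
    · rw [← Finset.mul_prod_erase _ _ (Finset.mem_univ i),
        ← Finset.mul_prod_erase _ (fun j => (f j).leadingCoeff) (Finset.mem_univ i), if_pos rfl,
        ← mul_assoc]
      congr 1
      · rcases Nat.eq_zero_or_pos (f i).natDegree with h0 | h0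
        · rw [h0]; simp
        · obtain ⟨m, hm⟩ := Nat.exists_eq_succ_of_ne_zero h0.ne'
          rw [hm, coeff_X_mul, coeff_derivative, leadingCoeff, hm]
          push_cast; ring
      · refine Finset.prod_congr rfl fun x hx => by rw [if_neg (Finset.ne_of_mem_erase hx)]; rfl
    · intro j _
      split_ifs
      · rcases Nat.eq_zero_or_pos (f j).natDegree with h0 | h0
        · rw [eq_C_of_natDegree_eq_zero h0]; simp
        · refine (natDegree_mul_le).trans ?_
          have := natDegree_derivative_lt h0.ne'
          rw [natDegree_X]; omega
      · exact le_rfl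
  rw [hP, coeff_zero] at hc
  exact (mul_eq_zero.1 hc.symm).resolve_right
    (Finset.prod_ne_zero_iff.2 fun j _ => leadingCoeff_ne_zero.2 (hf j))

open Polynomial in
/-- The graph of the degree homomorphism on `E(t)`. -/
def degGraph {E Ω : Type*} [Field E] [Field Ω] [Algebra E Ω] (t : Ω) (ht : Transcendental E t) :
    Subgroup (Ωˣ × Multiplicative ℤ) where
  carrier := {z | ∃ p r : E[X], p ≠ 0 ∧ r ≠ 0 ∧ (z.1 : Ω) * aeval t r = aeval t p ∧
    Multiplicative.toAdd z.2 = (p.natDegree : ℤ) - r.natDegree}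
  one_mem' := ⟨1, 1, one_ne_zero, one_ne_zero, by simp, by simp⟩
  mul_mem' := by
    rintro a b ⟨p, r, hp, hr, h1, h2⟩ ⟨p', r', hp', hr', h1', h2'⟩
    refine ⟨p * p', r * r', mul_ne_zero hp hp', mul_ne_zero hr hr', ?_, ?_⟩
    · rw [map_mul, map_mul, ← h1, ← h1', Prod.fst_mul, Units.val_mul]; ring
    · rw [natDegree_mul hp hp', natDegree_mul hr hr', Prod.snd_mul, toAdd_mul, h2, h2']
      push_cast; ring
  inv_mem' := by
    rintro a ⟨p, r, hp, hr, h1, h2⟩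
    refine ⟨r, p, hr, hp, ?_, ?_⟩
    · rw [← h1, ← mul_assoc, Prod.fst_inv, Units.inv_mul, one_mul]
    · rw [Prod.snd_inv, toAdd_inv, h2]; ring

open Polynomial in
theorem degGraph_unique {E Ω : Type*} [Field E] [Field Ω] [Algebra E Ω] (t : Ω)
    (ht : Transcendental E t) (v : ℤ) (h : ((1 : Ωˣ), Multiplicative.ofAdd v) ∈ degGraph t ht) :
    v = 0 := by
  obtain ⟨p, r, hp, hr, h1, h2⟩ := h
  simp only [Units.val_one, one_mul] at h1
  have : r = p := transcendental_iff_injective.1 ht h1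
  subst this
  simpa using h2

open Polynomial in
theorem comm_der {E F L Ω : Type*} [Field E] [Field F] [Field L] [Field Ω] [CharZero L] [Algebra E F]
    [Algebra F L] [Algebra E L] [IsScalarTower E F L] [Algebra E Ω] (halg : Algebra.IsAlgebraic F L)
    (t : F) (hF : ∀ z : F, ∃ p r : E[X], z = aeval t p / aeval t r)
    (DL : Derivation E L L) (hDL : DL (algebraMap F L t) = 1)
    (D : Derivation E Ω Ω) (σ : L →ₐ[E] Ω) (hD : D (σ (algebraMap F L t)) = 1) (z : L) :
    D (σ z) = σ (DL z) := by
  let δ : L →+ Ω := ((D : Ω →+ Ω).comp (σ : L →+ Ω)) - ((σ : L →+ Ω).comp (DL : L →+ L))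
  have hδ : ∀ w, δ w = D (σ w) - σ (DL w) := fun w => rfl
  have hleib : ∀ a b, δ (a * b) = σ a * δ b + σ b * δ a := by
    intro a b
    simp only [hδ, map_mul, Derivation.leibniz, smul_eq_mul, map_add]
    ring
  have hpoly : ∀ f : E[X], δ (aeval (algebraMap F L t) f) = 0 := by
    intro f
    rw [hδ, Derivation.map_aeval, hDL, smul_eq_mul, mul_one, ← aeval_algHom_apply σ,
      ← aeval_algHom_apply σ, Derivation.map_aeval, hD, smul_eq_mul, mul_one, sub_self]
  have hFz : ∀ c : F, δ (algebraMap F L c) = 0 := by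
    intro c
    obtain ⟨f, g, hfg⟩ := hF c
    by_cases hg : aeval t g = 0
    · rw [hfg, hg, div_zero, map_zero, map_zero]
    · have h1 : algebraMap F L c * aeval (algebraMap F L t) g = aeval (algebraMap F L t) f := by
        rw [aeval_algebraMap_apply, aeval_algebraMap_apply, ← map_mul, hfg, div_mul_cancel₀ _ hg]
      have h2 := hpoly f
      rw [← h1, hleib, hpoly, mul_zero, zero_add] at h2
      refine (mul_eq_zero.1 h2).resolve_left ?_
      rw [aeval_algebraMap_apply]
      exact (_root_.map_ne_zero σ).2 ((_root_.map_ne_zero _).2 hg)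
  have := twisted_unique (σ : L →+* Ω) δ hleib hFz z (Algebra.IsAlgebraic.isAlgebraic z)
  rw [hδ] at this
  exact sub_eq_zero.1 this

theorem log_aux1 {F : Type*} [Field F] (a b da db : F) (ha : a ≠ 0) (hb : b ≠ 0) :
    (a * db + b * da) / (a * b) = da / a + db / b := by
  field_simp
  ring

theorem log_aux2 {F : Type*} [Field F] (c p r dp dr : F) (ha : p ≠ 0) (hb : r ≠ 0) :
    c * (dp / p) + -c * (dr / r) = c * ((r⁻¹ ^ 2 * (r * dp - p * dr)) / (p / r)) := by
  field_simp
  ring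

open Polynomial in
theorem normR {E F L ι : Type*} [Field E] [Field F] [Field L] [CharZero E] [Algebra E F]
    [Algebra F L] [Algebra E L] [IsScalarTower E F L] [FiniteDimensional F L] [Fintype ι]
    (t : F) (hb : IsTranscendenceBasis E (fun _ : Unit => t))
    (hF : ∀ z : F, ∃ p r : E[X], z = aeval t p / aeval t r)
    (y : ι → Lˣ) (a : ι → E) (DL : Derivation E L L) (hDL : DL (algebraMap F L t) = 1)
    (h : ∑ i, algebraMap E L (a i) * (DL (y i) / y i) = 0) :
    ∃ v : ι → ℤ, ∑ i, a i * (v i : E) = 0 ∧ ∀ q : ι → ℤ,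
      ((∏ i, y i ^ q i : Lˣ) : L) = algebraMap F L t → ∑ i, q i * v i ≠ 0 := by
  classical
  have hCF : CharZero F := charZero_of_injective_algebraMap (algebraMap E F).injective
  have hCL : CharZero L := charZero_of_injective_algebraMap (algebraMap E L).injective
  let Ω := AlgebraicClosure L
  have hbL : IsTranscendenceBasis E (fun _ : Unit => algebraMap F L t) := hb.algebraMap_comp (A := L)
  have hbΩ : IsTranscendenceBasis E (fun _ : Unit => algebraMap F Ω t) := hb.algebraMap_comp (A := Ω)
  have htΩ : Transcendental E (algebraMap F Ω t) := hbΩ.1.transcendental ()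
  have htF : Transcendental E t := hb.1.transcendental ()
  obtain ⟨D, hD⟩ := exists_derivation hbΩ (fun _ => 1)
  replace hD := hD ()
  have ht0 : t ≠ 0 := fun h0 => htF (h0 ▸ isAlgebraic_zero)
  let N : ι → F := fun i => Algebra.norm F (y i : L)
  have hN0 : ∀ i, N i ≠ 0 := fun i => Algebra.norm_ne_zero_iff.2 (y i).ne_zero
  choose p r hpr using fun i => hF (N i)
  have hp0 : ∀ i, aeval t (p i) ≠ 0 := fun i h0 => hN0 i (by rw [hpr, h0, zero_div])
  have hr0 : ∀ i, aeval t (r i) ≠ 0 := fun i h0 => hN0 i (by rw [hpr, h0, div_zero])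
  have hp : ∀ i, p i ≠ 0 := fun i h0 => hp0 i (by rw [h0, map_zero])
  have hr : ∀ i, r i ≠ 0 := fun i h0 => hr0 i (by rw [h0, map_zero])
  have hDp : ∀ f : E[X], D (aeval (algebraMap F Ω t) f) = aeval (algebraMap F Ω t) (derivative f) := by
    intro f
    rw [Derivation.map_aeval, hD, smul_eq_mul, mul_one]
  -- embeddings commute with the derivations
  have hσ : ∀ (σ : L →ₐ[F] Ω) (z : L), D (σ z) = σ (DL z) := by
    intro σ z
    exact comm_der (F := F) inferInstance t hF DL hDL D (σ.restrictScalars E)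
      (by rw [AlgHom.restrictScalars_apply, AlgHom.commutes, hD]) z
  have hlogprod : ∀ (s : Finset (L →ₐ[F] Ω)) (z : L), z ≠ 0 →
      D (∏ σ ∈ s, σ z) / (∏ σ ∈ s, σ z) = ∑ σ ∈ s, σ (DL z / z) := by
    intro s z hz
    induction s using Finset.induction_on with
    | empty => simp
    | insert σ s hs ih =>
      rw [Finset.prod_insert hs, Finset.sum_insert hs, ← ih, Derivation.leibniz, map_div₀, ← hσ]
      have h1 : σ z ≠ 0 := (_root_.map_ne_zero _).2 hz
      have h2 : ∏ σ ∈ s, σ z ≠ 0 := Finset.prod_ne_zero_iff.2 fun τ _ => (_root_.map_ne_zero _).2 hz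
      simp only [smul_eq_mul]
      exact log_aux1 _ _ _ _ h1 h2
  have hlogN : ∀ i, D (algebraMap F Ω (N i)) / algebraMap F Ω (N i) =
      ∑ σ : L →ₐ[F] Ω, σ (DL (y i) / y i) := by
    intro i
    rw [← hlogprod _ _ (y i).ne_zero, Algebra.norm_eq_prod_embeddings F Ω]
  have hsum : ∑ i, algebraMap E Ω (a i) * (D (algebraMap F Ω (N i)) / algebraMap F Ω (N i)) = 0 := by
    have h7 : ∀ i, algebraMap E Ω (a i) * (D (algebraMap F Ω (N i)) / algebraMap F Ω (N i)) =
        ∑ σ : L →ₐ[F] Ω, algebraMap E Ω (a i) * σ (DL (y i) / y i) := fun i => by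
      rw [hlogN, Finset.mul_sum]
    rw [Finset.sum_congr rfl fun i _ => h7 i, Finset.sum_comm]
    refine Finset.sum_eq_zero fun σ _ => ?_
    have := congrArg σ h
    rw [map_sum, map_zero] at this
    rw [← this]
    refine Finset.sum_congr rfl fun i _ => ?_
    rw [map_mul, IsScalarTower.algebraMap_apply E F L, AlgHom.commutes,
      ← IsScalarTower.algebraMap_apply E F Ω]
  have hNpr : ∀ i, algebraMap F Ω (N i) = aeval (algebraMap F Ω t) (p i) / aeval (algebraMap F Ω t) (r i) := by
    intro i
    rw [aeval_algebraMap_apply, aeval_algebraMap_apply, ← map_div₀, ← hpr]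
  have hpΩ : ∀ i, aeval (algebraMap F Ω t) (p i) ≠ 0 := fun i => by
    rw [aeval_algebraMap_apply]; exact (_root_.map_ne_zero _).2 (hp0 i)
  have hrΩ : ∀ i, aeval (algebraMap F Ω t) (r i) ≠ 0 := fun i => by
    rw [aeval_algebraMap_apply]; exact (_root_.map_ne_zero _).2 (hr0 i)
  have hres := residue_sum (algebraMap F Ω t) htΩ (Sum.elim p r) (by rintro (i | i); exacts [hp i, hr i])
    (Sum.elim a (fun i => - a i)) (by
      rw [Fintype.sum_sum_type, ← hsum]
      simp only [Sum.elim_inl, Sum.elim_inr]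
      rw [← Finset.sum_add_distrib]
      refine Finset.sum_congr rfl fun i _ => ?_
      rw [hNpr, Derivation.leibniz_div, hDp, hDp, map_neg]
      have h1 := hpΩ i
      have h2 := hrΩ i
      simp only [smul_eq_mul]
      exact log_aux2 _ _ _ _ _ h1 h2)
  refine ⟨fun i => (p i).natDegree - (r i).natDegree, ?_, ?_⟩
  · rw [Fintype.sum_sum_type] at hres
    simp only [Sum.elim_inl, Sum.elim_inr] at hres
    rw [← hres, ← Finset.sum_add_distrib]
    refine Finset.sum_congr rfl fun i _ => ?_
    push_cast; ring
  · intro q hq hzero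
    have hgr : ∀ i, (Units.mk0 (N i) (hN0 i), Multiplicative.ofAdd (((p i).natDegree : ℤ) - (r i).natDegree))
        ∈ degGraph t htF := by
      intro i
      refine ⟨p i, r i, hp i, hr i, ?_, rfl⟩
      simp only [Units.val_mk0]
      rw [hpr, div_mul_cancel₀ _ (hr0 i)]
    have hprod := Subgroup.prod_mem (degGraph t htF) (t := Finset.univ) fun i _ =>
      Subgroup.zpow_mem _ (hgr i) (q i)
    have h1 : ∏ i, (Units.mk0 (N i) (hN0 i)) ^ q i =
        Units.mk0 (t ^ Module.finrank F L) (pow_ne_zero _ ht0) := by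
      have h2 : ∏ i, (Units.mk0 (N i) (hN0 i)) ^ q i = Units.map (Algebra.norm F) (∏ i, y i ^ q i) := by
        rw [map_prod]
        refine Finset.prod_congr rfl fun i _ => ?_
        rw [map_zpow]
        congr 1
        ext; rfl
      rw [h2]
      ext
      rw [Units.coe_map, hq, Units.val_mk0]
      exact Algebra.norm_algebraMap t
    have h3 : (∏ i, (Units.mk0 (N i) (hN0 i), Multiplicative.ofAdd (((p i).natDegree : ℤ) - (r i).natDegree)) ^ q i)
      = (Units.mk0 (t ^ Module.finrank F L) (pow_ne_zero _ ht0), Multiplicative.ofAdd (0 : ℤ)) := by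
      refine Prod.ext ?_ ?_
      · rw [Prod.fst_prod, ← h1]; rfl
      · rw [Prod.snd_prod, ← hzero]
        apply Multiplicative.toAdd.injective
        rw [toAdd_prod, toAdd_ofAdd]
        refine Finset.sum_congr rfl fun i _ => ?_
        simp
    rw [h3] at hprod
    have hpow : (Units.mk0 (t ^ Module.finrank F L) (pow_ne_zero _ ht0),
        Multiplicative.ofAdd (Module.finrank F L : ℤ)) ∈ degGraph t htF :=
      ⟨X ^ Module.finrank F L, 1, pow_ne_zero _ X_ne_zero, one_ne_zero, by simp, by simp⟩
    have h4 := Subgroup.mul_mem _ hpow (Subgroup.inv_mem _ hprod)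
    rw [Prod.inv_mk, Prod.mk_mul_mk, mul_inv_cancel, ofAdd_zero, inv_one, mul_one] at h4
    have h5 := degGraph_unique t htF _ h4
    have h6 : 0 < Module.finrank F L := Module.finrank_pos
    omega

open Polynomial in
theorem lemmaR {k K ι : Type*} [Field k] [Field K] [CharZero K] [Algebra k K] [Fintype ι]
    (hk : ∀ x : K, IsAlgebraic k x → x ∈ (algebraMap k K).range)
    (y : ι → Kˣ) (a : ι → k)
    (h : ∀ E : Derivation k K K, ∑ i, algebraMap k K (a i) * (E (y i) / y i) = 0)
    (lam : k →+ ℚ) (q : ι → ℤ) (hq : ∀ i, lam (a i) = q i) :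
    ((∏ i, y i ^ q i : Kˣ) : K) ∈ (algebraMap k K).range := by
  classical
  by_contra hcon
  obtain ⟨t, htdef⟩ : ∃ t : Kˣ, t = ∏ i, y i ^ q i := ⟨_, rfl⟩
  rw [← htdef] at hcon
  have ht : Transcendental k (t : K) := fun h' => hcon (hk _ h')
  obtain ⟨E, hE⟩ := exists_const_field (t : K) ht
  have hCE : CharZero E := (algebraMap E K).charZero
  let F0 : IntermediateField E K := IntermediateField.adjoin E {(t : K)}
  have hF0 : Algebra.IsAlgebraic F0 K := by
    have := hE.isAlgebraic_field
    rwa [Set.range_const] at this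
  let Lf : IntermediateField F0 K := IntermediateField.adjoin F0 (Set.range fun i => (y i : K))
  have hfin : FiniteDimensional F0 Lf :=
    IntermediateField.finiteDimensional_adjoin fun x _ => (hF0.isAlgebraic x).isIntegral
  have hyL : ∀ i, (y i : K) ∈ Lf := fun i => IntermediateField.subset_adjoin _ _ ⟨i, rfl⟩
  have htF : (t : K) ∈ F0 := IntermediateField.mem_adjoin_simple_self _ _
  let t0 : F0 := ⟨t, htF⟩
  let tL : Lf := algebraMap F0 Lf t0
  have hT : IsScalarTower E Lf K := IsScalarTower.of_algebraMap_eq' rfl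
  have hT2 : IsScalarTower E F0 Lf := IsScalarTower.of_algebraMap_eq' rfl
  have hb0 : IsTranscendenceBasis E (fun _ : Unit => t0) :=
    IsTranscendenceBasis.of_comp_algebraMap (A' := K) (by exact hE)
  have hbL : IsTranscendenceBasis E (fun _ : Unit => tL) :=
    IsTranscendenceBasis.of_comp_algebraMap (A' := K) (by exact hE)
  obtain ⟨D, hD⟩ := exists_derivation hE (fun _ => 1)
  obtain ⟨DL, hDL⟩ := exists_derivation hbL (fun _ => 1)
  replace hD := hD ()
  replace hDL := hDL ()
  have hmem : ∀ z : F0, ∃ p r : E[X], z = aeval t0 p / aeval t0 r := by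
    intro z
    obtain ⟨p, r, hpr⟩ := (IntermediateField.mem_adjoin_simple_iff E (z : K)).1 z.2
    refine ⟨p, r, (algebraMap F0 K).injective ?_⟩
    rw [map_div₀, ← aeval_algebraMap_apply, ← aeval_algebraMap_apply]
    exact hpr
  have hDD : ∀ z : Lf, D z = (DL z : K) := by
    intro z
    exact comm_der (F := F0) (Algebra.IsAlgebraic.of_finite F0 Lf) t0 hmem DL hDL D (IsScalarTower.toAlgHom E Lf K) hD z
  let yL : ι → Lfˣ := fun i => Units.mk0 ⟨y i, hyL i⟩ (fun h0 => (y i).ne_zero (congrArg Subtype.val h0))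
  obtain ⟨v, hv, hv2⟩ := normR t0 hb0 hmem yL (fun i => algebraMap k E (a i)) DL hDL (by
    apply (algebraMap Lf K).injective
    rw [map_zero, ← h (D.restrictScalars k), map_sum]
    refine Finset.sum_congr rfl fun i _ => ?_
    rw [map_mul, map_div₀]
    congr 1
    congr 1
    exact (hDD _).symm)
  refine hv2 q ?_ ?_
  · apply (algebraMap Lf K).injective
    have h1 : Units.map ((algebraMap Lf K : Lf →+* K) : Lf →* K) (∏ i, yL i ^ q i) = t := by
      rw [htdef, map_prod]
      refine Finset.prod_congr rfl fun i _ => ?_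
      rw [map_zpow]
      congr 1
      ext; rfl
    exact congrArg Units.val h1
  · have h1 : ∑ i, a i * (v i : k) = 0 := by
      apply (algebraMap k E).injective
      rw [map_zero, ← hv, map_sum]
      refine Finset.sum_congr rfl fun i _ => ?_
      rw [map_mul, map_intCast]
    have h2 := congrArg lam h1
    rw [map_sum, map_zero] at h2
    have h3 : ∀ i, lam (a i * (v i : k)) = ((q i * v i : ℤ) : ℚ) := by
      intro i
      rw [mul_comm, ← zsmul_eq_mul, map_zsmul, hq, zsmul_eq_mul]; push_cast; ring
    rw [Finset.sum_congr rfl fun i _ => h3 i] at h2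
    exact_mod_cast h2

/-- A nonzero tuple in a field of characteristic zero is mapped to a nonzero integral tuple by an
additive functional. -/
theorem exists_lam {k ι : Type*} [Field k] [CharZero k] [Fintype ι] (a : ι → k) (i0 : ι)
    (h : a i0 ≠ 0) : ∃ (lam : k →+ ℚ) (q : ι → ℤ), (∀ i, lam (a i) = q i) ∧ q i0 ≠ 0 := by
  classical
  have h1 : ¬ ∀ φ : Module.Dual ℚ k, φ (a i0) = 0 := fun h' =>
    h ((Module.forall_dual_apply_eq_zero_iff ℚ (a i0)).1 h')
  push Not at h1
  obtain ⟨φ, hφ⟩ := h1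
  let N : ℕ := ∏ i, (φ (a i)).den
  have hN : N ≠ 0 := Finset.prod_ne_zero_iff.2 fun i _ => (φ (a i)).den_nz
  have h2 : ∀ i, ∃ z : ℤ, (N : ℚ) * φ (a i) = z := by
    intro i
    obtain ⟨c, hc⟩ : (φ (a i)).den ∣ N := Finset.dvd_prod_of_mem (fun i => (φ (a i)).den) (Finset.mem_univ i)
    refine ⟨c * (φ (a i)).num, ?_⟩
    rw [hc]
    push_cast
    rw [mul_comm ((φ (a i)).den : ℚ), mul_assoc, Rat.den_mul_eq_num]
  choose q hq using h2
  refine ⟨(AddMonoidHom.mulLeft (N : ℚ)).comp φ.toAddMonoidHom, q, fun i => hq i, ?_⟩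
  intro h0
  have := hq i0
  rw [h0, Int.cast_zero] at this
  exact (mul_ne_zero (Nat.cast_ne_zero.2 hN) hφ) this

theorem thmA_step2 {k K κ : Type*} [Field k] [Field K] [Algebra k K] [Fintype κ]
    (DD : Set (Derivation k K K))
    (hconst : ∀ x : K, (∀ D ∈ DD, D x = 0) → x ∈ (algebraMap k K).range)
    (R : Submodule K (κ → K)) (hR : ∀ D ∈ DD, ∀ f ∈ R, (fun j => D (f j)) ∈ R)
    (hne : ∃ f ∈ R, f ≠ 0) : ∃ f : κ → k, (fun j => algebraMap k K (f j)) ∈ R ∧ f ≠ 0 := by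
  classical
  let S : (κ → K) → ℕ := fun f => (Finset.univ.filter fun j => f j ≠ 0).card
  have hex : ∃ n, ∃ f ∈ R, f ≠ 0 ∧ S f = n := by
    obtain ⟨f, h1, h2⟩ := hne
    exact ⟨_, f, h1, h2, rfl⟩
  obtain ⟨f, hf, hf0, hS⟩ := Nat.find_spec hex
  have hmin : ∀ g ∈ R, g ≠ 0 → S f ≤ S g := fun g hg hg0 => by
    rw [hS]; exact Nat.find_min' hex ⟨g, hg, hg0, rfl⟩
  obtain ⟨j0, hj0⟩ := Function.ne_iff.1 hf0
  simp only [Pi.zero_apply] at hj0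
  let g : κ → K := (f j0)⁻¹ • f
  have hg : g ∈ R := R.smul_mem _ hf
  have hgj0 : g j0 = 1 := by simp [g, hj0]
  have hDg : ∀ D ∈ DD, ∀ j, D (g j) = 0 := by
    intro D hD
    by_contra hcon
    have h1 : (fun j => D (g j)) ≠ 0 := fun h0 => hcon fun j => congrFun h0 j
    have h2 := hmin _ (hR D hD g hg) h1
    have h3 : S (fun j => D (g j)) < S f := by
      apply Finset.card_lt_card
      refine (Finset.ssubset_iff_of_subset ?_).2 ⟨j0, by simpa using hj0, by simp [hgj0]⟩
      intro j hj
      simp only [Finset.mem_filter, Finset.mem_univ, true_and] at hj ⊢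
      intro h0
      exact hj (by simp [g, h0])
    omega
  choose c hc using fun j => hconst (g j) fun D hD => hDg D hD j
  refine ⟨c, ?_, ?_⟩
  · rw [show (fun j => algebraMap k K (c j)) = g from funext hc]; exact hg
  · intro h0
    have := hc j0
    rw [h0, hgj0] at this
    simp at this

theorem exists_dep {K X α γ : Type*} [Field K] [AddCommGroup X] [Module K X] [Fintype α] [Fintype γ]
    (v : α → X) (θ : γ → X) (h : ∀ i, v i ∈ Submodule.span K (Set.range θ))
    (hcard : Fintype.card γ < Fintype.card α) :
    ∃ g : α → K, ∑ i, g i • v i = 0 ∧ ∃ i, g i ≠ 0 := by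
  classical
  by_contra hcon
  push Not at hcon
  have hli : LinearIndependent K v := Fintype.linearIndependent_iff.2 hcon
  have h1 := hli
  rw [linearIndependent_iff_card_eq_finrank_span] at h1
  have h2 : Set.finrank K (Set.range v) ≤ Set.finrank K (Set.range θ) := by
    haveI : FiniteDimensional K (Submodule.span K (Set.range θ)) :=
      FiniteDimensional.span_of_finite K (Set.finite_range _)
    exact Submodule.finrank_mono (Submodule.span_le.2 (by rintro _ ⟨i, rfl⟩; exact h i))
  have h3 := finrank_range_le_card (R := K) θ
  omega

theorem thmA_step1 {K W κ β γ : Type*} [Field K] [AddCommGroup W] [Module K W]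
    [Fintype κ] [Fintype β] [Fintype γ] (η : κ → W →ₗ[K] K) (ε : β → W →ₗ[K] K) (θ : γ → W →ₗ[K] K)
    (h1 : ∀ E, (∀ s, θ s E = 0) → ∀ j, η j E = 0) (h2 : ∀ E, (∀ s, θ s E = 0) → ∀ j, ε j E = 0)
    (hcard : Fintype.card γ < Fintype.card κ + Fintype.card β) :
    ∃ (f : κ → K) (g : β → K), (f ≠ 0 ∨ g ≠ 0) ∧ ∀ E, ∑ j, f j * η j E + ∑ s, g s * ε s E = 0 := by
  classical
  have hV : ∀ l : W →ₗ[K] K, (∀ E, (∀ s, θ s E = 0) → l E = 0) →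
      l ∈ Submodule.span K (Set.range θ) := by
    intro l hl
    apply mem_span_of_iInf_ker_le_ker
    intro E hE
    simp only [Submodule.mem_iInf, LinearMap.mem_ker] at hE ⊢
    exact hl E hE
  obtain ⟨g, hg, x0, hx0⟩ := exists_dep (K := K) (Sum.elim η ε) θ (by
    rintro (j | s)
    · exact hV _ fun E hE => h1 E hE j
    · exact hV _ fun E hE => h2 E hE s) (by rwa [Fintype.card_sum])
  refine ⟨fun j => g (Sum.inl j), fun s => g (Sum.inr s), ?_, fun E => ?_⟩
  · rcases x0 with j | s
    · exact Or.inl fun h => hx0 (congrFun h j)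
    · exact Or.inr fun h => hx0 (congrFun h s)
  · have h1 := LinearMap.congr_fun hg E
    rw [Fintype.sum_sum_type, LinearMap.add_apply, LinearMap.sum_apply, LinearMap.sum_apply] at h1
    exact h1

set_option maxHeartbeats 400000 in
theorem thmA {k K ι κ β γ : Type*} [Field k] [Field K] [CharZero K] [Algebra k K]
    [Fintype ι] [Fintype κ] [Fintype β] [Fintype γ] [DecidableEq β]
    (DD : Set (Derivation k K K))
    (hconst : ∀ x : K, (∀ D ∈ DD, D x = 0) → x ∈ (algebraMap k K).range)
    (y : ι → Kˣ) (m : κ → ι → k) (hm : LinearIndependent k m)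
    (hmD : ∀ j, ∀ D ∈ DD, ∑ i, algebraMap k K (m j i) * (D (y i) / y i) = 0)
    (b : β → ι) (hb : ∀ s : β, ∃ D ∈ DD, ∀ s' : β, D (y (b s')) = if s' = s then 1 else 0)
    (c : γ → ι) (hc : ∀ E : Derivation k K K, (∀ s, E (y (c s)) = 0) → ∀ i, E (y i) = 0)
    (hcard : Fintype.card γ < Fintype.card κ + Fintype.card β) :
    ∃ q : ι → ℤ, q ≠ 0 ∧ ((∏ i, y i ^ q i : Kˣ) : K) ∈ (algebraMap k K).range := by
  classical
  have hCk : CharZero k := (algebraMap k K).charZero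
  let ev : K → (Derivation k K K →ₗ[K] K) := fun x =>
    { toFun := fun E => E x, map_add' := fun _ _ => rfl, map_smul' := fun _ _ => rfl }
  have hev : ∀ x E, ev x E = E x := fun _ _ => rfl
  let η : κ → (Derivation k K K →ₗ[K] K) := fun j => ∑ i, (algebraMap k K (m j i) / y i) • ev (y i)
  have hη : ∀ j E, η j E = ∑ i, algebraMap k K (m j i) * (E (y i) / y i) := by
    intro j E
    simp only [η, LinearMap.sum_apply, LinearMap.smul_apply, hev, smul_eq_mul]
    exact Finset.sum_congr rfl fun i _ => by ring
  clear_value η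
  obtain ⟨f1, g1, hfg, hgE⟩ := thmA_step1 η (fun s : β => ev (y (b s))) (fun s : γ => ev (y (c s)))
    (fun E hE j => by
      rw [hη]
      exact Finset.sum_eq_zero fun i _ => by rw [hc E hE i, zero_div, mul_zero])
    (fun E hE s => hc E hE _) hcard
  simp only [hev] at hgE
  have hηD : ∀ j, ∀ D ∈ DD, η j D = 0 := fun j D hD => by rw [hη]; exact hmD j D hD
  have hgr : ∀ s, g1 s = 0 := by
    intro s
    obtain ⟨D, hD, hD'⟩ := hb s
    have h1 := hgE D
    rw [Finset.sum_eq_zero (fun j _ => by rw [hηD j D hD, mul_zero]), zero_add] at h1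
    simpa [hD'] using h1
  let R : Submodule K (κ → K) :=
    { carrier := {f | ∀ E : Derivation k K K, ∑ j, f j * η j E = 0}
      zero_mem' := by intro E; simp
      add_mem' := by
        intro f f' hf hf' E
        simp only [Pi.add_apply, add_mul, Finset.sum_add_distrib]
        rw [hf E, hf' E, add_zero]
      smul_mem' := by
        intro r f hf E
        simp only [Pi.smul_apply, smul_eq_mul, mul_assoc]
        rw [← Finset.mul_sum, hf E, mul_zero] }
  have hcomm : ∀ j, ∀ D ∈ DD, ∀ E, D (η j E) = η j ⁅D, E⁆ := by
    intro j D hD E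
    have h0 : E (η j D) = 0 := by rw [hηD j D hD, map_zero]
    have h1 : D (η j E) - E (η j D) = η j ⁅D, E⁆ := by
      rw [hη, hη, hη, map_sum, map_sum, ← Finset.sum_sub_distrib]
      refine Finset.sum_congr rfl fun i _ => ?_
      have hy := (y i).ne_zero
      simp only [Derivation.leibniz, Derivation.leibniz_div, Derivation.map_algebraMap, smul_eq_mul,
        Derivation.commutator_apply]
      field_simp
      ring
    rw [← h1, h0, sub_zero]
  obtain ⟨f, hfR, hf0⟩ := thmA_step2 DD hconst R (by
    intro D hD f hf E
    have h1 : D (∑ j, f j * η j E) = 0 := by rw [hf E, map_zero]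
    rw [map_sum] at h1
    have h2 : ∀ j, D (f j * η j E) = f j * η j ⁅D, E⁆ + D (f j) * η j E := by
      intro j
      rw [Derivation.leibniz, smul_eq_mul, smul_eq_mul, hcomm j D hD, mul_comm (η j E)]
    rw [Finset.sum_congr rfl fun j _ => h2 j, Finset.sum_add_distrib, hf ⁅D, E⁆, zero_add] at h1
    exact h1) ⟨f1, by
      intro E
      have := hgE E
      rwa [Finset.sum_eq_zero (s := Finset.univ) (f := fun s => g1 s * E (y (b s)))
        (fun s _ => by rw [hgr s, zero_mul]), add_zero] at this, by
      intro h0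
      rcases hfg with h | h
      · exact h h0
      · exact h (funext hgr)⟩
  let a : ι → k := ∑ j, f j • m j
  have ha : a ≠ 0 := by
    intro h0
    exact hf0 (funext fun j => Fintype.linearIndependent_iff.1 hm f h0 j)
  obtain ⟨i0, hi0⟩ := Function.ne_iff.1 ha
  obtain ⟨lam, q, hq, hq0⟩ := exists_lam a i0 hi0
  refine ⟨q, fun h0 => hq0 (congrFun h0 i0), lemmaR ?_ y a ?_ lam q hq⟩
  · intro x hx
    apply hconst
    intro D _
    exact twisted_unique (RingHom.id K) (D : K →+ K) (fun a b => by simp) (F := k)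
      (fun c => D.map_algebraMap c) x hx
  · intro E
    rw [← hfR E]
    simp only [hη, Finset.mul_sum]
    rw [Finset.sum_comm]
    refine Finset.sum_congr rfl fun i _ => ?_
    simp only [a, Finset.sum_apply, Pi.smul_apply, smul_eq_mul, map_sum, map_mul, Finset.sum_mul]
    exact Finset.sum_congr rfl fun j _ => by ring

theorem lattice_lemma {ι : Type*} [Fintype ι] (Λ : AddSubgroup (ι → ℤ)) :
    ∃ J : Finset ι, (∀ q ∈ Λ, (∀ i, i ∉ J → q i = 0) → q = 0) ∧
      ∃ m : ι → ι → ℤ, ∀ j, j ∉ J → m j ∈ Λ ∧ m j j ≠ 0 ∧ ∀ j', j' ∉ J → j' ≠ j → m j j' = 0 := by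
  classical
  let S : Finset (Finset ι) := Finset.univ.filter fun J => ∀ q ∈ Λ, (∀ i, i ∉ J → q i = 0) → q = 0
  have hS : ∀ J, J ∈ S ↔ ∀ q ∈ Λ, (∀ i, i ∉ J → q i = 0) → q = 0 := fun J => by simp [S]
  obtain ⟨J, hJ, hmax⟩ := Finset.exists_max_image S Finset.card
    ⟨∅, (hS _).2 fun q _ h => funext fun i => h i (Finset.notMem_empty i)⟩
  have hex : ∀ j, ∃ m : ι → ℤ, j ∉ J → m ∈ Λ ∧ m j ≠ 0 ∧ ∀ j', j' ∉ J → j' ≠ j → m j' = 0 := by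
    intro j
    by_cases hj : j ∈ J
    · exact ⟨0, fun h => absurd hj h⟩
    have h1 : insert j J ∉ S := fun h => by
      have := hmax _ h
      rw [Finset.card_insert_of_notMem hj] at this
      omega
    rw [hS] at h1
    push Not at h1
    obtain ⟨q, hq, hq1, hq2⟩ := h1
    refine ⟨q, fun _ => ⟨hq, fun h0 => hq2 ((hS J).1 hJ q hq fun i hi => ?_), fun j' hj' hne =>
      hq1 j' (by simp [hne, hj'])⟩⟩
    by_cases hij : i = j
    · rw [hij, h0]
    · exact hq1 i (by simp [hij, hi])
  choose m hm using hex
  exact ⟨J, (hS J).1 hJ, m, hm⟩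

/-- The field of constants of a set of derivations. -/
def constF {K R : Type*} [Field K] [CommRing R] [Algebra R K] (S : Set (Derivation R K K)) : Subfield K where
  carrier := {z | ∀ D ∈ S, D z = 0}
  mul_mem' := by intro a b ha hb D hD; rw [Derivation.leibniz, ha D hD, hb D hD, smul_zero, smul_zero, add_zero]
  add_mem' := by intro a b ha hb D hD; rw [map_add, ha D hD, hb D hD, add_zero]
  one_mem' := by intro D hD; exact D.map_one_eq_zero
  zero_mem' := by intro D hD; exact map_zero D
  neg_mem' := by intro a ha D hD; rw [map_neg, ha D hD, neg_zero]
  inv_mem' := by intro a ha D hD; rw [Derivation.leibniz_inv, ha D hD, smul_zero]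

theorem mem_constF {K R : Type*} [Field K] [CommRing R] [Algebra R K] (S : Set (Derivation R K K)) (x : K) :
    x ∈ constF S ↔ ∀ D ∈ S, D x = 0 := Iff.rfl

theorem constF_alg {K R : Type*} [Field K] [CharZero K] [CommRing R] [Algebra R K]
    (S : Set (Derivation R K K)) (x : K) (hx : IsAlgebraic (constF S) x) : x ∈ constF S := by
  intro D hD
  exact twisted_unique (RingHom.id K) (D : K →+ K) (fun a b => by simp) (F := constF S)
      (fun c => c.2 D hD) x hx

/-- Algebraic independence bounded via derivations. -/
theorem algind_card_le {K α γ : Type*} [Field K] [CharZero K] [Fintype α] [Fintype γ] (x : α → K)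
    (hx : AlgebraicIndependent ℚ x) (w : γ → K)
    (h : ∀ E : Derivation ℚ K K, (∀ s, E (w s) = 0) → ∀ i, E (x i) = 0) :
    Fintype.card α ≤ Fintype.card γ := by
  classical
  by_contra hcon
  push Not at hcon
  let ev : K → (Derivation ℚ K K →ₗ[K] K) := fun x =>
    { toFun := fun E => E x, map_add' := fun _ _ => rfl, map_smul' := fun _ _ => rfl }
  obtain ⟨f, g, hfg, hE⟩ := thmA_step1 (β := Empty) (fun i => ev (x i)) (fun i => i.elim)
    (fun s => ev (w s)) h (fun _ _ i => i.elim) (by simpa using hcon)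
  rcases hfg with hf | hg
  · apply hf
    funext i
    obtain ⟨D, hD⟩ := exists_derivation_of_algInd hx (fun j => if j = i then 1 else 0)
    have h1 := hE D
    simp only [Finset.univ_eq_empty, Finset.sum_empty, add_zero] at h1
    have h2 : ∀ j, ev (x j) D = if j = i then 1 else 0 := hD
    simpa [h2] using h1
  · exact hg (funext fun i => i.elim)

theorem thmA' {K ι κ β γ : Type*} [Field K] [CharZero K]
    [Fintype ι] [Fintype κ] [Fintype β] [Fintype γ] [DecidableEq β]
    (D0 : Set (Derivation ℤ K K))
    (y : ι → Kˣ) (m : κ → ι → K) (hmk : ∀ j i, m j i ∈ constF D0)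
    (e : κ → ι) (hm1 : ∀ j, m j (e j) ≠ 0) (hm2 : ∀ j j', j' ≠ j → m j (e j') = 0)
    (hmD : ∀ j, ∀ D ∈ D0, ∑ i, m j i * (D (y i) / y i) = 0)
    (b : β → ι) (hb : ∀ s : β, ∃ D ∈ D0, ∀ s' : β, D (y (b s')) = if s' = s then 1 else 0)
    (c : γ → ι) (hc : ∀ i, IsAlgebraic (IntermediateField.adjoin (constF D0) (Set.range fun s => (y (c s) : K))) (y i : K))
    (hcard : Fintype.card γ < Fintype.card κ + Fintype.card β) :
    ∃ q : ι → ℤ, q ≠ 0 ∧ ((∏ i, y i ^ q i : Kˣ) : K) ∈ constF D0 := by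
  classical
  let DD : Set (Derivation (constF D0) K K) := {D | ∃ D' ∈ D0, ∀ x, D x = D' x}
  have hDD : ∀ D' ∈ D0, ∃ D ∈ DD, ∀ x, D x = D' x := by
    intro D' hD'
    refine ⟨⟨{ toFun := D', map_add' := map_add D', map_smul' := ?_ }, ?_, ?_⟩, ⟨D', hD', fun x => rfl⟩, fun x => rfl⟩
    · intro r x
      rw [Algebra.smul_def, Derivation.leibniz, show D' (algebraMap (constF D0) K r) = 0 from r.2 D' hD',
        smul_zero, add_zero]
      rfl
    · exact D'.map_one_eq_zero
    · intro a b
      exact D'.leibniz a b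
  have hCh : CharZero (constF D0) := (algebraMap (constF D0) K).charZero
  obtain ⟨q, hq, hq'⟩ := thmA (κ := κ) (γ := γ) DD (by
    intro x hx
    refine ⟨⟨x, fun D' hD' => ?_⟩, rfl⟩
    obtain ⟨D, hD, h⟩ := hDD D' hD'
    rw [← h, hx D hD]) y (fun j i => ⟨m j i, hmk j i⟩) (by
      rw [Fintype.linearIndependent_iff]
      intro g hg j
      have h1 := congrFun hg (e j)
      simp only [Finset.sum_apply, Pi.smul_apply, smul_eq_mul, Pi.zero_apply] at h1
      rw [Finset.sum_eq_single j (fun j' _ hne => by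
        rw [show (⟨m j' (e j), hmk j' (e j)⟩ : constF D0) = 0 from Subtype.ext (hm2 j' j (Ne.symm hne)), mul_zero])
        (fun h => absurd (Finset.mem_univ _) h)] at h1
      exact (mul_eq_zero.1 h1).resolve_right fun h2 => hm1 j (congrArg Subtype.val h2)) (by
      rintro j D ⟨D', hD', h⟩
      rw [← hmD j D' hD']
      exact Finset.sum_congr rfl fun i _ => by rw [h]; rfl) b (by
      intro s
      obtain ⟨D', hD', h⟩ := hb s
      obtain ⟨D, hD, h'⟩ := hDD D' hD'
      exact ⟨D, hD, fun s' => by rw [h', h]⟩) c (by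
      intro E hE i
      have hEk : ∀ r : constF D0, algebraMap (constF D0) K r ∈ constF {E} := by
        intro r D hD
        rw [Set.mem_singleton_iff.1 hD]
        exact E.map_algebraMap r
      have hadj : IntermediateField.adjoin (constF D0) (Set.range fun s => (y (c s) : K)) ≤
          ({ constF {E} with algebraMap_mem' := hEk } : IntermediateField (constF D0) K) := by
        rw [IntermediateField.adjoin_le_iff]
        rintro _ ⟨s, rfl⟩ D hD
        rw [Set.mem_singleton_iff.1 hD]
        exact hE s
      exact twisted_unique (RingHom.id K) (E : K →+ K) (fun a b => by simp)
        (F := IntermediateField.adjoin (constF D0) (Set.range fun s => (y (c s) : K)))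
        (fun r => hadj r.2 E rfl) (y i) (hc i)) hcard
  refine ⟨q, hq, ?_⟩
  obtain ⟨r, hr⟩ := hq'
  rw [← hr]
  exact r.2

/-- Logarithmic derivative. -/
def logD {K R : Type*} [Field K] [CommRing R] [Algebra R K] (D : Derivation R K K) :
    Kˣ →* Multiplicative K where
  toFun u := Multiplicative.ofAdd (D u / u)
  map_one' := by simp
  map_mul' := by
    intro u v
    rw [← ofAdd_add]
    congr 1
    have h1 := u.ne_zero
    have h2 := v.ne_zero
    rw [Units.val_mul, Derivation.leibniz, smul_eq_mul, smul_eq_mul, log_aux1 _ _ _ _ h1 h2]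

theorem logD_prod {K R ι : Type*} [Field K] [CommRing R] [Algebra R K] [Fintype ι] (D : Derivation R K K)
    (y : ι → Kˣ) (q : ι → ℤ) :
    D ((∏ i, y i ^ q i : Kˣ) : K) / ((∏ i, y i ^ q i : Kˣ) : K) = ∑ i, (q i : K) * (D (y i) / y i) := by
  have h := congrArg Multiplicative.toAdd (map_prod (logD D) (fun i => y i ^ q i) Finset.univ)
  rw [toAdd_prod] at h
  refine h.trans (Finset.sum_congr rfl fun i _ => ?_)
  rw [map_zpow, toAdd_zpow, zsmul_eq_mul]
  rfl

theorem der_torsion {K R : Type*} [Field K] [CharZero K] [CommRing R] [Algebra R K] (D : Derivation R K K)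
    (u : Kˣ) (hu : IsOfFinOrder u) : D (u : K) = 0 := by
  obtain ⟨n, hn, h⟩ := isOfFinOrder_iff_pow_eq_one.1 hu
  have h1 := congrArg Multiplicative.toAdd (congrArg (logD D) h)
  rw [map_pow, map_one, toAdd_pow, toAdd_one] at h1
  have h2 : D (u : K) / u = 0 := (smul_eq_zero.1 h1).resolve_left hn.ne'
  exact (div_eq_zero_iff.1 h2).resolve_right u.ne_zero

/-- The predimension inequality for multiplicatively independent tuples. -/
def Good (K : Type) [Field K] [CharZero K] (U : Subgroup Kˣ) : Prop :=
  ∀ (ι : Type) [Fintype ι] (y : ι → Kˣ), (∀ i, y i ∈ U) →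
    (∀ q : ι → ℤ, IsOfFinOrder (∏ i, y i ^ q i) → q = 0) →
    ∃ B : Finset ι, Fintype.card ι ≤ 2 * B.card ∧
      AlgebraicIndependent ℚ (fun b : B => ((y b : Kˣ) : K))

theorem finOrder_of_zpow {G : Type*} [Group G] {u : G} {q : ℤ} (hq : q ≠ 0) (h : IsOfFinOrder (u ^ q)) :
    IsOfFinOrder u := by
  rw [isOfFinOrder_iff_zpow_eq_one] at h ⊢
  obtain ⟨n, hn, h⟩ := h
  exact ⟨q * n, mul_ne_zero hq hn, by rw [zpow_mul, h]⟩

theorem good_single {K : Type} [Field K] [CharZero K] {U : Subgroup Kˣ} (hU : Good K U) (u : Kˣ)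
    (hu : u ∈ U) (ha : IsAlgebraic ℚ (u : K)) : IsOfFinOrder u := by
  by_contra hcon
  obtain ⟨B, hB, hB2⟩ := hU Unit (fun _ => u) (fun _ => hu) (by
    intro q hq
    simp only [Finset.univ_unique, Finset.prod_singleton] at hq
    by_contra h0
    have h1 : q default ≠ 0 := fun h => h0 (funext fun x => by rw [Unique.eq_default x, h]; rfl)
    exact hcon (finOrder_of_zpow h1 hq))
  have hne : B.Nonempty := by
    rw [← Finset.card_pos]
    simp at hB; omega
  obtain ⟨b, hb⟩ := hne
  exact hB2.transcendental ⟨b, hb⟩ ha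

theorem good_lattice {K : Type} [Field K] [CharZero K] {U : Subgroup Kˣ} (hU : Good K U)
    {ι : Type} [Fintype ι] (y : ι → Kˣ) (hy : ∀ i, y i ∈ U) :
    ∃ (J B : Finset ι) (m : ι → ι → ℤ), J.card ≤ 2 * B.card ∧
      AlgebraicIndependent ℚ (fun b : B => ((y b : Kˣ) : K)) ∧
      ∀ j, j ∉ J → IsOfFinOrder (∏ i, y i ^ m j i) ∧ m j j ≠ 0 ∧
        ∀ j', j' ∉ J → j' ≠ j → m j j' = 0 := by
  classical
  let Λ : AddSubgroup (ι → ℤ) :=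
    { carrier := {q | IsOfFinOrder (∏ i, y i ^ q i)}
      zero_mem' := by simp
      add_mem' := by
        intro a b ha hb
        simp only [Set.mem_setOf_eq, Pi.add_apply, zpow_add, Finset.prod_mul_distrib] at *
        exact ha.mul hb
      neg_mem' := by
        intro a ha
        simp only [Set.mem_setOf_eq, Pi.neg_apply, zpow_neg, Finset.prod_inv_distrib] at *
        exact ha.inv }
  obtain ⟨J, hJ, m, hm⟩ := lattice_lemma Λ
  obtain ⟨B, hB, hB2⟩ := hU J (fun j => y j) (fun j => hy j) (by
    intro q hq
    let q' : ι → ℤ := fun i => if h : i ∈ J then q ⟨i, h⟩ else 0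
    have h1 : q' = 0 := hJ q' (by
      change IsOfFinOrder (∏ i, y i ^ q' i)
      convert hq using 1
      rw [← Finset.prod_subset (Finset.subset_univ J) (fun i _ hi => by simp [q', hi]),
        ← Finset.prod_coe_sort]
      exact Finset.prod_congr rfl fun i _ => by simp [q']) (fun i hi => by simp [q', hi])
    funext j
    have := congrFun h1 j
    simpa [q'] using this)
  refine ⟨J, B.map (Function.Embedding.subtype _), m, by simpa using hB, ?_, fun j hj => hm j hj⟩
  let e : {x // x ∈ B.map (Function.Embedding.subtype _)} → B := fun x =>
    ⟨⟨x, by obtain ⟨z, _, hz⟩ := Finset.mem_map.1 x.2; rw [← hz]; exact z.2⟩, by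
      obtain ⟨z, hz, hz'⟩ := Finset.mem_map.1 x.2
      have h1 : ∀ w : J, (w : ι) = x → w ∈ B := fun w hw => by
        rw [show w = z from Subtype.ext (hw.trans hz'.symm)]; exact hz
      exact h1 _ rfl⟩
  exact hB2.comp e (fun x x' h => Subtype.ext (congrArg (fun z : B => ((z : J) : ι)) h))

theorem exists_ultra {I : Type} (V : Ultrafilter I) (Kf : I → Type) [∀ i, Field (Kf i)] :
    ∃ (K : Type) (_ : Field K) (π : (∀ i, Kf i) →+* K), Function.Surjective π ∧
      ∀ x, π x = 0 ↔ ∀ᶠ i in (V : Filter I), x i = 0 := by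
  classical
  let m : Ideal (∀ i, Kf i) :=
    { carrier := {x | ∀ᶠ i in (V : Filter I), x i = 0}
      zero_mem' := Filter.Eventually.of_forall fun i => rfl
      add_mem' := by
        intro a b ha hb
        filter_upwards [ha, hb] with i h1 h2
        simp [h1, h2]
      smul_mem' := by
        intro c x hx
        filter_upwards [hx] with i h1
        simp [h1] }
  have hm : ∀ x, x ∈ m ↔ ∀ᶠ i in (V : Filter I), x i = 0 := fun x => Iff.rfl
  have hmax : m.IsMaximal := by
    rw [Ideal.isMaximal_iff]
    refine ⟨fun h => ?_, ?_⟩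
    · obtain ⟨i, hi⟩ := ((hm 1).1 h).exists
      exact one_ne_zero hi
    · intro J x hJ hx hxJ
      have h1 : ∀ᶠ i in (V : Filter I), x i ≠ 0 := Ultrafilter.eventually_not.2 hx
      have h2 : 1 - (fun i => (x i)⁻¹) * x ∈ m := by
        rw [hm]
        filter_upwards [h1] with i hi
        simp [hi]
      have h3 := J.add_mem (hJ h2) (J.mul_mem_left (fun i => (x i)⁻¹) hxJ)
      simpa using h3
  exact ⟨_ ⧸ m, Ideal.Quotient.field m, Ideal.Quotient.mk m, Ideal.Quotient.mk_surjective, fun x => by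
    rw [Ideal.Quotient.eq_zero_iff_mem, hm]⟩

theorem exists_uder {I : Type} (V : Ultrafilter I) (Kf : I → Type) [∀ i, Field (Kf i)]
    [∀ i, CharZero (Kf i)] {K : Type} [Field K] (π : (∀ i, Kf i) →+* K) (hs : Function.Surjective π)
    (hπ : ∀ x, π x = 0 ↔ ∀ᶠ i in (V : Filter I), x i = 0) (D : ∀ i, Derivation ℚ (Kf i) (Kf i)) :
    ∃ D' : Derivation ℤ K K, ∀ x, D' (π x) = π (fun i => D i (x i)) := by
  choose s hs' using hs
  have hwd : ∀ x x', π x = π x' → π (fun i => D i (x i)) = π (fun i => D i (x' i)) := by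
    intro x x' h
    rw [← sub_eq_zero, ← map_sub, hπ] at h ⊢
    filter_upwards [h] with i hi
    simp only [Pi.sub_apply] at hi ⊢
    rw [sub_eq_zero.1 hi, sub_self]
  let f : K → K := fun z => π (fun i => D i (s z i))
  have hf : ∀ x, f (π x) = π (fun i => D i (x i)) := fun x => hwd _ _ (hs' _)
  have hadd : ∀ a b, f (a + b) = f a + f b := by
    intro a b
    rw [← hs' a, ← hs' b, ← map_add, hf, hf, hf, ← map_add]
    congr 1
    funext i
    exact map_add (D i) _ _
  let f' : K →+ K := AddMonoidHom.mk' f hadd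
  refine ⟨Derivation.mk' f'.toIntLinearMap ?_, hf⟩
  intro a b
  change f (a * b) = a • f b + b • f a
  rw [← hs' a, ← hs' b, ← map_mul, hf, hf, hf, smul_eq_mul, smul_eq_mul, ← map_mul, ← map_mul, ← map_add]
  congr 1
  funext i
  exact Derivation.leibniz (D i) _ _

theorem max_algind {k K ι : Type*} [CommRing k] [Field K] [Algebra k K] [FaithfulSMul k K] [Fintype ι] (y : ι → K) :
    ∃ C : Finset ι, AlgebraicIndependent k (fun c : C => y c) ∧
      ∀ i, IsAlgebraic (Algebra.adjoin k (y '' (C : Set ι))) (y i) := by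
  classical
  let S : Finset (Finset ι) := Finset.univ.filter fun C => AlgebraicIndepOn k y (C : Set ι)
  have hS : ∀ C, C ∈ S ↔ AlgebraicIndepOn k y (C : Set ι) := fun C => by simp [S]
  obtain ⟨C, hC, hmax⟩ := Finset.exists_max_image S Finset.card
    ⟨∅, (hS _).2 (by
      rw [Finset.coe_empty]
      exact (algebraicIndependent_empty_type_iff (R := k)).2 (FaithfulSMul.algebraMap_injective k K))⟩
  refine ⟨C, (hS C).1 hC, fun i => ?_⟩
  by_contra hcon
  by_cases hi : i ∈ C
  · exact hcon (isAlgebraic_algebraMap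
      (⟨_, Algebra.subset_adjoin ⟨i, hi, rfl⟩⟩ : Algebra.adjoin k (y '' (C : Set ι))))
  · have h1 : insert i C ∈ S := by
      rw [hS, Finset.coe_insert]
      exact ((hS C).1 hC).insert hcon
    have := hmax _ h1
    rw [Finset.card_insert_of_notMem hi] at this
    omega

theorem max_algind_field {k K ι : Type*} [Field k] [Field K] [Algebra k K] [Fintype ι] (y : ι → K) :
    ∃ C : Finset ι, AlgebraicIndependent k (fun c : C => y c) ∧
      ∀ i, IsAlgebraic (IntermediateField.adjoin k (Set.range fun c : C => y c)) (y i) := by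
  obtain ⟨C, h1, h2⟩ := max_algind (k := k) y
  refine ⟨C, h1, fun i => ?_⟩
  have h3 : (Set.range fun c : C => y c) = y '' (C : Set ι) := by
    rw [Set.image_eq_range]; rfl
  rw [h3]
  exact IntermediateField.isAlgebraic_adjoin_iff.2 (h2 i)

theorem zpow_sum_aux {G ι : Type*} [CommGroup G] (u : G) (s : Finset ι) (f : ι → ℤ) :
    u ^ (∑ j ∈ s, f j) = ∏ j ∈ s, u ^ f j := by
  classical
  induction s using Finset.induction_on with
  | empty => simp
  | insert a s ha ih => rw [Finset.sum_insert ha, Finset.prod_insert ha, zpow_add, ih]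

/-- Certificate that all coordinates of `y` are algebraic over those in `C`. -/
def Cert {n : ℕ} (C : Finset (Fin n)) (Q : Fin n → Polynomial (MvPolynomial C ℤ)) (e : Fin n → ℕ)
    {K : Type} [CommRing K] (y : Fin n → K) : Prop :=
  ∀ j, Polynomial.eval₂ (MvPolynomial.eval₂Hom (Int.castRingHom K) (fun c : C => y c)) (y j) (Q j) = 0 ∧
    MvPolynomial.eval₂Hom (Int.castRingHom K) (fun c : C => y c) ((Q j).coeff (e j)) ≠ 0

theorem cert_hom1 {n : ℕ} (C : Finset (Fin n)) (p : MvPolynomial C ℤ)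
    {R S : Type} [CommRing R] [CommRing S] (f : R →+* S) (y : Fin n → R) :
    MvPolynomial.eval₂Hom (Int.castRingHom S) (fun c : C => f (y c)) p =
      f (MvPolynomial.eval₂Hom (Int.castRingHom R) (fun c : C => y c) p) := by
  rw [MvPolynomial.map_eval₂Hom]
  congr 2
  exact RingHom.ext_int _ _

theorem cert_hom2 {n : ℕ} (C : Finset (Fin n)) (Q : Polynomial (MvPolynomial C ℤ)) (j : Fin n)
    {R S : Type} [CommRing R] [CommRing S] (f : R →+* S) (y : Fin n → R) :
    Polynomial.eval₂ (MvPolynomial.eval₂Hom (Int.castRingHom S) (fun c : C => f (y c))) (f (y j)) Q =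
      f (Polynomial.eval₂ (MvPolynomial.eval₂Hom (Int.castRingHom R) (fun c : C => y c)) (y j) Q) := by
  rw [Polynomial.hom_eval₂]
  congr 1
  refine RingHom.ext fun p => ?_
  rw [RingHom.comp_apply, cert_hom1]

theorem cert_der {n : ℕ} (C : Finset (Fin n)) (Q : Fin n → Polynomial (MvPolynomial C ℤ)) (e : Fin n → ℕ)
    {K : Type} [Field K] [CharZero K] (y : Fin n → K) (h : Cert C Q e y) (E : Derivation ℚ K K)
    (hE : ∀ c : C, E (y c) = 0) (j : Fin n) : E (y j) = 0 := by
  have hmem : ∀ p : MvPolynomial C ℤ,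
      MvPolynomial.eval₂Hom (Int.castRingHom K) (fun c : C => y c) p ∈ constF {E} := by
    intro p
    have hy : ∀ c : C, y c ∈ constF {E} := fun c D hD => by
      rw [Set.mem_singleton_iff.1 hD]; exact hE c
    have : MvPolynomial.eval₂Hom (Int.castRingHom K) (fun c : C => y c) p =
      (constF {E}).subtype (MvPolynomial.eval₂Hom (Int.castRingHom (constF {E})) (fun c : C => ⟨y c, hy c⟩) p) := by
      rw [MvPolynomial.map_eval₂Hom]
      congr 2
    rw [this]
    exact Subtype.property _
  let g : MvPolynomial C ℤ →+* constF {E} :=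
    (MvPolynomial.eval₂Hom (Int.castRingHom K) (fun c : C => y c)).codRestrict (constF {E}) hmem
  refine (constF_alg {E} (y j) ⟨(Q j).map g, ?_, ?_⟩) E rfl
  · intro h0
    have h1 := congrArg (fun p => Polynomial.coeff p (e j)) h0
    simp only [Polynomial.coeff_map, Polynomial.coeff_zero] at h1
    exact (h j).2 (congrArg Subtype.val h1)
  · rw [Polynomial.aeval_def, Polynomial.eval₂_map]
    exact (h j).1

set_option maxHeartbeats 1000000 in
theorem ultra_main {I : Type} (V : Ultrafilter I) (Kf : I → Type) [∀ i, Field (Kf i)]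
    [∀ i, CharZero (Kf i)] (U : ∀ i, Subgroup (Kf i)ˣ) (hU : ∀ i, Good (Kf i) (U i)) {n : ℕ}
    (y : ∀ i, Fin n → (Kf i)ˣ) (hy : ∀ i j, y i j ∈ U i)
    (hind : ∀ q : Fin n → ℤ, q ≠ 0 → ∀ᶠ i in (V : Filter I), ∏ j, y i j ^ q j ≠ 1)
    (C : Finset (Fin n)) (Q : Fin n → Polynomial (MvPolynomial C ℤ)) (e : Fin n → ℕ)
    (hcert : ∀ i, Cert C Q e (fun j => (y i j : Kf i))) : n ≤ 2 * C.card := by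
  classical
  obtain ⟨K, hK, π, hsurj, hπ⟩ := exists_ultra V Kf
  have hπeq : ∀ x x', π x = π x' ↔ ∀ᶠ i in (V : Filter I), x i = x' i := by
    intro x x'
    rw [← sub_eq_zero, ← map_sub, hπ]
    simp only [Pi.sub_apply, sub_eq_zero]
  haveI : CharZero K := charZero_of_inj_zero fun m hm => by
    rw [← map_natCast π, hπ] at hm
    obtain ⟨i, hi⟩ := hm.exists
    exact Nat.cast_eq_zero.1 hi
  let Φ : (∀ i, (Kf i)ˣ) →* Kˣ := (Units.map (π : (∀ i, Kf i) →* K)).comp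
    (MulEquiv.piUnits (M := Kf)).symm.toMonoidHom
  have hΦ : ∀ w, ((Φ w : Kˣ) : K) = π (fun i => (w i : Kf i)) := fun w => rfl
  let Y : Fin n → ∀ i, (Kf i)ˣ := fun j i => y i j
  let yK : Fin n → Kˣ := fun j => Φ (Y j)
  have hmon : ∀ q : Fin n → ℤ, ∏ j, yK j ^ q j = Φ (fun i => ∏ j, y i j ^ q j) := by
    intro q
    have : (fun i => ∏ j, y i j ^ q j) = ∏ j, Y j ^ q j := by
      funext i
      rw [Finset.prod_apply]
      rfl
    rw [this, map_prod]
    exact Finset.prod_congr rfl fun j _ => (map_zpow Φ _ _).symm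
  let D0 : Set (Derivation ℤ K K) :=
    {D | ∃ Df : ∀ i, Derivation ℚ (Kf i) (Kf i), ∀ x, D (π x) = π (fun i => Df i (x i))}
  have hk : ∀ a, π a ∈ constF D0 ↔ ∀ᶠ i in (V : Filter I), IsAlgebraic ℚ (a i) := by
    intro a
    constructor
    · intro ha
      by_contra hcon
      rw [← Ultrafilter.eventually_not] at hcon
      have hex : ∀ i, ∃ D : Derivation ℚ (Kf i) (Kf i), ¬ IsAlgebraic ℚ (a i) → D (a i) = 1 := by
        intro i
        by_cases h : IsAlgebraic ℚ (a i)
        · exact ⟨0, fun h' => absurd h h'⟩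
        · obtain ⟨D, hD⟩ := exists_derivation_of_algInd (x := fun _ : Unit => a i)
            (algebraicIndependent_unique_type_iff.2 h) (fun _ => 1)
          exact ⟨D, fun _ => hD ()⟩
      choose Df hDf using hex
      obtain ⟨D, hD⟩ := exists_uder V Kf π hsurj hπ Df
      have h1 := ha D ⟨Df, hD⟩
      rw [hD, hπ] at h1
      obtain ⟨i, h2, h3⟩ := (h1.and hcon).exists
      rw [hDf i h3] at h2
      exact one_ne_zero h2
    · rintro ha D ⟨Df, hD⟩
      rw [hD, hπ]
      filter_upwards [ha] with i hi
      exact twisted_unique (RingHom.id (Kf i)) (Df i : Kf i →+ Kf i) (fun a b => by simp) (F := ℚ)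
        (fun c => (Df i).map_algebraMap c) (a i) hi
  have hkΦ : ∀ w, ((Φ w : Kˣ) : K) ∈ constF D0 ↔ ∀ᶠ i in (V : Filter I), IsAlgebraic ℚ ((w i : Kf i)) :=
    fun w => hk _
  -- the lattice of relations modulo constants
  let Λ : AddSubgroup (Fin n → ℤ) :=
    { carrier := {q | ((∏ j, yK j ^ q j : Kˣ) : K) ∈ constF D0}
      zero_mem' := by simpa using (constF D0).one_mem
      add_mem' := by
        intro a b ha hb
        simp only [Set.mem_setOf_eq, Pi.add_apply, zpow_add, Finset.prod_mul_distrib, Units.val_mul] at *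
        exact (constF D0).mul_mem ha hb
      neg_mem' := by
        intro a ha
        simp only [Set.mem_setOf_eq, Pi.neg_apply, zpow_neg, Finset.prod_inv_distrib, Units.val_inv_eq_inv_val] at *
        exact (constF D0).inv_mem ha }
  obtain ⟨J, hJ, r, hr⟩ := lattice_lemma Λ
  -- torsion part
  let z : ∀ i, {j // j ∉ J} → (Kf i)ˣ := fun i j => ∏ l, y i l ^ r j l
  have hzU : ∀ i j, z i j ∈ U i := fun i j =>
    Subgroup.prod_mem _ fun l _ => Subgroup.zpow_mem _ (hy i l) _
  have hzt : ∀ᶠ i in (V : Filter I), ∀ j, IsOfFinOrder (z i j) := by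
    rw [Filter.eventually_all]
    intro j
    have h1 : ((∏ l, yK l ^ r j l : Kˣ) : K) ∈ constF D0 := (hr j j.2).1
    rw [hmon, hkΦ] at h1
    filter_upwards [h1] with i hi
    exact good_single (hU i) _ (hzU i j) hi
  let ζ : {j // j ∉ J} → K := fun j => π (fun i => (z i j : Kf i))
  have hζ : AlgebraicIndependent ℚ ζ := by
    rw [algebraicIndependent_iff]
    intro P hP
    by_contra hP0
    obtain ⟨F, hF0, hF⟩ := torsion_rel P hP0
    have h1 : MvPolynomial.aeval ζ P = π (MvPolynomial.aeval (fun j i => (z i j : Kf i)) P) := by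
      have := MvPolynomial.comp_aeval_apply (f := fun j i => (z i j : Kf i)) π.toRatAlgHom P
      exact this.symm
    rw [h1, hπ] at hP
    have h2 : ∀ᶠ i in (V : Filter I), ∃ q ∈ (F : Set ({j // j ∉ J} → ℤ)), ∏ j, z i j ^ q j = 1 := by
      filter_upwards [hP, hzt] with i hi1 hi2
      refine hF (Kf i) (z i) hi2 ?_
      rw [← hi1]
      exact (MvPolynomial.comp_aeval_apply (f := fun j i => (z i j : Kf i)) (Pi.evalAlgHom ℚ Kf i) P).symm
    rw [Ultrafilter.eventually_exists_mem_iff F.finite_toSet] at h2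
    obtain ⟨q, hqF, hq⟩ := h2
    let t : Fin n → ℤ := fun l => ∑ j : {j // j ∉ J}, q j * r j l
    have ht : t ≠ 0 := by
      intro h0
      apply hF0
      have : q = 0 := by
        funext j
        have h3 := congrFun h0 j
        simp only [t, Pi.zero_apply] at h3
        rw [Finset.sum_eq_single j (fun j' _ hne => by
          rw [(hr j' j'.2).2.2 j j.2 (fun h => hne (Subtype.ext h.symm)), mul_zero])
          (fun h => absurd (Finset.mem_univ _) h)] at h3
        exact (mul_eq_zero.1 h3).resolve_right (hr j j.2).2.1
      rw [← this]; exact hqF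
    obtain ⟨i, h3, h4⟩ := (hq.and (hind t ht)).exists
    apply h4
    rw [← h3]
    simp only [t, z]
    simp only [zpow_sum_aux, ← Finset.prod_zpow]
    rw [Finset.prod_comm]
    refine Finset.prod_congr rfl fun j _ => Finset.prod_congr rfl fun l _ => ?_
    rw [mul_comm, zpow_mul]
  -- transcendental part
  obtain ⟨C', hC'1, hC'2⟩ := max_algind_field (k := constF D0) (fun j : J => (yK j : K))
  have hJC : J.card ≤ 2 * C'.card := by
    by_contra hcon
    choose J1 B m hJ1 hB hm using fun i => good_lattice (hU i) (fun j : J => y i j) (fun j => hy i j)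
    obtain ⟨⟨J0, B0⟩, -, hJB⟩ := (Ultrafilter.eventually_exists_mem_iff
      (f := V) (is := (Set.univ : Set (Finset J × Finset J))) (P := fun a i => J1 i = a.1 ∧ B i = a.2)
      Set.finite_univ).1 (Filter.Eventually.of_forall fun i => ⟨(J1 i, B i), trivial, rfl, rfl⟩)
    simp only at hJB
    have hcardJ : J0.card ≤ 2 * B0.card := by
      obtain ⟨i, h1, h2⟩ := hJB.exists
      rw [← h1, ← h2]; exact hJ1 i
    have hlogK : ∀ Df : ∀ i, Derivation ℚ (Kf i) (Kf i), ∀ D : Derivation ℤ K K,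
        (∀ x, D (π x) = π (fun i => Df i (x i))) → ∀ j : J,
        D (yK j) / yK j = π (fun i => Df i (y i j) / (y i j : Kf i)) := by
      intro Df D hD j
      rw [div_eq_iff (yK j).ne_zero, hΦ, hD, ← map_mul]
      congr 1
      funext i
      exact (div_mul_cancel₀ _ (y i j).ne_zero).symm
    obtain ⟨q, hq, hqk⟩ := thmA' (κ := {j // j ∉ J0}) (β := B0) (γ := C') D0 (fun j : J => yK j)
      (fun j l => π (fun i => (m i j l : Kf i)))
      (by
        intro j l
        rw [hk]
        exact Filter.Eventually.of_forall fun i => isAlgebraic_int _)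
      (fun j => j)
      (by
        intro j h0
        rw [hπ] at h0
        obtain ⟨i, h1, h2, h3⟩ := (h0.and hJB).exists
        exact (hm i j (by rw [h2]; exact j.2)).2.1 (by exact_mod_cast h1))
      (by
        intro j j' hne
        rw [hπ]
        filter_upwards [hJB] with i hi
        rw [(hm i j (by rw [hi.1]; exact j.2)).2.2 j' (by rw [hi.1]; exact j'.2)
          (fun h => hne (Subtype.ext h)), Int.cast_zero])
      (by
        rintro j D ⟨Df, hD⟩
        simp only [hlogK Df D hD]
        simp only [← map_mul]
        rw [← map_sum, hπ]
        filter_upwards [hJB] with i hi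
        have h1 := (hm i j (by rw [hi.1]; exact j.2)).1
        have h2 := logD_prod (Df i) (fun l : J => y i l) (m i j)
        rw [der_torsion (Df i) _ h1, zero_div] at h2
        rw [Finset.sum_apply, h2]
        rfl)
      (fun b => b)
      (by
        intro s
        have hex : ∀ i, ∃ D : Derivation ℚ (Kf i) (Kf i), ∀ b : B i, D (y i b) = if (b : J) = s then 1 else 0 :=
          fun i => exists_derivation_of_algInd (hB i) _
        choose Df hDf using hex
        obtain ⟨D, hD⟩ := exists_uder V Kf π hsurj hπ Df
        refine ⟨D, ⟨Df, hD⟩, fun s' => ?_⟩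
        have h1 : (if s' = s then (1 : K) else 0) = π (fun i => if s' = s then 1 else 0) := by
          split_ifs
          · exact (map_one π).symm
          · exact (map_zero π).symm
        rw [h1, hΦ, hD, hπeq]
        filter_upwards [hJB] with i hi
        have h2 := hDf i ⟨s', by rw [hi.2]; exact s'.2⟩
        simp only [Subtype.coe_inj] at h2
        exact h2)
      (fun c => c) hC'2
      (by
        rw [Fintype.card_subtype_compl]
        simp only [Fintype.card_coe]
        have : J0.card ≤ J.card := by simpa using Finset.card_le_univ J0
        omega)
    apply hq
    let q' : Fin n → ℤ := fun i => if h : i ∈ J then q ⟨i, h⟩ else 0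
    have h1 : q' = 0 := hJ q' (by
      change ((∏ i, yK i ^ q' i : Kˣ) : K) ∈ constF D0
      convert hqk using 2
      rw [← Finset.prod_subset (Finset.subset_univ J) (fun i _ hi => by simp [q', hi]),
        ← Finset.prod_coe_sort]
      exact Finset.prod_congr rfl fun i _ => by simp [q']) (fun i hi => by simp [q', hi])
    funext j
    have := congrFun h1 j
    simpa [q'] using this
  -- conclusion
  have hζk : Set.range ζ ⊆ Set.range (algebraMap (constF D0) K) := by
    rintro _ ⟨j, rfl⟩
    have h1 : ((∏ l, yK l ^ r j l : Kˣ) : K) ∈ constF D0 := (hr j j.2).1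
    rw [hmon] at h1
    exact ⟨⟨_, h1⟩, rfl⟩
  haveI : CharZero (constF D0) := (algebraMap (constF D0) K).charZero
  have hall := AlgebraicIndependent.sumElim_of_tower hζ hζk hC'1
  have hcertK : Cert C Q e (fun j => (yK j : K)) := by
    intro j
    constructor
    · rw [show (fun j => (yK j : K)) = fun j => π (fun i => (y i j : Kf i)) from rfl]
      simp only
      rw [cert_hom2 C (Q j) j π (fun j i => (y i j : Kf i)), hπ]
      filter_upwards with i
      rw [← (hcert i j).1]
      exact (cert_hom2 C (Q j) j (Pi.evalRingHom Kf i) (fun j i => (y i j : Kf i))).symm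
    · rw [show (fun c : C => (yK c : K)) = fun c : C => π ((fun j i => (y i j : Kf i)) c) from rfl]
      rw [cert_hom1 C _ π (fun j i => (y i j : Kf i)), ne_eq, hπ]
      intro hev
      obtain ⟨i, hi⟩ := hev.exists
      apply (hcert i j).2
      rw [← hi]
      exact (cert_hom1 C _ (Pi.evalRingHom Kf i) (fun j i => (y i j : Kf i)))
  have hfin := algind_card_le _ hall (fun c : C => (yK c : K)) (by
    intro E hE
    have hEy := cert_der C Q e _ hcertK E hE
    rintro (c | j)
    · exact hEy _
    · have h1 : ζ j = ((∏ l, yK l ^ r j l : Kˣ) : K) := by rw [hmon]; rfl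
      have h2 := logD_prod E yK (r j)
      rw [Finset.sum_eq_zero (fun l _ => by rw [hEy l, zero_div, mul_zero])] at h2
      rw [Sum.elim_inr, h1]
      exact (div_eq_zero_iff.1 h2).resolve_right (Units.ne_zero _))
  rw [Fintype.card_sum, Fintype.card_subtype_compl] at hfin
  simp only [Fintype.card_coe, Fintype.card_fin] at hfin
  have : J.card ≤ n := by simpa using Finset.card_le_univ J
  omega

theorem claimC (n : ℕ) (C : Finset (Fin n)) (hC : 2 * C.card < n)
    (Q : Fin n → Polynomial (MvPolynomial C ℤ)) (e : Fin n → ℕ) :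
    ∃ F : Finset (Fin n → ℤ), 0 ∉ F ∧ ∀ (K : Type) [Field K] [CharZero K] (U : Subgroup Kˣ),
      Good K U → ∀ y : Fin n → Kˣ, (∀ i, y i ∈ U) → Cert C Q e (fun j => (y j : K)) →
      ∃ q ∈ F, ∏ i, y i ^ q i = 1 := by
  classical
  by_contra hcon
  push Not at hcon
  have h := fun F : Finset (Fin n → ℤ) => hcon (F.erase 0) (Finset.notMem_erase _ _)
  choose Kf fld cz U hU y hy hcert hne using h
  have := @ultra_main (Finset (Fin n → ℤ)) (Ultrafilter.of Filter.atTop) Kf fld cz U hU n y hy (by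
    intro q hq
    refine Ultrafilter.of_le _ ?_
    filter_upwards [Filter.eventually_ge_atTop ({q} : Finset (Fin n → ℤ))] with F hF
    exact hne F q (Finset.mem_erase.2 ⟨hq, hF (Finset.mem_singleton_self q)⟩)) C Q e hcert
  omega

theorem mem_divHull_empty {K : Type} [Field K] (x : Kˣ) : x ∈ divHull K ∅ ↔ IsOfFinOrder x := by
  rw [isOfFinOrder_iff_pow_eq_one]
  change (∃ k : ℕ, k ≠ 0 ∧ x ^ k ∈ Subgroup.closure (∅ : Set Kˣ)) ↔ _
  simp only [Subgroup.closure_empty, Subgroup.mem_bot, Nat.pos_iff_ne_zero]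

theorem algInd_bot_iff {K : Type} [Field K] [CharZero K] {ι : Type} (x : ι → K) :
    AlgebraicIndependent (⊥ : Subfield K) x ↔ AlgebraicIndependent ℚ x := by
  constructor
  · intro h
    exact h.restrictScalars (FaithfulSMul.algebraMap_injective ℚ (⊥ : Subfield K))
  · intro h
    haveI : Algebra.IsAlgebraic ℚ (⊥ : Subfield K) := ⟨by
      rintro ⟨z, hz⟩
      rw [Subfield.bot_eq_of_charZero] at hz
      obtain ⟨r, hr⟩ := hz
      have : (⟨z, by rw [Subfield.bot_eq_of_charZero]; exact ⟨r, hr⟩⟩ : (⊥ : Subfield K)) = algebraMap ℚ (⊥ : Subfield K) r := by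
        apply Subtype.ext
        change z = _
        rw [← hr]
        simp
      rw [this]
      exact isAlgebraic_algebraMap _⟩
    exact h.extendScalars _

theorem trdegQ_bdd {K : Type} [Field K] {n : ℕ} (y : Fin n → K) :
    BddAbove {d | ∃ t : Finset K, ↑t ⊆ Set.range y ∧ t.card = d ∧
      AlgebraicIndependent (⊥ : Subfield K) (fun x : {y : K // y ∈ t} => (x : K))} := by
  classical
  refine ⟨n, ?_⟩
  rintro d ⟨t, ht, rfl, -⟩
  have : t ⊆ Finset.univ.image y := fun a ha => by
    obtain ⟨i, hi⟩ := ht ha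
    exact Finset.mem_image.2 ⟨i, Finset.mem_univ _, hi⟩
  simpa using (Finset.card_le_card this).trans Finset.card_image_le

theorem iv_of_good {K : Type} [Field K] [CharZero K] {U : Subgroup Kˣ} (hU : Good K U)
    {n : ℕ} (y : Fin n → Kˣ) (hy : ∀ i, y i ∈ U) :
    ldim K y ≤ 2 * trdegQ K (Set.range fun i => ((y i : Kˣ) : K)) := by
  classical
  obtain ⟨J, hJ, m, hm⟩ := lattice_lemma (relLattice K ∅ y).toAddSubgroup
  have hmem : ∀ q : Fin n → ℤ, q ∈ (relLattice K ∅ y).toAddSubgroup ↔ IsOfFinOrder (∏ i, y i ^ q i) :=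
    fun q => mem_divHull_empty _
  -- linear part
  have h1 : ldim K y ≤ J.card := by
    let v : {j // j ∉ J} → relLattice K ∅ y := fun j => ⟨m j, (hm j j.2).1⟩
    have hv : LinearIndependent ℤ v := by
      rw [Fintype.linearIndependent_iff]
      intro g hg j
      have h2 := congrFun (congrArg Subtype.val hg) (j : Fin n)
      simp only [Submodule.coe_sum, Finset.sum_apply, Submodule.coe_smul, Pi.smul_apply, v, smul_eq_mul,
        Submodule.coe_zero, Pi.zero_apply] at h2
      rw [Finset.sum_eq_single j (fun j' _ hne => by
          rw [(hm j' j'.2).2.2 j j.2 (fun h => hne (Subtype.ext h.symm)), mul_zero])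
          (fun h => absurd (Finset.mem_univ _) h)] at h2
      exact (mul_eq_zero.1 h2).resolve_right (hm j j.2).2.1
    have h3 := hv.fintype_card_le_finrank
    rw [Fintype.card_subtype_compl] at h3
    simp only [Fintype.card_coe, Fintype.card_fin] at h3
    unfold ldim ldimRel
    omega
  obtain ⟨B, hB1, hB2⟩ := hU J (fun j => y j) (fun j => hy j) (by
    intro q hq
    let q' : Fin n → ℤ := fun i => if h : i ∈ J then q ⟨i, h⟩ else 0
    have h1 : q' = 0 := hJ q' (by
      rw [hmem]
      convert hq using 1
      rw [← Finset.prod_subset (Finset.subset_univ J) (fun i _ hi => by simp [q', hi]),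
        ← Finset.prod_coe_sort]
      exact Finset.prod_congr rfl fun i _ => by simp [q']) (fun i hi => by simp [q', hi])
    funext j
    have := congrFun h1 j
    simpa [q'] using this)
  rw [Fintype.card_coe] at hB1
  have h4 : B.card ≤ trdegQ K (Set.range fun i => ((y i : Kˣ) : K)) := by
    refine le_csSup (trdegQ_bdd _) ⟨B.image (fun j : J => ((y j : Kˣ) : K)), ?_, ?_, ?_⟩
    · intro a ha
      obtain ⟨j, -, rfl⟩ := Finset.mem_image.1 (Finset.mem_coe.1 ha)
      exact ⟨j, rfl⟩
    · refine Finset.card_image_of_injOn fun a ha b hb hab => ?_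
      have := hB2.injective (a₁ := ⟨a, ha⟩) (a₂ := ⟨b, hb⟩) hab
      exact congrArg Subtype.val this
    · rw [algInd_bot_iff]
      have h5 := hB2.coe_range
      have h6 : Set.range (fun b : B => ((y b : Kˣ) : K)) = {a | a ∈ B.image (fun j : J => ((y j : Kˣ) : K))} := by
        ext a
        simp only [Set.mem_range, Set.mem_setOf_eq, Finset.mem_image]
        constructor
        · rintro ⟨b, rfl⟩; exact ⟨b, b.2, rfl⟩
        · rintro ⟨b, hb, rfl⟩; exact ⟨⟨b, hb⟩, rfl⟩
      rw [h6] at h5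
      exact h5
  omega

theorem good_of_iv {K : Type} [Field K] [CharZero K] {U : Subgroup Kˣ}
    (h : ∀ (n : ℕ), 1 ≤ n → ∀ y : Fin n → Kˣ, (∀ i, y i ∈ U) →
      (ldim K y : ℤ) ≤ 2 * (trdegQ K (Set.range fun i => ((y i : Kˣ) : K)) : ℤ)) : Good K U := by
  classical
  intro ι _ y hy hind
  let ε := Fintype.equivFin ι
  rcases Nat.eq_zero_or_pos (Fintype.card ι) with h0 | hpos
  · refine ⟨∅, by omega, ?_⟩
    exact algebraicIndependent_empty_type_iff.2 (FaithfulSMul.algebraMap_injective ℚ K)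
  · have h1 := h _ hpos (fun i => y (ε.symm i)) (fun i => hy _)
    have h2 : relLattice K ∅ (fun i => y (ε.symm i)) = ⊥ := by
      rw [eq_bot_iff]
      intro q hq
      have hq' : IsOfFinOrder (∏ i, y (ε.symm i) ^ q i) := (mem_divHull_empty _).1 hq
      have h3 := hind (fun i => q (ε i)) (by
        rw [← Equiv.prod_comp ε.symm]
        simpa using hq')
      rw [Submodule.mem_bot]
      funext i
      simpa using congrFun h3 (ε.symm i)
    have h3 : ldim K (fun i => y (ε.symm i)) = Fintype.card ι := by
      unfold ldim ldimRel
      rw [h2, finrank_bot]; rfl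
    rw [h3] at h1
    obtain ⟨t, ht, hcard, hind'⟩ := Nat.sSup_mem (s := {d | ∃ t : Finset K, ↑t ⊆ (Set.range fun i => ((y (ε.symm i) : Kˣ) : K)) ∧ t.card = d ∧
      AlgebraicIndependent (⊥ : Subfield K) (fun x : {y : K // y ∈ t} => (x : K))})
      ⟨0, ∅, by simp, rfl, algebraicIndependent_empty_type_iff.2 (FaithfulSMul.algebraMap_injective _ K)⟩ (trdegQ_bdd _)
    rw [algInd_bot_iff] at hind'
    have hsec : ∀ a : t, ∃ i : ι, ((y i : Kˣ) : K) = a := fun a => by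
      obtain ⟨i, hi⟩ := ht a.2
      exact ⟨_, hi⟩
    choose s hs using hsec
    have hsinj : Function.Injective s := fun a b hab => Subtype.ext (by rw [← hs, ← hs, hab])
    refine ⟨Finset.univ.image s, ?_, ?_⟩
    · rw [Finset.card_image_of_injective _ hsinj, Finset.card_univ, Fintype.card_coe, hcard]
      exact_mod_cast h1
    · have hg : ∀ b : (Finset.univ.image s : Finset ι), ∃ a : t, s a = b := fun b => by
        obtain ⟨a, -, ha⟩ := Finset.mem_image.1 b.2
        exact ⟨a, ha⟩
      choose g hg using hg
      have h5 := hind'.comp g (fun a b hab => Subtype.ext (by rw [← hg, ← hg, hab]))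
      convert h5 using 1
      funext b
      rw [← hg b, hs]; rfl

section Logic

open FirstOrder Language

/-- The field operations are the interpretations of the ring symbols. -/
def Compat (M : Type) [LU.Structure M] [Field M] : Prop :=
  (∀ x y : M, Structure.funMap (L := LU) (Sum.inl ringFunc.add) ![x, y] = x + y) ∧
  (∀ x y : M, Structure.funMap (L := LU) (Sum.inl ringFunc.mul) ![x, y] = x * y) ∧
  (∀ x : M, Structure.funMap (L := LU) (Sum.inl ringFunc.neg) ![x] = -x) ∧
  (Structure.funMap (L := LU) (Sum.inl ringFunc.zero) ![] = (0 : M)) ∧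
  (Structure.funMap (L := LU) (Sum.inl ringFunc.one) ![] = (1 : M))

/-- The interpretation of the unary predicate. -/
def Up (M : Type) [LU.Structure M] (x : M) : Prop :=
  Structure.RelMap (L := LU) (M := M) (Sum.inr Unit.unit : LU.Relations 1) ![x]

/-- The remaining part of the definition of the class. -/
def UAux (ν : Subgroup (AlgebraicClosure ℚ)ˣ) (M : Type) [LU.Structure M] [Field M] [CharZero M] : Prop :=
  ∃ U : Subgroup Mˣ,
    (∀ x : M, Up M x ↔ ∃ u ∈ U, ((u : Mˣ) : M) = x) ∧
    DivisibleSub M U ∧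
    Nonempty (↥(CommGroup.torsion ↥U) ≃* ↥ν) ∧ Good M U

theorem greenAux_iff (ν : Subgroup (AlgebraicClosure ℚ)ˣ) (M : Type) [LU.Structure M] [Field M] :
    GreenAux ν M ↔ IsAlgClosed M ∧ ∃ _ : CharZero M, Compat M ∧ UAux ν M := by
  constructor
  · rintro ⟨h1, h2, h3, h4, h5, h6, h7, U, hU1, hU2, hU3, hU4⟩
    haveI := h2
    exact ⟨h1, h2, ⟨h3, h4, h5, h6, h7⟩, U, hU1, hU2, hU3, good_of_iv hU4⟩
  · rintro ⟨h1, h2, ⟨h3, h4, h5, h6, h7⟩, U, hU1, hU2, hU3, hU4⟩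
    haveI := h2
    exact ⟨h1, h2, h3, h4, h5, h6, h7, U, hU1, hU2, hU3, fun n _ y hy => by
      exact_mod_cast iv_of_good hU4 y hy⟩

/-- The theory of the class. -/
def thy (ν : Subgroup (AlgebraicClosure ℚ)ˣ) : LU.Theory :=
  {φ | ∀ (M : Type) [inst : LU.Structure M], InK ν M → M ⊨ φ}

/-- The inclusion of the language of rings. -/
def ringToLU : Language.ring →ᴸ LU := ⟨fun _ f => Sum.inl f, fun _ r => Sum.inl r⟩

theorem field_of_thy (ν : Subgroup (AlgebraicClosure ℚ)ˣ) (M : Type) [LU.Structure M] (h : M ⊨ thy ν) :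
    ∃ fld : Field M, IsAlgClosed M ∧ CharZero M ∧ Compat M := by
  letI s : Language.ring.Structure M := ringToLU.reduct M
  have hM : M ⊨ Theory.ACF 0 := by
    rw [← LHom.onTheory_model ringToLU, Theory.model_iff]
    intro φ hφ
    refine h.realize_of_mem φ ?_
    rintro N inst ⟨fld, hN⟩
    obtain ⟨h1, h2, ⟨h3, h4, h5, h6, h7⟩, -⟩ := (greenAux_iff ν N).1 hN
    letI s : Language.ring.Structure N := ringToLU.reduct N
    letI : Ring.CompatibleRing N :=
      { s with
        funMap_add := fun x => by
          rw [← h3]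
          have hx : x = ![x 0, x 1] := by ext i; fin_cases i <;> rfl
          conv_lhs => rw [hx]
          rfl
        funMap_mul := fun x => by
          rw [← h4]
          have hx : x = ![x 0, x 1] := by ext i; fin_cases i <;> rfl
          conv_lhs => rw [hx]
          rfl
        funMap_neg := fun x => by
          rw [← h5]
          have hx : x = ![x 0] := by ext i; fin_cases i; rfl
          conv_lhs => rw [hx]
          rfl
        funMap_zero := fun x => by
          rw [← h6]
          have hx : x = ![] := by ext i; exact i.elim0
          conv_lhs => rw [hx]
          rfl
        funMap_one := fun x => by
          rw [← h7]
          have hx : x = ![] := by ext i; exact i.elim0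
          conv_lhs => rw [hx]
          rfl }
    haveI : CharP N 0 := CharP.ofCharZero N
    have hm : N ⊨ Theory.ACF 0 := inferInstance
    exact ((LHom.onTheory_model ringToLU _).2 hm).realize_of_mem φ hφ
  letI := FirstOrder.Field.fieldOfModelACF 0 M
  have := FirstOrder.Field.modelField_of_modelACF 0 M
  letI := FirstOrder.Field.compatibleRingOfModelField M
  have h1 := FirstOrder.Field.isAlgClosed_of_model_ACF 0 M
  have h2 := FirstOrder.Field.charP_of_model_fieldOfChar 0 M
  refine ⟨inferInstance, h1, CharP.charP_to_charZero M, ?_, ?_, ?_, ?_, ?_⟩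
  · intro x y
    exact Ring.CompatibleRing.funMap_add (R := M) ![x, y]
  · intro x y
    exact Ring.CompatibleRing.funMap_mul (R := M) ![x, y]
  · intro x
    exact Ring.CompatibleRing.funMap_neg (R := M) ![x]
  · exact Ring.CompatibleRing.funMap_zero (R := M) ![]
  · exact Ring.CompatibleRing.funMap_one (R := M) ![]

/-- Uniform definability. -/
def Defn (α : Type) (P : ∀ (M : Type) [LU.Structure M] [Field M], (α → M) → Prop) : Prop :=
  ∃ φ : LU.Formula α, ∀ (M : Type) [LU.Structure M] [Field M], Compat M → ∀ v : α → M,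
    φ.Realize v ↔ P M v

theorem Defn.imp {α : Type} {P Q : ∀ (M : Type) [LU.Structure M] [Field M], (α → M) → Prop}
    (hP : Defn α P) (hQ : Defn α Q) : Defn α (fun M _ _ v => P M v → Q M v) := by
  obtain ⟨φ, hφ⟩ := hP
  obtain ⟨ψ, hψ⟩ := hQ
  exact ⟨φ.imp ψ, fun M _ _ hM v => by rw [Formula.realize_imp, hφ M hM, hψ M hM]⟩

theorem Defn.not {α : Type} {P : ∀ (M : Type) [LU.Structure M] [Field M], (α → M) → Prop}
    (hP : Defn α P) : Defn α (fun M _ _ v => ¬ P M v) := by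
  obtain ⟨φ, hφ⟩ := hP
  exact ⟨φ.not, fun M _ _ hM v => by rw [Formula.realize_not, hφ M hM]⟩

theorem Defn.and {α : Type} {P Q : ∀ (M : Type) [LU.Structure M] [Field M], (α → M) → Prop}
    (hP : Defn α P) (hQ : Defn α Q) : Defn α (fun M _ _ v => P M v ∧ Q M v) := by
  obtain ⟨φ, hφ⟩ := hP
  obtain ⟨ψ, hψ⟩ := hQ
  exact ⟨φ ⊓ ψ, fun M _ _ hM v => by rw [Formula.realize_inf, hφ M hM, hψ M hM]⟩

theorem Defn.forall_fin {α β : Type} [Finite β]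
    {P : β → ∀ (M : Type) [LU.Structure M] [Field M], (α → M) → Prop}
    (hP : ∀ b, Defn α (P b)) : Defn α (fun M _ _ v => ∀ b, P b M v) := by
  choose φ hφ using hP
  exact ⟨Formula.iInf φ, fun M _ _ hM v => by simp only [Formula.realize_iInf, hφ _ M hM]⟩

theorem Defn.exists_fin {α β : Type} [Finite β]
    {P : β → ∀ (M : Type) [LU.Structure M] [Field M], (α → M) → Prop}
    (hP : ∀ b, Defn α (P b)) : Defn α (fun M _ _ v => ∃ b, P b M v) := by
  choose φ hφ using hP
  exact ⟨Formula.iSup φ, fun M _ _ hM v => by simp only [Formula.realize_iSup, hφ _ M hM]⟩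

theorem Defn.ex {α β : Type} [Finite β]
    {P : ∀ (M : Type) [LU.Structure M] [Field M], (α ⊕ β → M) → Prop}
    (hP : Defn (α ⊕ β) P) : Defn α (fun M _ _ v => ∃ w : β → M, P M (Sum.elim v w)) := by
  obtain ⟨φ, hφ⟩ := hP
  exact ⟨φ.iExs β, fun M _ _ hM v => by rw [Formula.realize_iExs]; simp only [hφ M hM]⟩

theorem Defn.U {α : Type} (a : α) : Defn α (fun M _ _ v => Up M (v a)) := by
  refine ⟨Relations.formula₁ (Sum.inr Unit.unit : LU.Relations 1) (Term.var a), fun M _ _ hM v => ?_⟩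
  exact Formula.realize_rel₁

theorem exists_term {α : Type} (p : MvPolynomial α ℤ) : ∃ t : LU.Term α,
    ∀ (M : Type) [LU.Structure M] [Field M], Compat M → ∀ v : α → M,
      t.realize v = MvPolynomial.eval₂Hom (Int.castRingHom M) v p := by
  have add : ∀ t₁ t₂ : LU.Term α, ∃ t : LU.Term α, ∀ (M : Type) [LU.Structure M] [Field M], Compat M →
      ∀ v : α → M, t.realize v = t₁.realize v + t₂.realize v := fun t₁ t₂ =>
    ⟨Functions.apply₂ (Sum.inl ringFunc.add : LU.Functions 2) t₁ t₂, fun M _ _ hM v => by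
      exact Term.realize_functions_apply₂.trans (hM.1 _ _)⟩
  have mul : ∀ t₁ t₂ : LU.Term α, ∃ t : LU.Term α, ∀ (M : Type) [LU.Structure M] [Field M], Compat M →
      ∀ v : α → M, t.realize v = t₁.realize v * t₂.realize v := fun t₁ t₂ =>
    ⟨Functions.apply₂ (Sum.inl ringFunc.mul : LU.Functions 2) t₁ t₂, fun M _ _ hM v => by
      exact Term.realize_functions_apply₂.trans (hM.2.1 _ _)⟩
  have neg : ∀ t₁ : LU.Term α, ∃ t : LU.Term α, ∀ (M : Type) [LU.Structure M] [Field M], Compat M →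
      ∀ v : α → M, t.realize v = - t₁.realize v := fun t₁ =>
    ⟨Functions.apply₁ (Sum.inl ringFunc.neg : LU.Functions 1) t₁, fun M _ _ hM v => by
      exact Term.realize_functions_apply₁.trans (hM.2.2.1 _)⟩
  have one : ∃ t : LU.Term α, ∀ (M : Type) [LU.Structure M] [Field M], Compat M →
      ∀ v : α → M, t.realize v = 1 :=
    ⟨Constants.term (Sum.inl ringFunc.one : LU.Constants), fun M _ _ hM v => by
      refine Term.realize_constants.trans (Eq.trans ?_ hM.2.2.2.2)
      exact congrArg (Structure.funMap (L := LU) (Sum.inl ringFunc.one : LU.Functions 0)) (by ext i; exact i.elim0)⟩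
  have zero : ∃ t : LU.Term α, ∀ (M : Type) [LU.Structure M] [Field M], Compat M →
      ∀ v : α → M, t.realize v = 0 :=
    ⟨Constants.term (Sum.inl ringFunc.zero : LU.Constants), fun M _ _ hM v => by
      refine Term.realize_constants.trans (Eq.trans ?_ hM.2.2.2.1)
      exact congrArg (Structure.funMap (L := LU) (Sum.inl ringFunc.zero : LU.Functions 0)) (by ext i; exact i.elim0)⟩
  have nat : ∀ m : ℕ, ∃ t : LU.Term α, ∀ (M : Type) [LU.Structure M] [Field M], Compat M →
      ∀ v : α → M, t.realize v = (m : M) := by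
    intro m
    induction m with
    | zero => simpa using zero
    | succ m ih =>
      obtain ⟨t, ht⟩ := ih
      obtain ⟨o, ho⟩ := one
      obtain ⟨a, ha⟩ := add t o
      exact ⟨a, fun M _ _ hM v => by rw [ha M hM, ht M hM, ho M hM, Nat.cast_succ]⟩
  induction p using MvPolynomial.induction_on with
  | C a =>
    obtain ⟨m, rfl | rfl⟩ := Int.eq_nat_or_neg a
    · obtain ⟨t, ht⟩ := nat m
      exact ⟨t, fun M _ _ hM v => by rw [ht M hM]; simp⟩
    · obtain ⟨t, ht⟩ := nat m
      obtain ⟨t', ht'⟩ := neg t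
      exact ⟨t', fun M _ _ hM v => by rw [ht' M hM, ht M hM]; simp⟩
  | add p q hp hq =>
    obtain ⟨t, ht⟩ := hp
    obtain ⟨t', ht'⟩ := hq
    obtain ⟨a, ha⟩ := add t t'
    exact ⟨a, fun M _ _ hM v => by rw [ha M hM, ht M hM, ht' M hM, map_add]⟩
  | mul_X p n hp =>
    obtain ⟨t, ht⟩ := hp
    obtain ⟨a, ha⟩ := mul t (Term.var n)
    exact ⟨a, fun M _ _ hM v => by rw [ha M hM, ht M hM, map_mul]; simp⟩

theorem Defn.eq {α : Type} (p q : MvPolynomial α ℤ) : Defn α (fun M _ _ v =>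
    MvPolynomial.eval₂Hom (Int.castRingHom M) v p = MvPolynomial.eval₂Hom (Int.castRingHom M) v q) := by
  obtain ⟨t, ht⟩ := exists_term p
  obtain ⟨t', ht'⟩ := exists_term q
  exact ⟨t.equal t', fun M _ _ hM v => by rw [Formula.realize_equal, ht M hM, ht' M hM]⟩

theorem transfer {α : Type} [Finite α] {P : ∀ (M : Type) [LU.Structure M] [Field M], (α → M) → Prop}
    (hP : Defn α P) (ν : Subgroup (AlgebraicClosure ℚ)ˣ)
    (hK : ∀ (M : Type) [LU.Structure M] [Field M] [CharZero M], IsAlgClosed M → Compat M → UAux ν M →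
      ∀ v, P M v)
    (M : Type) [LU.Structure M] [Field M] (hM : M ⊨ thy ν) (hc : Compat M) (v : α → M) : P M v := by
  obtain ⟨φ, hφ⟩ := hP
  let ψ : LU.Sentence := Formula.iAlls α (φ.relabel (Sum.inr : α → Empty ⊕ α))
  have hψ : ∀ (N : Type) [LU.Structure N], N ⊨ ψ ↔ ∀ w : α → N, φ.Realize w := by
    intro N _
    simp only [ψ, Sentence.Realize, Formula.realize_iAlls, Formula.realize_relabel]
    rfl
  have h1 : ψ ∈ thy ν := by
    rintro N inst ⟨fld, hN⟩
    obtain ⟨h1, h2, h3, h4⟩ := (greenAux_iff ν N).1 hN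
    rw [hψ]
    intro w
    rw [hφ N h3]
    exact hK N h1 h3 h4 w
  rw [← hφ M hc]
  exact (hψ M).1 (hM.realize_of_mem ψ h1) v

end Logic

theorem zpow_prod_iff {K : Type} [Field K] {n : ℕ} (y : Fin n → Kˣ) (q : Fin n → ℤ) :
    ∏ i, y i ^ q i = 1 ↔ ∏ i, ((y i : Kˣ) : K) ^ (q i).toNat = ∏ i, ((y i : Kˣ) : K) ^ (-q i).toNat := by
  have h : ∏ i, y i ^ q i = (∏ i, y i ^ (q i).toNat) * (∏ i, y i ^ (-q i).toNat)⁻¹ := by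
    rw [← Finset.prod_inv_distrib, ← Finset.prod_mul_distrib]
    refine Finset.prod_congr rfl fun i _ => ?_
    conv_lhs => rw [← Int.toNat_sub_toNat_neg (q i)]
    rw [zpow_sub, zpow_natCast, zpow_natCast]
  rw [h, mul_inv_eq_one, ← Units.val_inj]
  simp only [Units.coe_prod, Units.val_pow_eq_pow_val]

section Logic2

open FirstOrder Language

/-- Rewriting a certificate polynomial as a polynomial in all variables. -/
noncomputable def certPoly {n : ℕ} (C : Finset (Fin n)) (j : Fin n) (Q : Polynomial (MvPolynomial C ℤ)) :
    MvPolynomial (Fin n) ℤ :=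
  Q.eval₂ (MvPolynomial.rename (R := ℤ) (fun c : C => (c : Fin n))).toRingHom (MvPolynomial.X j)

theorem eval_certPoly {n : ℕ} (C : Finset (Fin n)) (j : Fin n) (Q : Polynomial (MvPolynomial C ℤ))
    {K : Type} [CommRing K] (v : Fin n → K) :
    MvPolynomial.eval₂Hom (Int.castRingHom K) v (certPoly C j Q) =
      Polynomial.eval₂ (MvPolynomial.eval₂Hom (Int.castRingHom K) (fun c : C => v c)) (v j) Q := by
  unfold certPoly
  rw [Polynomial.hom_eval₂, MvPolynomial.eval₂Hom_X']
  congr 1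
  refine MvPolynomial.ringHom_ext (fun r => ?_) (fun c => ?_)
  · simp
  · simp

theorem defn_cert {n : ℕ} (C : Finset (Fin n)) (Q : Fin n → Polynomial (MvPolynomial C ℤ)) (e : Fin n → ℕ) :
    Defn (Fin n) (fun M _ _ v => Cert C Q e v) := by
  have h := Defn.forall_fin (β := Fin n) (fun j => (Defn.eq (certPoly C j (Q j)) 0).and
    (Defn.eq (MvPolynomial.rename (R := ℤ) (fun c : C => (c : Fin n)) ((Q j).coeff (e j))) 0).not)
  obtain ⟨φ, hφ⟩ := h
  refine ⟨φ, fun M _ _ hM v => (hφ M hM v).trans ?_⟩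
  unfold Cert
  refine forall_congr' fun j => ?_
  rw [eval_certPoly, map_zero]
  simp only [MvPolynomial.coe_eval₂Hom, MvPolynomial.eval₂_rename]
  rfl

theorem defn_delta {n : ℕ} (C : Finset (Fin n)) (Q : Fin n → Polynomial (MvPolynomial C ℤ)) (e : Fin n → ℕ)
    (F : Finset (Fin n → ℤ)) :
    Defn (Fin n) (fun M _ _ v => (∀ i, Up M (v i)) → Cert C Q e v →
      ∃ q : F, ∏ i, v i ^ ((q : Fin n → ℤ) i).toNat = ∏ i, v i ^ (-(q : Fin n → ℤ) i).toNat) := by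
  refine (Defn.forall_fin fun i => Defn.U i).imp ((defn_cert C Q e).imp (Defn.exists_fin fun q => ?_))
  obtain ⟨φ, hφ⟩ := Defn.eq (∏ i, (MvPolynomial.X i : MvPolynomial (Fin n) ℤ) ^ ((q : Fin n → ℤ) i).toNat)
    (∏ i, (MvPolynomial.X i : MvPolynomial (Fin n) ℤ) ^ (-(q : Fin n → ℤ) i).toNat)
  refine ⟨φ, fun M _ _ hM v => (hφ M hM v).trans ?_⟩
  simp only [map_prod, map_pow, MvPolynomial.eval₂Hom_X']

theorem exists_cert {K : Type} [Field K] {n : ℕ} (C : Finset (Fin n)) (y : Fin n → K)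
    (h : ∀ i, IsAlgebraic (Algebra.adjoin ℤ (y '' (C : Set (Fin n)))) (y i)) :
    ∃ Q e, Cert C Q e y := by
  classical
  suffices hs : ∀ j, ∃ (Q : Polynomial (MvPolynomial C ℤ)) (e : ℕ),
      Polynomial.eval₂ (MvPolynomial.eval₂Hom (Int.castRingHom K) (fun c : C => y c)) (y j) Q = 0 ∧
      MvPolynomial.eval₂Hom (Int.castRingHom K) (fun c : C => y c) (Q.coeff e) ≠ 0 by
    choose Q e hQ using hs
    exact ⟨Q, e, hQ⟩
  intro j
  obtain ⟨p, hp0, hp⟩ := h j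
  have hrange : y '' (C : Set (Fin n)) = Set.range (fun c : C => y c) := by
    rw [Set.image_eq_range]; rfl
  have hmem : ∀ a : MvPolynomial C ℤ, MvPolynomial.eval₂Hom (Int.castRingHom K) (fun c : C => y c) a ∈
      Algebra.adjoin ℤ (y '' (C : Set (Fin n))) := by
    intro a
    rw [hrange, Algebra.adjoin_range_eq_range_aeval]
    exact ⟨a, rfl⟩
  let g : MvPolynomial C ℤ →+* Algebra.adjoin ℤ (y '' (C : Set (Fin n))) :=
    (MvPolynomial.eval₂Hom (Int.castRingHom K) (fun c : C => y c)).codRestrict _ hmem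
  have hg : Function.Surjective g := by
    rintro ⟨a, ha⟩
    have ha' := ha
    rw [hrange, Algebra.adjoin_range_eq_range_aeval] at ha'
    obtain ⟨b, hb⟩ := ha'
    exact ⟨b, Subtype.ext hb⟩
  obtain ⟨Q, rfl⟩ := Polynomial.map_surjective g hg p
  obtain ⟨e, he⟩ : ∃ e, (Q.map g).coeff e ≠ 0 := by
    by_contra hcon
    push Not at hcon
    exact hp0 (Polynomial.ext fun i => by rw [hcon i, Polynomial.coeff_zero])
  refine ⟨Q, e, ?_, ?_⟩
  · rw [Polynomial.aeval_def, Polynomial.eval₂_map] at hp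
    exact hp
  · intro h0
    rw [Polynomial.coeff_map] at he
    exact he (Subtype.ext h0)

theorem good_of_thy (ν : Subgroup (AlgebraicClosure ℚ)ˣ) (M : Type) [LU.Structure M] [Field M] [CharZero M]
    (hM : M ⊨ thy ν) (hc : Compat M) (U : Subgroup Mˣ)
    (hU : ∀ x : M, Up M x ↔ ∃ u ∈ U, ((u : Mˣ) : M) = x) : Good M U := by
  classical
  intro ι _ y hy hind
  let ε := Fintype.equivFin ι
  obtain ⟨C, hC1, hC2⟩ := max_algind (k := ℤ) (fun i => ((y (ε.symm i) : Mˣ) : M))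
  obtain ⟨Q, e, hcert⟩ := exists_cert C _ hC2
  have hcard : Fintype.card ι ≤ 2 * C.card := by
    by_contra hlt
    obtain ⟨F, hF0, hF⟩ := claimC _ C (not_le.1 hlt) Q e
    obtain ⟨⟨q, hqF⟩, hq⟩ := transfer (defn_delta C Q e F) ν (by
      intro N _ _ _ _ _ hN v hv hcv
      obtain ⟨V, hV, -, -, hgood⟩ := hN
      have hv' : ∀ i, ∃ u ∈ V, ((u : Nˣ) : N) = v i := fun i => (hV _).1 (hv i)
      choose w hw hwv using hv'
      have hvw : v = fun i => ((w i : Nˣ) : N) := funext fun i => (hwv i).symm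
      subst hvw
      obtain ⟨q, hq, h1⟩ := hF N V hgood w hw hcv
      exact ⟨⟨q, hq⟩, (zpow_prod_iff w q).1 h1⟩) M hM hc
      (fun i => ((y (ε.symm i) : Mˣ) : M)) (fun i => (hU _).2 ⟨_, hy _, rfl⟩) hcert
    have h1 := (zpow_prod_iff (fun i => y (ε.symm i)) q).2 hq
    have h2 := hind (fun i => q (ε i)) (by
      rw [← Equiv.prod_comp ε.symm]
      simp only [Equiv.apply_symm_apply]
      rw [h1]
      exact IsOfFinOrder.one)
    apply hF0
    have : q = 0 := by
      funext i
      simpa using congrFun h2 (ε.symm i)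
    rw [← this]; exact hqF
  refine ⟨C.map ε.symm.toEmbedding, by rwa [Finset.card_map], ?_⟩
  haveI : Algebra.IsAlgebraic ℤ ℚ := IsLocalization.isAlgebraic ℚ (nonZeroDivisors ℤ)
  have h1 : AlgebraicIndependent ℚ (fun c : C => ((y (ε.symm c) : Mˣ) : M)) := hC1.extendScalars ℚ
  have h2 : ∀ b : (C.map ε.symm.toEmbedding : Finset ι), ε b ∈ C := fun b => by
    obtain ⟨c, hc, hcb⟩ := Finset.mem_map.1 b.2
    rw [← hcb]
    simpa using hc
  have h3 := h1.comp (fun b : (C.map ε.symm.toEmbedding : Finset ι) => (⟨ε b, h2 b⟩ : C)) (fun a b hab =>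
    Subtype.ext (ε.injective (congrArg Subtype.val hab)))
  convert h3 using 1
  funext b
  simp

end Logic2

section Final

open FirstOrder Language

theorem uaux_of_thy (ν : Subgroup (AlgebraicClosure ℚ)ˣ)
    (hνtor : ∀ x ∈ ν, IsOfFinOrder x) (M : Type) [LU.Structure M] [Field M] [CharZero M] [IsAlgClosed M]
    (hM : M ⊨ thy ν) (hc : Compat M) : UAux ν M := by
  classical
  let X : Fin 2 → MvPolynomial (Fin 2) ℤ := MvPolynomial.X
  have h0 : ∀ x : M, Up M x → x ≠ 0 := by
    intro x hx h0
    have := transfer ((Defn.U (0 : Fin 2)).imp (Defn.eq (X 0) 0).not) ν (by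
      rintro N _ _ _ - - ⟨V, hV, -⟩ v hv
      obtain ⟨u, -, hu⟩ := (hV _).1 hv
      simp only [X, MvPolynomial.eval₂Hom_X', map_zero]
      rw [← hu]; exact u.ne_zero) M hM hc ![x, x] hx
    simp only [X, MvPolynomial.eval₂Hom_X', map_zero] at this
    exact this h0
  have h1 : Up M (1 : M) := by
    have := transfer ((Defn.eq (X 0) 1).imp (Defn.U (0 : Fin 2))) ν (by
      rintro N _ _ _ - - ⟨V, hV, -⟩ v hv
      simp only [X, MvPolynomial.eval₂Hom_X', map_one] at hv
      exact (hV _).2 ⟨1, V.one_mem, by rw [hv]; rfl⟩) M hM hc ![1, 1] (by simp [X])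
    exact this
  have hmul : ∀ x y : M, Up M x → Up M y → Up M (x * y) := by
    intro x y hx hy
    have := transfer ((Defn.U (0 : Fin 3)).imp ((Defn.U 1).imp
      ((Defn.eq (MvPolynomial.X 2) (MvPolynomial.X 0 * MvPolynomial.X 1)).imp (Defn.U 2)))) ν (by
      rintro N _ _ _ - - ⟨V, hV, -⟩ v hv0 hv1 hv2
      obtain ⟨a, ha, hav⟩ := (hV _).1 hv0
      obtain ⟨b, hb, hbv⟩ := (hV _).1 hv1
      simp only [MvPolynomial.eval₂Hom_X', map_mul] at hv2
      exact (hV _).2 ⟨a * b, V.mul_mem ha hb, by rw [hv2, ← hav, ← hbv]; rfl⟩) M hM hc ![x, y, x * y] hx hy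
      (by simp)
    exact this
  have hinv : ∀ x y : M, Up M x → x * y = 1 → Up M y := by
    intro x y hx hxy
    have := transfer ((Defn.U (0 : Fin 2)).imp ((Defn.eq (X 0 * X 1) 1).imp (Defn.U 1))) ν (by
      rintro N _ _ _ - - ⟨V, hV, -⟩ v hv0 hv1
      obtain ⟨a, ha, hav⟩ := (hV _).1 hv0
      simp only [X, MvPolynomial.eval₂Hom_X', map_mul, map_one] at hv1
      refine (hV _).2 ⟨a⁻¹, V.inv_mem ha, ?_⟩
      rw [Units.val_inv_eq_inv_val, hav]
      exact inv_eq_of_mul_eq_one_right hv1) M hM hc ![x, y] hx (by simpa [X] using hxy)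
    exact this
  have hdiv : ∀ k : ℕ, k ≠ 0 → ∀ x : M, Up M x → ∃ y, Up M y ∧ y ^ k = x := by
    intro k hk x hx
    obtain ⟨w, hw1, hw2⟩ := transfer ((Defn.U (0 : Fin 1)).imp (Defn.ex (β := Fin 1)
      ((Defn.U (Sum.inr 0)).and (Defn.eq (MvPolynomial.X (Sum.inr 0) ^ k) (MvPolynomial.X (Sum.inl 0)))))) ν (by
      rintro N _ _ _ - - ⟨V, hV, hVd, -⟩ v hv
      obtain ⟨a, ha, hav⟩ := (hV _).1 hv
      obtain ⟨b, hb, hba⟩ := hVd a ha k hk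
      refine ⟨fun _ => (b : N), (hV _).2 ⟨b, hb, rfl⟩, ?_⟩
      simp only [MvPolynomial.eval₂Hom_X', map_pow, Sum.elim_inl, Sum.elim_inr]
      rw [← hav, ← hba]; rfl) M hM hc ![x] hx
    simp only [MvPolynomial.eval₂Hom_X', map_pow, Sum.elim_inl, Sum.elim_inr] at hw1 hw2
    exact ⟨w 0, hw1, hw2⟩
  have htor1 : ∀ z ∈ ν, ∀ x : M, x ^ orderOf z = 1 → Up M x := by
    intro z hz x hx
    have := transfer ((Defn.eq (X 0 ^ orderOf z) 1).imp (Defn.U (0 : Fin 2))) ν (by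
      rintro N _ _ _ - - ⟨V, hV, -, ⟨e⟩, -⟩ v hv
      simp only [X, MvPolynomial.eval₂Hom_X', map_pow, map_one] at hv
      let t := e.symm ⟨z, hz⟩
      have ht : orderOf ((t : V) : Nˣ) = orderOf z := by
        rw [Subgroup.orderOf_coe, Subgroup.orderOf_coe]
        exact (MulEquiv.orderOf_eq e.symm _).trans (Subgroup.orderOf_mk z hz)
      have hpr : IsPrimitiveRoot (((t : V) : Nˣ) : N) (orderOf z) := by
        rw [IsPrimitiveRoot.coe_units_iff, ← ht]
        exact IsPrimitiveRoot.orderOf _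
      haveI : NeZero (orderOf z) := ⟨(hνtor z hz).orderOf_pos.ne'⟩
      obtain ⟨i, -, hi⟩ := hpr.eq_pow_of_pow_eq_one hv
      exact (hV _).2 ⟨((t : V) : Nˣ) ^ i, V.pow_mem (t : V).2 i, by rw [← hi]; rfl⟩)
      M hM hc ![x, x] (by simpa [X] using hx)
    exact this
  have htor2 : ∀ u : Mˣ, IsOfFinOrder u → Up M (u : M) → ∃ z ∈ ν, orderOf z = orderOf u := by
    intro u hu hUu
    by_contra hcon
    have hpos := hu.orderOf_pos
    have := transfer ((Defn.U (0 : Fin 2)).imp ((Defn.eq (X 0 ^ orderOf u) 1).imp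
      (Defn.forall_fin (β := {m : Fin (orderOf u) // (m : ℕ) ≠ 0})
        (fun m => (Defn.eq (X 0 ^ ((m : Fin (orderOf u)) : ℕ)) 1).not)).not)) ν (by
      rintro N _ _ _ - - ⟨V, hV, -, ⟨e⟩, -⟩ v hv1 hv2 hv3
      simp only [X, MvPolynomial.eval₂Hom_X', map_pow, map_one] at hv2 hv3
      obtain ⟨a, ha, hav⟩ := (hV _).1 hv1
      rw [← hav] at hv2 hv3
      have hord : orderOf a = orderOf u := by
        rw [orderOf_eq_iff hpos]
        refine ⟨Units.ext (by simpa using hv2), fun m hm hm0 h => hv3 ⟨⟨m, hm⟩, hm0.ne'⟩ ?_⟩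
        have := congrArg Units.val h
        simpa using this
      have hfin : IsOfFinOrder (⟨a, ha⟩ : V) := by
        rw [← orderOf_pos_iff, Subgroup.orderOf_mk, hord]; exact hpos
      let t : CommGroup.torsion V := ⟨⟨a, ha⟩, hfin⟩
      refine hcon ⟨e t, (e t).2, ?_⟩
      rw [Subgroup.orderOf_coe, MulEquiv.orderOf_eq, ← hord]
      exact (Subgroup.orderOf_mk _ _).trans (Subgroup.orderOf_mk _ _)) M hM hc ![u, u] hUu
      (by
        have : (u : M) ^ orderOf u = 1 := by
          rw [← Units.val_pow_eq_pow_val, pow_orderOf_eq_one]; rfl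
        simpa [X] using this)
    apply this
    rintro ⟨m, hm0⟩ hm
    simp only [X, MvPolynomial.eval₂Hom_X', map_pow, map_one] at hm
    have hm' : u ^ ((m : Fin (orderOf u)) : ℕ) = 1 := Units.ext (by simpa using hm)
    exact absurd (orderOf_le_of_pow_eq_one (Nat.pos_of_ne_zero hm0) hm') (not_le.2 m.2)
  let U : Subgroup Mˣ :=
    { carrier := {u | Up M (u : M)}
      one_mem' := h1
      mul_mem' := fun {a b} ha hb => hmul _ _ ha hb
      inv_mem' := fun {a} ha => hinv _ _ ha (by simp) }
  have hmemU : ∀ u : Mˣ, u ∈ U ↔ Up M (u : M) := fun u => Iff.rfl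
  have hU : ∀ x : M, Up M x ↔ ∃ u ∈ U, ((u : Mˣ) : M) = x := by
    intro x
    constructor
    · intro hx
      exact ⟨Units.mk0 x (h0 x hx), hx, rfl⟩
    · rintro ⟨u, hu, rfl⟩
      exact hu
  refine ⟨U, hU, ?_, ?_, good_of_thy ν M hM hc U hU⟩
  · intro u hu k hk
    obtain ⟨y, hy, hyk⟩ := hdiv k hk _ hu
    exact ⟨Units.mk0 y (h0 y hy), hy, Units.ext hyk⟩
  · haveI : Algebra.IsAlgebraic ℚ (AlgebraicClosure ℚ) := by
      have e : (DivisionRing.toRatAlgebra : Algebra ℚ (AlgebraicClosure ℚ)) = AlgebraicClosure.instAlgebra ℚ :=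
        Subsingleton.elim _ _
      rw [e]
      exact AlgebraicClosure.isAlgebraic ℚ
    let φ : AlgebraicClosure ℚ →ₐ[ℚ] M := IsAlgClosed.lift
    let Φ : (AlgebraicClosure ℚ)ˣ →* Mˣ := Units.map (φ : AlgebraicClosure ℚ →* M)
    have hΦ : Function.Injective Φ := Units.map_injective φ.injective
    have hν1 : ∀ z ∈ ν, Φ z ∈ U := fun z hz => htor1 z hz _ (by
      have : Φ z ^ orderOf z = 1 := by rw [← map_pow, pow_orderOf_eq_one, map_one]
      have := congrArg Units.val this
      simpa using this)
    let g : ν →* CommGroup.torsion U :=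
      (((Φ.comp ν.subtype).codRestrict U (fun z => hν1 z z.2))).codRestrict (CommGroup.torsion U) (fun z => by
        have h : IsOfFinOrder z := by
          have := hνtor z z.2
          rwa [Submonoid.isOfFinOrder_coe] at this
        exact MonoidHom.isOfFinOrder _ h)
    have hg : ∀ z : ν, ((g z : U) : Mˣ) = Φ z := fun z => rfl
    refine ⟨(MulEquiv.ofBijective g ⟨?_, ?_⟩).symm⟩
    · intro a b hab
      apply Subtype.ext
      apply hΦ
      rw [← hg, ← hg, hab]
    · rintro ⟨⟨u, hu⟩, ht⟩
      have hfin : IsOfFinOrder u := by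
        have h : IsOfFinOrder (⟨u, hu⟩ : U) := ht
        exact U.subtype.isOfFinOrder h
      obtain ⟨z, hz, hzu⟩ := htor2 u hfin hu
      have hpr : IsPrimitiveRoot ((Φ z : Mˣ) : M) (orderOf u) := by
        rw [IsPrimitiveRoot.coe_units_iff, ← hzu, ← orderOf_injective Φ hΦ z]
        exact IsPrimitiveRoot.orderOf _
      haveI : NeZero (orderOf u) := ⟨hfin.orderOf_pos.ne'⟩
      obtain ⟨i, -, hi⟩ := hpr.eq_pow_of_pow_eq_one (ξ := (u : M)) (by
        have : (u : M) ^ orderOf u = 1 := by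
          rw [← Units.val_pow_eq_pow_val, pow_orderOf_eq_one]; rfl
        simpa using this)
      refine ⟨⟨z ^ i, ν.pow_mem hz i⟩, Subtype.ext (Subtype.ext ?_)⟩
      rw [hg]
      apply Units.ext
      change ((Φ (z ^ i) : Mˣ) : M) = u
      rw [← hi, map_pow]
      rfl

end Final

open FirstOrder Language in
/-- For any divisible group `ν` of roots of unity in `ℚ^alg`, the class `𝒦`
is elementary: there is a set `T` of `LU`-sentences whose models are exactly the members
of `𝒦`. -/
theorem class_K_is_elementary (ν : Subgroup (AlgebraicClosure ℚ)ˣ)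
    (hνtor : ∀ x ∈ ν, IsOfFinOrder x)
    (hνdiv : ∀ x ∈ ν, ∀ k : ℕ, k ≠ 0 → ∃ y ∈ ν, y ^ k = x) :
    ∃ T : LU.Theory, ∀ (M : Type) [inst : LU.Structure M], M ⊨ T ↔ InK ν M := by
  refine ⟨thy ν, fun M inst => ⟨fun hM => ?_, fun hM => ⟨fun φ hφ => hφ M hM⟩⟩⟩
  obtain ⟨fld, h1, h2, h3⟩ := field_of_thy ν M hM
  exact ⟨fld, (greenAux_iff ν M).2 ⟨h1, h2, h3, uaux_of_thy ν hνtor M hM h3⟩⟩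

end BadFields
end

section
/- Let K be an algebraically closed field of characteristic 0, let F ⊆ K be an algebraically closed subfield, and let V ⊆ (Kˣ)ⁿ be a Kummer generic irreducible variety defined over F. For i = 1, 2, let (a_{i,m})_{m ≥ 1} be a sequence of n-tuples from Kˣ such that a_{i,1} is a generic point of V over F (i.e., a_{i,1} ∈ V and trdeg(F(a_{i,1})/F) = dim V) and such that (a_{i,mk})^k = a_{i,m} componentwise for all m, k ≥ 1. Then there is a field isomorphism over F from F(a_{1,m} : m ≥ 1) onto F(a_{2,m} : m ≥ 1) sending a_{1,m} to a_{2,m} componentwise for every m ≥ 1. -/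
namespace BadFields

variable (K : Type) [Field K]

/-- The field generated by an algebraically closed subfield `F` and a compatible system of
roots `a m`, `m ≥ 1`. -/
def rootsField (K : Type) [Field K] (F : Subfield K) {n : ℕ} (a : ℕ → Fin n → Kˣ) :
    Subfield K :=
  Subfield.closure (↑F ∪ ⋃ m ∈ {m : ℕ | 1 ≤ m}, Set.range fun j => ((a m j : Kˣ) : K))



open MvPolynomial in
lemma exists_chain_of_algInd {k B ι : Type} [Field k] [CommRing B] [IsDomain B] [Algebra k B]
    [Algebra.FiniteType k B] [Fintype ι] (x : ι → B) (hx : AlgebraicIndependent k x) :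
    ∃ l : LTSeries (PrimeSpectrum B), l.length = Fintype.card ι := by
  obtain ⟨s, g, ginj, gint⟩ := exists_integral_inj_algHom_of_fg k B
  let : Algebra (MvPolynomial (Fin s) k) B := g.toRingHom.toAlgebra
  have : IsScalarTower k (MvPolynomial (Fin s) k) B :=
    IsScalarTower.of_algebraMap_eq (fun r => (g.commutes r).symm)
  have : Algebra.IsIntegral (MvPolynomial (Fin s) k) B := ⟨gint⟩
  have : FaithfulSMul (MvPolynomial (Fin s) k) B :=
    (faithfulSMul_iff_algebraMap_injective _ _).mpr ginj
  have htr : Algebra.trdeg k B = s := by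
    rw [← _root_.trdeg_add_eq k (MvPolynomial (Fin s) k) (A := B),
      trdeg_eq_zero (R := MvPolynomial (Fin s) k) (A := B)]
    simp
  have hle : Fintype.card ι ≤ s := by
    have := hx.cardinalMk_le_trdeg
    rw [htr] at this
    simpa using this
  have hdim : ((Fintype.card ι : ℕ) : WithBot ℕ∞) ≤ Order.krullDim (PrimeSpectrum (MvPolynomial (Fin s) k)) := by
    have : ringKrullDim (MvPolynomial (Fin s) k) = s := by simp
    rw [ringKrullDim] at this
    rw [this]
    exact_mod_cast hle
  rw [Order.le_krullDim_iff] at hdim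
  obtain ⟨l, hl⟩ := hdim
  obtain ⟨Q, hQ, hQl⟩ := Ideal.exists_ideal_over_prime_of_isIntegral_of_isDomain (S := B)
    l.head.asIdeal (by
      rw [(RingHom.injective_iff_ker_eq_bot (algebraMap (MvPolynomial (Fin s) k) B)).1 ginj]; exact bot_le)
  have : Q.LiesOver l.head.asIdeal := ⟨hQl.symm⟩
  obtain ⟨L, hL, -⟩ := Ideal.exists_ltSeries_of_hasGoingUp l Q
  exact ⟨L, hL.trans hl⟩

section

variable (K : Type) [Field K]

lemma clear_denoms (F : Subfield K) {n : ℕ} (a : Fin n → Kˣ) (b : K)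
    (hb : b ∈ Algebra.adjoin F (Set.range (fun i => (a i : K)) ∪ Set.range (fun i => ((a i)⁻¹ : K)))) :
    ∃ (N : ℕ) (f : MvPolynomial (Fin n) F),
      MvPolynomial.aeval (fun i => (a i : K)) f = (∏ i, (a i : K)) ^ N * b := by
  have hprod : MvPolynomial.aeval (fun i => (a i : K))
      (∏ i, MvPolynomial.X i : MvPolynomial (Fin n) F) = ∏ i, (a i : K) := by
    simp [map_prod]
  induction hb using Algebra.adjoin_induction with
  | mem x hx =>
    rcases hx with ⟨i, rfl⟩ | ⟨i, rfl⟩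
    · exact ⟨0, MvPolynomial.X i, by simp⟩
    · refine ⟨1, ∏ j ∈ Finset.univ.erase i, MvPolynomial.X j, ?_⟩
      rw [map_prod, pow_one, ← Finset.mul_prod_erase _ _ (Finset.mem_univ i)]
      have : (a i : K) ≠ 0 := (a i).ne_zero
      simp
      field_simp
  | algebraMap r => exact ⟨0, MvPolynomial.C r, by simp⟩
  | add x y _ _ hx hy =>
    obtain ⟨N, f, hf⟩ := hx
    obtain ⟨M, g, hg⟩ := hy
    refine ⟨N + M, (∏ i, MvPolynomial.X i) ^ M * f + (∏ i, MvPolynomial.X i) ^ N * g, ?_⟩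
    rw [map_add, map_mul, map_mul, map_pow, map_pow, hprod, hf, hg]
    ring
  | mul x y _ _ hx hy =>
    obtain ⟨N, f, hf⟩ := hx
    obtain ⟨M, g, hg⟩ := hy
    refine ⟨N + M, f * g, ?_⟩
    rw [map_mul, hf, hg]
    ring

lemma exists_chain_over_ker (F : Subfield K) {n : ℕ} (a : Fin n → Kˣ) :
    ∃ l : LTSeries (PrimeSpectrum (MvPolynomial (Fin n) F)),
      l.length = trdegOver K F (Set.range fun j => ((a j : Kˣ) : K)) ∧
      RingHom.ker (MvPolynomial.aeval (R := F) (fun i => (a i : K))) ≤ l.head.asIdeal ∧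
      ∀ i, MvPolynomial.X i ∉ l.last.asIdeal := by
  set s : Set K := Set.range (fun i => (a i : K)) ∪ Set.range (fun i => ((a i)⁻¹ : K)) with hs
  let B := Algebra.adjoin F s
  have hsfin : s.Finite := (Set.finite_range _).union (Set.finite_range _)
  have : Algebra.FiniteType F B :=
    (Subalgebra.fg_iff_finiteType _).1 (Subalgebra.fg_def.2 ⟨s, hsfin, rfl⟩)
  have hmem : trdegOver K F (Set.range fun j => ((a j : Kˣ) : K)) ∈
      {d | ∃ t : Finset K, (t : Set K) ⊆ (Set.range fun j => ((a j : Kˣ) : K)) ∧ t.card = d ∧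
        AlgebraicIndependent F (fun x : {y : K // y ∈ t} => (x : K))} := by
    apply Nat.sSup_mem
    · refine ⟨0, ∅, by simp, by simp, ?_⟩
      have : IsEmpty {y : K // y ∈ (∅ : Finset K)} := ⟨fun x => Finset.notMem_empty _ x.2⟩
      rw [algebraicIndependent_empty_type_iff]
      exact (algebraMap F K).injective
    · refine ⟨(Set.finite_range fun j => ((a j : Kˣ) : K)).toFinset.card, ?_⟩
      rintro d ⟨t, ht, rfl, -⟩
      exact Finset.card_le_card (by intro x hx; simpa using ht hx)
  obtain ⟨t, ht, hcard, hind⟩ := hmem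
  have haB : ∀ i, (a i : K) ∈ B := fun i => Algebra.subset_adjoin (Or.inl ⟨i, rfl⟩)
  have haB' : ∀ i, ((a i)⁻¹ : K) ∈ B := fun i => Algebra.subset_adjoin (Or.inr ⟨i, rfl⟩)
  have htB : ∀ x : {y : K // y ∈ t}, (x : K) ∈ B := by
    intro x
    obtain ⟨i, hi⟩ := ht x.2
    rw [← hi]; exact haB i
  have hind' : AlgebraicIndependent F (fun x : {y : K // y ∈ t} => (⟨x, htB x⟩ : B)) :=
    AlgebraicIndependent.of_comp B.val hind
  obtain ⟨l, hl⟩ := exists_chain_of_algInd _ hind'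
  rw [Fintype.card_coe, hcard] at hl
  let ψ : MvPolynomial (Fin n) F →ₐ[F] B := MvPolynomial.aeval (fun i => (⟨a i, haB i⟩ : B))
  have hψ : ∀ f, ((ψ f : B) : K) = MvPolynomial.aeval (fun i => (a i : K)) f := by
    intro f
    have : (B.val.comp ψ) = MvPolynomial.aeval (fun i => (a i : K)) := by
      ext i; simp [ψ]
    exact DFunLike.congr_fun this f
  have hunit : ∀ i, IsUnit (⟨a i, haB i⟩ : B) := by
    intro i
    refine IsUnit.of_mul_eq_one (⟨((a i)⁻¹ : K), haB' i⟩ : B) ?_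
    apply Subtype.ext
    simp
  have hmono : StrictMono (PrimeSpectrum.comap ψ.toRingHom) := by
    intro p q hpq
    refine lt_of_le_not_ge (fun f hf => hpq.le hf) (fun hle => hpq.not_ge ?_)
    intro b hb
    obtain ⟨N, f, hf⟩ := clear_denoms K F a b b.2
    have hf' : ψ f = (∏ i, (⟨a i, haB i⟩ : B)) ^ N * b := by
      apply Subtype.ext
      rw [hψ, hf]; simp
    have h1 : f ∈ (PrimeSpectrum.comap ψ.toRingHom q).asIdeal := by
      show ψ f ∈ q.asIdeal
      rw [hf']
      exact Ideal.mul_mem_left _ _ hb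
    have h2 : ψ f ∈ p.asIdeal := hle h1
    rw [hf'] at h2
    have hu : IsUnit ((∏ i, (⟨a i, haB i⟩ : B)) ^ N) :=
      IsUnit.pow _ (by rw [IsUnit.prod_univ_iff]; exact hunit)
    exact (Ideal.unit_mul_mem_iff_mem _ hu).1 h2
  refine ⟨l.map _ hmono, hl, ?_, ?_⟩
  · intro f hf
    rw [LTSeries.head_map]
    show ψ f ∈ l.head.asIdeal
    have : ψ f = 0 := by
      apply Subtype.ext
      rw [hψ]; exact hf
    rw [this]; exact Ideal.zero_mem _
  · intro i hi
    rw [LTSeries.last_map] at hi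
    have : ψ (MvPolynomial.X i) ∈ l.last.asIdeal := hi
    simp only [ψ, MvPolynomial.aeval_X] at this
    exact l.last.isPrime.ne_top (Ideal.eq_top_of_isUnit_mem _ this (hunit i))

attribute [local instance] MvPolynomial.algebraMvPolynomial in
lemma exists_chain_K (F : Subfield K) {n : ℕ}
    (l : LTSeries (PrimeSpectrum (MvPolynomial (Fin n) F)))
    (hX : ∀ i, MvPolynomial.X i ∉ l.last.asIdeal) :
    ∃ L : LTSeries (PrimeSpectrum (MvPolynomial (Fin n) K)),
      L.length = l.length ∧ (∀ f ∈ l.head.asIdeal, MvPolynomial.map (algebraMap F K) f ∈ L.head.asIdeal) ∧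
      ∀ i, MvPolynomial.X i ∉ L.last.asIdeal := by
  have : Module.Free (MvPolynomial (Fin n) F) (MvPolynomial (Fin n) K) :=
    Module.Free.of_equiv (Algebra.IsPushout.equiv F (MvPolynomial (Fin n) F) K (MvPolynomial (Fin n) K)).toLinearEquiv
  obtain ⟨Q, hQ⟩ := PrimeSpectrum.comap_surjective_of_faithfullyFlat
    (B := MvPolynomial (Fin n) K) l.last
  have : Q.asIdeal.LiesOver l.last.asIdeal := ⟨by rw [← hQ]; rfl⟩
  obtain ⟨L, h1, h2, h3⟩ := Ideal.exists_ltSeries_of_hasGoingDown l Q.asIdeal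
  refine ⟨L, h1, ?_, ?_⟩
  · intro f hf
    have : PrimeSpectrum.comap (algebraMap _ (MvPolynomial (Fin n) K)) L.head = l.head := by
      have := congrArg List.head? h3
      simpa [RelSeries.toList, RelSeries.head] using this
    rw [← this] at hf
    exact hf
  · intro i hi
    rw [h2] at hi
    apply hX i
    rw [← hQ]
    show MvPolynomial.map (algebraMap F K) (MvPolynomial.X i) ∈ Q.asIdeal
    simpa using hi

end

section

variable (K : Type) [Field K]

lemma mem_of_vanish_torus [IsAlgClosed K] {n : ℕ} (q : Ideal (MvPolynomial (Fin n) K))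
    [hq : q.IsPrime] (hX : ∀ i, MvPolynomial.X i ∉ q) (f : MvPolynomial (Fin n) K)
    (hf : ∀ x ∈ zeroSet K (q : Set (MvPolynomial (Fin n) K)),
      MvPolynomial.eval (fun i => (x i : K)) f = 0) : f ∈ q := by
  have h1 : f * ∏ i, MvPolynomial.X i ∈ MvPolynomial.vanishingIdeal K
      (MvPolynomial.zeroLocus K q) := by
    intro x hx
    rw [map_mul, map_prod]
    simp only [MvPolynomial.aeval_X]
    by_cases h0 : ∃ i, x i = 0
    · obtain ⟨i, hi⟩ := h0
      rw [Finset.prod_eq_zero (Finset.mem_univ i) hi, mul_zero]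
    · push Not at h0
      have := hf (fun i => Units.mk0 (x i) (h0 i)) (by
        intro p hp
        have := hx p hp
        simpa [MvPolynomial.aeval_eq_eval] using this)
      have h2 : MvPolynomial.aeval x f = 0 := by
        simpa [MvPolynomial.aeval_eq_eval] using this
      rw [h2, zero_mul]
  rw [MvPolynomial.IsPrime.vanishingIdeal_zeroLocus] at h1
  rcases hq.mem_or_mem h1 with h | h
  · exact h
  · rw [Ideal.IsPrime.prod_mem_iff] at h
    obtain ⟨i, -, hi⟩ := h
    exact absurd hi (hX i)

lemma isIrredVar_zeroSet [IsAlgClosed K] {n : ℕ} (q : Ideal (MvPolynomial (Fin n) K))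
    [hq : q.IsPrime] (hX : ∀ i, MvPolynomial.X i ∉ q) :
    IsIrredVar K (zeroSet K (q : Set (MvPolynomial (Fin n) K))) := by
  refine ⟨⟨_, rfl⟩, ?_, ?_⟩
  · by_contra h
    rw [Set.not_nonempty_iff_eq_empty] at h
    apply hq.ne_top
    rw [Ideal.eq_top_iff_one]
    refine mem_of_vanish_torus K q hX 1 ?_
    intro x hx
    rw [h] at hx
    exact absurd hx (Set.notMem_empty x)
  · rintro C₁ C₂ ⟨S₁, rfl⟩ ⟨S₂, rfl⟩ hC
    by_contra hcon
    push Not at hcon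
    obtain ⟨h1, h2⟩ := hcon
    rw [Set.not_subset] at h1 h2
    obtain ⟨x, hx, hx1⟩ := h1
    obtain ⟨y, hy, hy2⟩ := h2
    simp only [zeroSet, Set.mem_ofPred_eq, not_forall] at hx1 hy2
    obtain ⟨f, hf, hfx⟩ := hx1
    obtain ⟨g, hg, hgy⟩ := hy2
    have hfg : f * g ∈ q := by
      refine mem_of_vanish_torus K q hX _ ?_
      intro z hz
      rw [map_mul]
      rcases hC hz with h | h
      · rw [h f hf, zero_mul]
      · rw [h g hg, mul_zero]
    rcases hq.mem_or_mem hfg with h | h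
    · exact hfx (hx f h)
    · exact hgy (hy g h)

/-- The ideal of polynomials over `F` vanishing on a set of torus points. -/
def vanF (F : Subfield K) {n : ℕ} (W : Set (Fin n → Kˣ)) : Ideal (MvPolynomial (Fin n) F) :=
  MvPolynomial.vanishingIdeal F ((fun w => fun i => (w i : K)) '' W)

lemma mem_vanF (F : Subfield K) {n : ℕ} (W : Set (Fin n → Kˣ)) (f : MvPolynomial (Fin n) F) :
    f ∈ vanF K F W ↔ ∀ w ∈ W, MvPolynomial.aeval (fun i => (w i : K)) f = 0 := by
  simp [vanF]

lemma vanF_prime (F : Subfield K) {n : ℕ} (W : Set (Fin n → Kˣ)) (hW : IsIrredVar K W) :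
    (vanF K F W).IsPrime := by
  obtain ⟨-, ⟨w, hw⟩, hirr⟩ := hW
  refine ⟨?_, ?_⟩
  · rw [Ideal.ne_top_iff_one, mem_vanF]
    intro h
    simpa using h w hw
  · intro f g hfg
    rw [mem_vanF] at hfg
    simp only [mem_vanF]
    have key : ∀ (h : MvPolynomial (Fin n) F) (x : Fin n → Kˣ),
        x ∈ zeroSet K {MvPolynomial.map (algebraMap F K) h} ↔
          MvPolynomial.aeval (fun i => (x i : K)) h = 0 := by
      intro h x
      simp [zeroSet, MvPolynomial.eval_map, MvPolynomial.aeval_def]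
    have := hirr (zeroSet K {MvPolynomial.map (algebraMap F K) f})
      (zeroSet K {MvPolynomial.map (algebraMap F K) g}) ⟨_, rfl⟩ ⟨_, rfl⟩ (by
        intro x hx
        have h := hfg x hx
        rw [map_mul] at h
        rcases mul_eq_zero.1 h with h | h
        · exact Or.inl ((key f x).2 h)
        · exact Or.inr ((key g x).2 h))
    rcases this with h | h
    · exact Or.inl fun w hw => (key f w).1 (h hw)
    · exact Or.inr fun w hw => (key g w).1 (h hw)

lemma chain_bdd {n : ℕ} (V : Set (Fin n → Kˣ)) :
    BddAbove {d | ∃ W : Fin (d + 1) → Set (Fin n → Kˣ),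
      (∀ i, IsIrredVar K (W i) ∧ W i ⊆ V) ∧ StrictMono W} := by
  refine ⟨n, ?_⟩
  rintro d ⟨W, hW, hmono⟩
  have htop : ∀ h : MvPolynomial (Fin n) K, ∃ h' : MvPolynomial (Fin n) (⊤ : Subfield K),
      MvPolynomial.map (algebraMap (⊤ : Subfield K) K) h' = h := by
    intro h
    exact MvPolynomial.map_surjective _ (fun x => ⟨⟨x, trivial⟩, rfl⟩) h
  let l : LTSeries (PrimeSpectrum (MvPolynomial (Fin n) (⊤ : Subfield K))) :=
    LTSeries.mk d (fun i => ⟨vanF K ⊤ (W i.rev), vanF_prime K ⊤ _ (hW _).1⟩) (by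
      intro i j hij
      have hlt : W j.rev < W i.rev := hmono (Fin.rev_lt_rev.2 hij)
      refine lt_of_le_not_ge ?_ ?_
      · intro f hf
        rw [mem_vanF] at hf ⊢
        exact fun w hw => hf w (hlt.le hw)
      · intro hle
        apply hlt.not_ge
        intro x hx
        obtain ⟨S, hS⟩ := (hW j.rev).1.1
        rw [hS]
        intro p hp
        obtain ⟨p', rfl⟩ := htop p
        have hp' : p' ∈ vanF K ⊤ (W j.rev) := by
          rw [mem_vanF]
          intro w hw
          rw [hS] at hw
          simpa [MvPolynomial.eval_map, MvPolynomial.aeval_def] using hw _ hp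
        have := (mem_vanF K ⊤ _ _).1 (hle hp') x hx
        simpa [MvPolynomial.eval_map, MvPolynomial.aeval_def] using this)
  have h1 := Order.LTSeries.length_le_krullDim l
  have h2 : ringKrullDim (MvPolynomial (Fin n) (⊤ : Subfield K)) = n := by simp
  rw [ringKrullDim] at h2
  rw [h2] at h1
  exact_mod_cast h1

lemma trdeg_lt_vdim [IsAlgClosed K] (F : Subfield K) {n : ℕ} (V : Set (Fin n → Kˣ))
    (S : Set (MvPolynomial (Fin n) K)) (hS : ∀ p ∈ S, ∀ m, MvPolynomial.coeff m p ∈ (F : Set K))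
    (hV : V = zeroSet K S) (a : Fin n → Kˣ) (Q : Ideal (MvPolynomial (Fin n) F)) [hQ : Q.IsPrime]
    (hSQ : ∀ f, MvPolynomial.map (algebraMap F K) f ∈ S → f ∈ Q)
    (hlt : Q < RingHom.ker (MvPolynomial.aeval (R := F) (fun i => (a i : K)))) :
    trdegOver K F (Set.range fun j => ((a j : Kˣ) : K)) < vdim K V := by
  obtain ⟨l, hl, hker, hX⟩ := exists_chain_over_ker K F a
  have hcons : (⟨Q, hQ⟩ : PrimeSpectrum (MvPolynomial (Fin n) F)) < l.head :=
    PrimeSpectrum.asIdeal_lt_asIdeal _ _ |>.1 (lt_of_lt_of_le hlt hker)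
  obtain ⟨L, hL, hhead, hLX⟩ := exists_chain_K K F (RelSeries.cons l ⟨Q, hQ⟩ hcons)
    (by rw [RelSeries.last_cons]; exact hX)
  rw [RelSeries.head_cons] at hhead
  rw [RelSeries.cons_length, hl] at hL
  have hmonoL : Monotone L.toFun := L.monotone
  have hXi : ∀ i j, MvPolynomial.X j ∉ (L.toFun i).asIdeal := fun i j hj =>
    hLX j ((L.monotone (Fin.le_last i)) hj)
  rw [← Nat.succ_le_iff, Nat.succ_eq_add_one, ← hL]
  refine le_csSup (chain_bdd K V) ?_
  refine ⟨fun i => zeroSet K ((L.toFun i.rev).asIdeal : Set (MvPolynomial (Fin n) K)), ?_, ?_⟩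
  · intro i
    refine ⟨@isIrredVar_zeroSet K _ _ n _ (L.toFun i.rev).isPrime (hXi _), ?_⟩
    intro x hx
    rw [hV]
    intro p hp
    have hpF : p ∈ Set.range (MvPolynomial.map (σ := Fin n) (algebraMap F K)) := by
      rw [MvPolynomial.mem_range_map_iff_coeffs_subset]
      intro c hc
      rw [Finset.mem_coe, MvPolynomial.mem_coeffs_iff] at hc
      obtain ⟨m, -, rfl⟩ := hc
      exact ⟨⟨_, hS p hp m⟩, rfl⟩
    obtain ⟨f, rfl⟩ := hpF
    exact hx _ (L.monotone (Fin.zero_le i.rev) (hhead f (hSQ f hp)))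
  · intro i j hij
    have hlt' : L.toFun j.rev < L.toFun i.rev := L.strictMono (Fin.rev_lt_rev.2 hij)
    refine lt_of_le_not_ge (fun x hx p hp => hx p (hlt'.le hp)) ?_
    intro hle
    apply hlt'.not_ge
    intro f hf
    refine @mem_of_vanish_torus K _ _ n _ (L.toFun j.rev).isPrime (hXi _) f ?_
    intro x hx
    exact hle hx f hf

lemma comap_lt_of_integral {R A : Type} [CommRing R] [CommRing A] (φ : R →+* A)
    (hφ : φ.IsIntegral) (I J : Ideal A) [I.IsPrime] (h : I < J) : I.comap φ < J.comap φ := by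
  algebraize [φ]
  exact Ideal.IsIntegral.comap_lt_comap (R := R) h

lemma expand_integral (k : Type) [Field k] (n m : ℕ) (hm : 1 ≤ m) :
    (MvPolynomial.expand (σ := Fin n) (R := k) m).toRingHom.IsIntegral := by
  intro f
  induction f using MvPolynomial.induction_on with
  | C r =>
    have := (MvPolynomial.expand (σ := Fin n) (R := k) m).toRingHom.isIntegralElem_map
      (x := MvPolynomial.C r)
    simpa using this
  | add p q hp hq => exact hp.add _ hq
  | mul_X p i hp =>
    refine hp.mul _ ?_
    refine ⟨Polynomial.X ^ m - Polynomial.C (MvPolynomial.X i),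
      Polynomial.monic_X_pow_sub_C _ (by omega), ?_⟩
    simp

lemma vanish_of_vanish_generic [IsAlgClosed K] (F : Subfield K) {n : ℕ} (V : Set (Fin n → Kˣ))
    (hVF : IsClosedOver K (↑F) V) (hVkg : KummerGeneric K V) (m : ℕ) (hm : 1 ≤ m)
    (a b : Fin n → Kˣ) (ha : a ^ m ∈ V)
    (hgen : trdegOver K F (Set.range fun j => (((a ^ m) j : Kˣ) : K)) = vdim K V)
    (hb : b ^ m ∈ V) (f : MvPolynomial (Fin n) F)
    (hf : MvPolynomial.aeval (fun i => (a i : K)) f = 0) :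
    MvPolynomial.aeval (fun i => (b i : K)) f = 0 := by
  obtain ⟨S, hS, hV⟩ := hVF
  have hprime := vanF_prime K F _ (hVkg.2 m hm)
  set P := vanF K F (mroot K m V) with hP
  by_contra hbf
  have hlt : P < RingHom.ker (MvPolynomial.aeval (R := F) (fun i => (a i : K))) := by
    refine lt_of_le_not_ge ?_ ?_
    · intro g hg
      exact (mem_vanF K F _ g).1 hg a ha
    · intro hle
      exact hbf ((mem_vanF K F _ f).1 (hle hf) b hb)
  have hlt2 := comap_lt_of_integral _ (expand_integral F n m hm) _ _ hlt
  have hexp : ∀ (w : Fin n → Kˣ) (g : MvPolynomial (Fin n) F),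
      MvPolynomial.aeval (fun i => (w i : K)) (MvPolynomial.expand m g) =
      MvPolynomial.aeval (fun i => (((w ^ m) i : Kˣ) : K)) g := by
    intro w g
    rw [MvPolynomial.aeval_expand]
    congr 2
  have hprime2 : (P.comap (MvPolynomial.expand (σ := Fin n) (R := F) m).toRingHom).IsPrime :=
    Ideal.comap_isPrime _ _
  have := trdeg_lt_vdim K F V S hS hV (a ^ m)
    (P.comap (MvPolynomial.expand (σ := Fin n) (R := F) m).toRingHom) (by
      intro g hg
      show MvPolynomial.expand m g ∈ P
      rw [hP, mem_vanF]
      intro w hw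
      rw [hexp]
      have hw' : w ^ m ∈ zeroSet K S := by rw [← hV]; exact hw
      simpa [MvPolynomial.eval_map, MvPolynomial.aeval_def] using hw' _ hg) (by
      refine lt_of_lt_of_le hlt2 ?_
      intro g hg
      have : MvPolynomial.aeval (fun i => (a i : K)) (MvPolynomial.expand m g) = 0 := hg
      rw [hexp] at this
      exact this)
  exact absurd hgen this.ne

open IntermediateField in
open scoped IntermediateField.algebraAdjoinAdjoin in
lemma field_iso (F : Subfield K) {I : Type} (e₁ e₂ : I → K)
    (h : ∀ f : MvPolynomial I F, MvPolynomial.aeval e₁ f = 0 ↔ MvPolynomial.aeval e₂ f = 0) :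
    ∃ σ : adjoin F (Set.range e₁) ≃+* adjoin F (Set.range e₂),
      ∀ (f : MvPolynomial I F) (x : adjoin F (Set.range e₁)),
        (x : K) = MvPolynomial.aeval e₁ f → ((σ x : _) : K) = MvPolynomial.aeval e₂ f := by
  have hmem : ∀ (e : I → K) (f : MvPolynomial I F),
      MvPolynomial.aeval e f ∈ Algebra.adjoin F (Set.range e) := by
    intro e f
    rw [Algebra.adjoin_range_eq_range_aeval]
    exact ⟨f, rfl⟩
  let π (e : I → K) : MvPolynomial I F →ₐ[F] Algebra.adjoin F (Set.range e) :=
    (MvPolynomial.aeval e).codRestrict _ (hmem e)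
  have hsurj : ∀ e, Function.Surjective (π e) := by
    rintro e ⟨x, hx⟩
    have hx' := hx
    rw [Algebra.adjoin_range_eq_range_aeval] at hx'
    obtain ⟨f, hf⟩ := hx'
    exact ⟨f, Subtype.ext hf⟩
  have hker : RingHom.ker (π e₁).toRingHom =
      RingHom.ker (π e₂).toRingHom := by
    ext f
    have := h f
    simp only [RingHom.mem_ker]
    constructor
    · intro h1
      exact Subtype.ext (this.1 (congrArg Subtype.val h1))
    · intro h1
      exact Subtype.ext (this.2 (congrArg Subtype.val h1))
  let τ : Algebra.adjoin F (Set.range e₁) ≃+* Algebra.adjoin F (Set.range e₂) :=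
    ((RingHom.quotientKerEquivOfSurjective (f := (π e₁).toRingHom) (hsurj e₁)).symm.trans
      (Ideal.quotEquivOfEq hker)).trans
      (RingHom.quotientKerEquivOfSurjective (f := (π e₂).toRingHom) (hsurj e₂))
  have hτ : ∀ f, τ (π e₁ f) = π e₂ f := by
    intro f
    have : (RingHom.quotientKerEquivOfSurjective (f := (π e₁).toRingHom) (hsurj e₁)).symm
        (π e₁ f) = Ideal.Quotient.mk _ f := by
      rw [RingEquiv.symm_apply_eq]; rfl
    simp only [τ, RingEquiv.trans_apply]
    rw [this]
    rfl
  refine ⟨IsFractionRing.ringEquivOfRingEquiv τ, ?_⟩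
  intro f x hx
  have hx' : x = algebraMap (Algebra.adjoin F (Set.range e₁)) (adjoin F (Set.range e₁)) (π e₁ f) :=
    Subtype.ext hx
  rw [hx', IsFractionRing.ringEquivOfRingEquiv_algebraMap, hτ]
  rfl

/-- The family of all roots. -/
def rootFam {n : ℕ} (a : ℕ → Fin n → Kˣ) : {m : ℕ // 1 ≤ m} × Fin n → K :=
  fun p => (a p.1 p.2 : K)

lemma rootsField_eq (F : Subfield K) {n : ℕ} (a : ℕ → Fin n → Kˣ) :
    rootsField K F a = (IntermediateField.adjoin F (Set.range (rootFam K a))).toSubfield := by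
  have h1 : Set.range (algebraMap F K) = (F : Set K) := Subtype.range_coe
  have h2 : (⋃ m ∈ {m : ℕ | 1 ≤ m}, Set.range fun j => ((a m j : Kˣ) : K)) =
      Set.range (rootFam K a) := by
    ext x
    simp [rootFam]
  rw [rootsField, h2, ← h1]
  rfl

lemma roots_vanish [IsAlgClosed K] (F : Subfield K) {n : ℕ} (V : Set (Fin n → Kˣ))
    (hVF : IsClosedOver K (↑F) V) (hVkg : KummerGeneric K V)
    (a₁ a₂ : ℕ → Fin n → Kˣ)
    (h₁V : a₁ 1 ∈ V) (h₂V : a₂ 1 ∈ V)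
    (h₁gen : trdegOver K F (Set.range fun j => ((a₁ 1 j : Kˣ) : K)) = vdim K V)
    (h₁root : ∀ m k : ℕ, 1 ≤ m → 1 ≤ k → (fun j => a₁ (m * k) j ^ k) = a₁ m)
    (h₂root : ∀ m k : ℕ, 1 ≤ m → 1 ≤ k → (fun j => a₂ (m * k) j ^ k) = a₂ m)
    (f : MvPolynomial ({m : ℕ // 1 ≤ m} × Fin n) F)
    (hf : MvPolynomial.aeval (rootFam K a₁) f = 0) :
    MvPolynomial.aeval (rootFam K a₂) f = 0 := by
  classical
  set M : ℕ := ∏ p ∈ f.vars, (p.1 : ℕ) with hM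
  have hMpos : 1 ≤ M := by
    rw [hM]
    exact Nat.succ_le_of_lt (Finset.prod_pos (fun p _ => p.1.2))
  let θ : MvPolynomial ({m : ℕ // 1 ≤ m} × Fin n) F →ₐ[F] MvPolynomial (Fin n) F :=
    MvPolynomial.aeval (fun p => MvPolynomial.X p.2 ^ (M / (p.1 : ℕ)))
  have hθ : ∀ a : ℕ → Fin n → Kˣ,
      (∀ m k : ℕ, 1 ≤ m → 1 ≤ k → (fun j => a (m * k) j ^ k) = a m) →
      MvPolynomial.aeval (fun i => (a M i : K)) (θ f) = MvPolynomial.aeval (rootFam K a) f := by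
    intro a ha
    have : ((MvPolynomial.aeval (R := F) (fun i => (a M i : K))).comp θ).toRingHom f =
        (MvPolynomial.aeval (R := F) (rootFam K a)).toRingHom f := by
      refine MvPolynomial.hom_congr_vars ?_ ?_ rfl
      · ext r
        simp [θ]
      · intro p hp _
        have hdvd : (p.1 : ℕ) ∣ M := Finset.dvd_prod_of_mem _ hp
        have hmul : (p.1 : ℕ) * (M / (p.1 : ℕ)) = M := Nat.mul_div_cancel' hdvd
        have hpos : 1 ≤ M / (p.1 : ℕ) := Nat.div_pos (Nat.le_of_dvd hMpos hdvd) p.1.2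
        have h := congrFun (ha p.1 (M / (p.1 : ℕ)) p.1.2 hpos) p.2
        simp only [hmul] at h
        simp [θ, rootFam, ← h]
    exact this
  have hpow : ∀ a : ℕ → Fin n → Kˣ,
      (∀ m k : ℕ, 1 ≤ m → 1 ≤ k → (fun j => a (m * k) j ^ k) = a m) → a M ^ M = a 1 := by
    intro a ha
    have := ha 1 M le_rfl hMpos
    rw [one_mul] at this
    exact this
  rw [← hθ a₂ h₂root]
  refine vanish_of_vanish_generic K F V hVF hVkg M hMpos (a₁ M) (a₂ M) ?_ ?_ ?_ _ ?_
  · rw [hpow a₁ h₁root]; exact h₁V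
  · rw [hpow a₁ h₁root]; exact h₁gen
  · rw [hpow a₂ h₂root]; exact h₂V
  · rw [hθ a₁ h₁root]; exact hf

end

/-- Two generic points of a Kummer generic variety over an algebraically
closed subfield `F`, together with compatible systems of roots, are conjugate over `F`. -/
theorem kummerGeneric_roots_conjugate
    (K : Type) [Field K] [IsAlgClosed K] [CharZero K]
    (F : Subfield K) (hF : IsAlgClosed ↥F)
    {n : ℕ} (V : Set (Fin n → Kˣ)) (hVF : IsClosedOver K (↑F) V)
    (hVkg : KummerGeneric K V)
    (a₁ a₂ : ℕ → Fin n → Kˣ)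
    (h₁V : a₁ 1 ∈ V) (h₂V : a₂ 1 ∈ V)
    (h₁gen : trdegOver K F (Set.range fun j => ((a₁ 1 j : Kˣ) : K)) = vdim K V)
    (h₂gen : trdegOver K F (Set.range fun j => ((a₂ 1 j : Kˣ) : K)) = vdim K V)
    (h₁root : ∀ m k : ℕ, 1 ≤ m → 1 ≤ k → (fun j => a₁ (m * k) j ^ k) = a₁ m)
    (h₂root : ∀ m k : ℕ, 1 ≤ m → 1 ≤ k → (fun j => a₂ (m * k) j ^ k) = a₂ m) :
    ∃ σ : ↥(rootsField K F a₁) ≃+* ↥(rootsField K F a₂),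
      (∀ x : ↥(rootsField K F a₁), (x : K) ∈ F → ((σ x : ↥(rootsField K F a₂)) : K) = (x : K)) ∧
      ∀ m : ℕ, 1 ≤ m → ∀ j : Fin n, ∀ x : ↥(rootsField K F a₁),
        (x : K) = ((a₁ m j : Kˣ) : K) → ((σ x : ↥(rootsField K F a₂)) : K) = ((a₂ m j : Kˣ) : K) := by

  obtain ⟨σ, hσ⟩ := field_iso K F (rootFam K a₁) (rootFam K a₂) (fun f =>
    ⟨roots_vanish K F V hVF hVkg a₁ a₂ h₁V h₂V h₁gen h₁root h₂root f,
     roots_vanish K F V hVF hVkg a₂ a₁ h₂V h₁V h₂gen h₂root h₁root f⟩)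
  let τ₁ : rootsField K F a₁ ≃+* (IntermediateField.adjoin F (Set.range (rootFam K a₁))) :=
    RingEquiv.subfieldCongr (rootsField_eq K F a₁)
  let τ₂ : (IntermediateField.adjoin F (Set.range (rootFam K a₂))) ≃+* rootsField K F a₂ :=
    RingEquiv.subfieldCongr (rootsField_eq K F a₂).symm
  have hτ₁ : ∀ x, ((τ₁ x : _) : K) = x := fun x => rfl
  have hτ₂ : ∀ x, ((τ₂ x : _) : K) = x := fun x => rfl
  refine ⟨(τ₁.trans σ).trans τ₂, ?_, ?_⟩
  · intro x hx
    have := hσ (MvPolynomial.C ⟨x, hx⟩) (τ₁ x) (by rw [hτ₁, MvPolynomial.aeval_C]; rfl)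
    rw [MvPolynomial.aeval_C] at this
    exact this
  · intro m hm j x hx
    have := hσ (MvPolynomial.X (⟨m, hm⟩, j)) (τ₁ x) (by
      rw [hτ₁, MvPolynomial.aeval_X]; exact hx)
    rw [MvPolynomial.aeval_X] at this
    exact this

end BadFields
end
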